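/- Let d ≥ 3 and 1 < α < d/2, and let c > 𝔼[z(0)] (which is finite since α > 1). Then ℙ-almost surely, as t → ∞, P₀(A(t) ≥ ct) = t^{−α+1+o(1)} and P₀(A(t) ≥ ct, S_t = 0) = t^{−α+1−d/2+o(1)} (in the sense of logarithmic equivalence: log P₀(A(t) ≥ ct)/log t → −α+1 and log P₀(A(t) ≥ ct, S_t = 0)/log t → −α+1−d/2). -/

import Mathlib

open MeasureTheory ProbabilityTheory Filter Set

noncomputable section

/-- `n`-step transition probabilities of the discrete-time simple random walk on `ℤ^m`. -/
def srwKernel (m : ℕ) : ℕ → (Fin m → ℤ) → (Fin m → ℤ) → ℝ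
  | 0, x, y => if x = y then 1 else 0
  | n + 1, x, y =>
      (∑ i : Fin m, (srwKernel m n (Function.update x i (x i + 1)) y
        + srwKernel m n (Function.update x i (x i - 1)) y)) / (2 * m)

/-- Transition kernel of the continuous-time simple random walk on `ℤ^m` which jumps to
each of its `2m` nearest neighbours at rate `1` (total jump rate `2m`). -/
def heatKernel (m : ℕ) (t : ℝ) (x y : Fin m → ℤ) : ℝ :=
  ∑' n : ℕ, Real.exp (-(2 * m) * t) * ((2 * m) * t) ^ n / n.factorial * srwKernel m n x y

/-- `(P, S)` is (a realization of) the continuous-time simple random walk on `ℤ^m`: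
under `P x` the process `S` starts at `x`, has right-continuous (piecewise constant)
paths, and its finite-dimensional distributions are given by the heat kernel. -/
structure IsCTSRW (m : ℕ) {Ω : Type*} [MeasurableSpace Ω]
    (P : (Fin m → ℤ) → Measure Ω) (S : ℝ → Ω → (Fin m → ℤ)) : Prop where
  prob : ∀ x, IsProbabilityMeasure (P x)
  meas : Measurable fun p : ℝ × Ω => S p.1 p.2
  start : ∀ x, ∀ᵐ ω ∂ P x, S 0 ω = x
  rightCont : ∀ x, ∀ᵐ ω ∂ P x, ∀ t : ℝ, 0 ≤ t →
    ∃ ε > (0 : ℝ), ∀ u, t ≤ u → u < t + ε → S u ω = S t ω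
  fdd : ∀ x (n : ℕ) (t : Fin (n + 1) → ℝ), 0 ≤ t 0 →
    (∀ i : Fin n, t i.castSucc ≤ t i.succ) →
    ∀ y : Fin (n + 1) → (Fin m → ℤ),
      (P x {ω | ∀ i, S (t i) ω = y i}).toReal
        = heatKernel m (t 0) x (y 0)
          * ∏ i : Fin n, heatKernel m (t i.succ - t i.castSucc) (y i.castSucc) (y i.succ)

/-- `z` is an i.i.d. nonnegative random scenery on `ℤ^d` whose common upper tail decays
like `r^{-α+o(1)}`. -/
structure IsScenery (d : ℕ) (α : ℝ) {Ω : Type*} [MeasurableSpace Ω]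
    (μ : Measure Ω) (z : (Fin d → ℤ) → Ω → ℝ) : Prop where
  prob : IsProbabilityMeasure μ
  meas : ∀ x, Measurable (z x)
  nonneg : ∀ x ω, 0 ≤ z x ω
  indep : iIndepFun z μ
  ident : ∀ x, IdentDistrib (z x) (z 0) μ μ
  tail : Tendsto (fun r : ℝ => Real.log (μ {ω | r < z 0 ω}).toReal / Real.log r)
    atTop (nhds (-α))

/-- The random walk in random scenery `A(t) = ∫₀ᵗ z(S_u) du`. -/
def rwrs {Ωz Ωw : Type*} (d : ℕ) (z : (Fin d → ℤ) → Ωz → ℝ)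
    (S : ℝ → Ωw → (Fin d → ℤ)) (t : ℝ) (ζ : Ωz) (ω : Ωw) : ℝ :=
  ∫ u in Set.Ioc (0 : ℝ) t, z (S u ω) ζ

end

open MeasureTheory ProbabilityTheory Filter Set



open MeasureTheory ProbabilityTheory Filter Set

noncomputable section

/-- normalized Lebesgue measure on `(-π, π]` -/
def nuM : Measure ℝ := (ENNReal.ofReal (2 * Real.pi)⁻¹) • (volume.restrict (Ioc (-Real.pi) Real.pi))

instance nuM_prob : IsProbabilityMeasure nuM := by
  constructor
  unfold nuM
  rw [Measure.smul_apply, Measure.restrict_apply_univ, Real.volume_Ioc, smul_eq_mul,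
    ← ENNReal.ofReal_mul (by positivity)]
  have : (2 * Real.pi)⁻¹ * (Real.pi - -Real.pi) = 1 := by
    have := Real.pi_pos
    field_simp
    ring
  rw [this, ENNReal.ofReal_one]

lemma nuM_integral (f : ℝ → ℝ) :
    ∫ θ, f θ ∂nuM = (2 * Real.pi)⁻¹ * ∫ θ in (-Real.pi)..Real.pi, f θ := by
  unfold nuM
  rw [integral_smul_measure, intervalIntegral.integral_of_le (by linarith [Real.pi_pos]),
    ENNReal.toReal_ofReal (by positivity), smul_eq_mul]

lemma nuM_int_cos (m : ℤ) : ∫ θ, Real.cos (m * θ) ∂nuM = if m = 0 then 1 else 0 := by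
  rw [nuM_integral]
  split_ifs with h
  · subst h
    simp
    have := Real.pi_pos
    field_simp
    ring
  · have hm : (m : ℝ) ≠ 0 := by exact_mod_cast h
    rw [intervalIntegral.integral_comp_mul_left (fun x => Real.cos x) hm, integral_cos]
    have h1 : Real.sin (m * Real.pi) = 0 := Real.sin_int_mul_pi m
    have h2 : Real.sin (m * -Real.pi) = 0 := by rw [mul_neg, Real.sin_neg, h1, neg_zero]
    rw [h1, h2]; simp

/-- one-dimensional heat kernel -/
def qk (t : ℝ) (n : ℤ) : ℝ := ∫ θ, Real.exp (2 * t * (Real.cos θ - 1)) * Real.cos (n * θ) ∂nuM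

lemma bdd_integrable {α : Type*} [MeasurableSpace α] {μ : Measure α} [IsFiniteMeasure μ]
    {f : α → ℝ} (hf : Measurable f) (C : ℝ) (h : ∀ x, |f x| ≤ C) : Integrable f μ :=
  Integrable.of_bound hf.aestronglyMeasurable C (Eventually.of_forall h)

/-- product of cosines -/
def cprod (m : ℕ) (w : Fin m → ℤ) (θ : Fin m → ℝ) : ℝ := ∏ i, Real.cos (w i * θ i)

lemma cprod_meas (m : ℕ) (w : Fin m → ℤ) : Measurable (cprod m w) := by
  unfold cprod
  fun_prop

lemma cprod_abs (m : ℕ) (w : Fin m → ℤ) (θ) : |cprod m w θ| ≤ 1 := by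
  unfold cprod
  rw [Finset.abs_prod]
  exact Finset.prod_le_one (fun _ _ => abs_nonneg _) (fun _ _ => Real.abs_cos_le_one _)

def phi (m : ℕ) (θ : Fin m → ℝ) : ℝ := (∑ i, 2 * Real.cos (θ i)) / (2 * m)

lemma phi_meas (m : ℕ) : Measurable (phi m) := by
  unfold phi
  fun_prop

lemma phi_abs (m : ℕ) (θ) : |phi m θ| ≤ 1 := by
  unfold phi
  rcases Nat.eq_zero_or_pos m with h | h
  · subst h; simp
  rw [abs_div, div_le_one (by positivity), abs_of_pos (show (0 : ℝ) < 2 * m by positivity)]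
  refine (Finset.abs_sum_le_sum_abs _ _).trans ?_
  refine (Finset.sum_le_sum (g := fun _ => (2 : ℝ)) fun i _ => ?_).trans ?_
  · rw [abs_mul, abs_two]
    linarith [Real.abs_cos_le_one (θ i)]
  · simp; linarith

lemma cprod_update (m : ℕ) (x y : Fin m → ℤ) (i : Fin m) (θ : Fin m → ℝ) :
    cprod m (Function.update x i (x i + 1) - y) θ + cprod m (Function.update x i (x i - 1) - y) θ
      = 2 * Real.cos (θ i) * cprod m (x - y) θ := by
  unfold cprod
  rw [← Finset.mul_prod_erase _ _ (Finset.mem_univ i), ← Finset.mul_prod_erase _ _ (Finset.mem_univ i),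
    ← Finset.mul_prod_erase _ _ (Finset.mem_univ i)]
  have h1 : ∀ a : ℤ, ∏ j ∈ Finset.univ.erase i, Real.cos (((Function.update x i a - y) j : ℤ) * θ j)
      = ∏ j ∈ Finset.univ.erase i, Real.cos (((x - y) j : ℤ) * θ j) := by
    intro a
    refine Finset.prod_congr rfl fun j hj => ?_
    have : j ≠ i := Finset.ne_of_mem_erase hj
    simp [Function.update_of_ne this]
  rw [h1, h1, ← add_mul, ← mul_assoc]
  congr 1
  simp only [Pi.sub_apply, Function.update_self]
  have e1 : (((x i + 1 - y i : ℤ)) : ℝ) * θ i = ((x i - y i : ℤ) : ℝ) * θ i + θ i := by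
    push_cast; ring
  have e2 : (((x i - 1 - y i : ℤ)) : ℝ) * θ i = ((x i - y i : ℤ) : ℝ) * θ i - θ i := by
    push_cast; ring
  rw [e1, e2, Real.cos_add, Real.cos_sub]
  ring

lemma phi_pow_int (m n : ℕ) (w : Fin m → ℤ) :
    Integrable (fun θ => phi m θ ^ n * cprod m w θ) (Measure.pi fun _ : Fin m => nuM) := by
  refine bdd_integrable (((phi_meas m).pow_const n).mul (cprod_meas m w)) 1 fun θ => ?_
  rw [abs_mul, abs_pow]
  exact mul_le_one₀ (pow_le_one₀ (abs_nonneg _) (phi_abs m θ)) (abs_nonneg _) (cprod_abs m w θ)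

lemma srw_fourier (m : ℕ) (n : ℕ) (x y : Fin m → ℤ) :
    srwKernel m n x y = ∫ θ, phi m θ ^ n * cprod m (x - y) θ ∂(Measure.pi fun _ : Fin m => nuM) := by
  induction n generalizing x with
  | zero =>
    simp only [srwKernel, pow_zero, one_mul, cprod]
    rw [integral_fintype_prod_eq_prod (μ := fun _ : Fin m => nuM)
      (fun i (u : ℝ) => Real.cos (((x - y) i : ℤ) * u))]
    simp_rw [nuM_int_cos]
    split_ifs with h
    · subst h; simp
    · obtain ⟨i, hi⟩ := Function.ne_iff.1 h
      symm
      refine Finset.prod_eq_zero (Finset.mem_univ i) ?_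
      rw [if_neg]
      simpa [sub_eq_zero] using hi
  | succ n ih =>
    simp only [srwKernel]
    simp_rw [ih]
    simp_rw [← integral_add (phi_pow_int m n _) (phi_pow_int m n _)]
    have hI : ∀ i ∈ (Finset.univ : Finset (Fin m)), Integrable (fun a =>
        phi m a ^ n * cprod m (Function.update x i (x i + 1) - y) a +
            phi m a ^ n * cprod m (Function.update x i (x i - 1) - y) a)
        (Measure.pi fun _ : Fin m => nuM) :=
      fun i _ => (phi_pow_int m n _).add (phi_pow_int m n _)
    rw [← integral_finsetSum _ hI, ← integral_div]
    congr 1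
    ext θ
    simp_rw [← mul_add, cprod_update]
    rw [← Finset.mul_sum, ← Finset.sum_mul, pow_succ]
    unfold phi
    ring

lemma heat_prod (m : ℕ) (hm : 0 < m) (t : ℝ) (x y : Fin m → ℤ) :
    heatKernel m t x y = ∏ i, qk t (x i - y i) := by
  unfold heatKernel
  simp_rw [srw_fourier]
  set π' := (Measure.pi fun _ : Fin m => nuM)
  simp_rw [← integral_const_mul]
  rw [integral_tsum_of_summable_integral_norm]
  · have hq : ∏ i, qk t (x i - y i) = ∫ θ, ∏ i, (Real.exp (2 * t * (Real.cos (θ i) - 1))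
        * Real.cos ((x i - y i : ℤ) * θ i)) ∂π' := by
      unfold qk
      rw [integral_fintype_prod_eq_prod (μ := fun _ : Fin m => nuM)
        (fun i (u : ℝ) => Real.exp (2 * t * (Real.cos u - 1)) * Real.cos ((x i - y i : ℤ) * u))]
    rw [hq]
    congr 1
    ext θ
    rw [Finset.prod_mul_distrib, ← Real.exp_sum]
    have : ∀ n : ℕ, Real.exp (-(2 * m) * t) * (2 * m * t) ^ n / n.factorial * (phi m θ ^ n * cprod m (x - y) θ)
       = (Real.exp (-(2 * m) * t) * cprod m (x - y) θ) * ((2 * m * t * phi m θ) ^ n / n.factorial) := by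
      intro n
      rw [mul_pow (2 * m * t)]; ring
    simp_rw [this]
    rw [tsum_mul_left]
    have h2 : ∑' n : ℕ, ((2 * m * t * phi m θ) ^ n / n.factorial) = Real.exp (2 * m * t * phi m θ) := by
      rw [Real.exp_eq_exp_ℝ, NormedSpace.exp_eq_tsum_div]
    rw [h2, mul_right_comm, ← Real.exp_add]
    unfold cprod
    congr 2
    unfold phi
    rw [← Finset.mul_sum, ← Finset.mul_sum, Finset.sum_sub_distrib]
    simp
    field_simp
    ring
  · intro n
    exact (phi_pow_int m n _).const_mul _
  · refine Summable.of_nonneg_of_le (f := fun n : ℕ => Real.exp (-(2 * m) * t) * ((2 * m * |t|) ^ n / n.factorial))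
      (fun n => integral_nonneg fun _ => norm_nonneg _) (fun n => ?_)
      ((Real.summable_pow_div_factorial _).mul_left _)
    have : ∀ θ, ‖Real.exp (-(2 * m) * t) * (2 * m * t) ^ n / n.factorial * (phi m θ ^ n * cprod m (x - y) θ)‖
        ≤ Real.exp (-(2 * m) * t) * ((2 * m * |t|) ^ n / n.factorial) := by
      intro θ
      rw [norm_mul, norm_div, norm_mul, Real.norm_eq_abs, Real.norm_eq_abs, Real.norm_eq_abs,
        Real.norm_eq_abs, Real.abs_exp, abs_pow, abs_mul (2 * (m : ℝ)), abs_of_nonneg (show (0:ℝ) ≤ 2 * m by positivity),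
        abs_of_nonneg (show (0:ℝ) ≤ n.factorial by positivity), mul_div_assoc]
      refine mul_le_of_le_one_right (by positivity) ?_
      rw [abs_mul, abs_pow]
      exact mul_le_one₀ (pow_le_one₀ (abs_nonneg _) (phi_abs m θ)) (abs_nonneg _) (cprod_abs m _ θ)
    refine (integral_mono_of_nonneg (Eventually.of_forall fun _ => norm_nonneg _) (integrable_const _)
      (Eventually.of_forall this)).trans ?_
    simp

lemma qk_neg (t : ℝ) (n : ℤ) : qk t (-n) = qk t n := by
  unfold qk
  simp

lemma heat_symm (m : ℕ) (hm : 0 < m) (t : ℝ) (x y : Fin m → ℤ) :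
    heatKernel m t x y = heatKernel m t y x := by
  rw [heat_prod m hm, heat_prod m hm]
  refine Finset.prod_congr rfl fun i _ => ?_
  rw [← qk_neg, neg_sub]

end


open MeasureTheory ProbabilityTheory Filter Set

noncomputable section

lemma nuM_ae : ∀ᵐ θ ∂nuM, |θ| ≤ Real.pi := by
  unfold nuM
  refine Measure.ae_smul_measure ?_ _
  filter_upwards [ae_restrict_mem measurableSet_Ioc] with θ hθ
  exact abs_le.2 ⟨hθ.1.le, hθ.2⟩

/-- integral against `nuM` of a nonnegative function is at most the full integral -/
lemma nuM_le (f : ℝ → ℝ) (hf : Integrable f) (h0 : ∀ x, 0 ≤ f x) :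
    ∫ θ, f θ ∂nuM ≤ (2 * Real.pi)⁻¹ * ∫ θ, f θ := by
  unfold nuM
  rw [integral_smul_measure, ENNReal.toReal_ofReal (by positivity), smul_eq_mul]
  have := Real.pi_pos
  exact mul_le_mul_of_nonneg_left (setIntegral_le_integral hf (Eventually.of_forall h0)) (by positivity)

lemma exp_bd (t : ℝ) (ht : 0 < t) (θ : ℝ) (hθ : |θ| ≤ Real.pi) :
    Real.exp (2 * t * (Real.cos θ - 1)) ≤ Real.exp (-(4 / Real.pi ^ 2 * t) * θ ^ 2) := by
  apply Real.exp_le_exp.2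
  have := Real.cos_le_one_sub_mul_cos_sq hθ
  have h2 : Real.cos θ - 1 ≤ - (2 / Real.pi ^ 2 * θ ^ 2) := by linarith
  calc 2 * t * (Real.cos θ - 1) ≤ 2 * t * (- (2 / Real.pi ^ 2 * θ ^ 2)) := by gcongr
    _ = _ := by ring

lemma exp_int (t : ℝ) (ht : 0 < t) (g : ℝ → ℝ) (hg : Measurable g) (C : ℝ) (h : ∀ x, |x| ≤ Real.pi → |g x| ≤ C) :
    Integrable (fun θ => Real.exp (2 * t * (Real.cos θ - 1)) * g θ) nuM := by
  refine Integrable.of_bound (C := 1 * C) (by fun_prop) ?_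
  filter_upwards [nuM_ae] with θ hθ
  rw [norm_mul, Real.norm_eq_abs, Real.abs_exp]
  have : Real.exp (2 * t * (Real.cos θ - 1)) ≤ 1 := by
    apply Real.exp_le_one_iff.2
    have := Real.cos_le_one θ
    nlinarith
  have h0 : 0 ≤ C := (abs_nonneg _).trans (h θ hθ)
  have := h θ hθ
  rw [Real.norm_eq_abs]
  gcongr

lemma qk_upper : ∃ C > 0, ∀ t : ℝ, 0 < t → ∀ n : ℤ, |qk t n| ≤ C / √t := by
  have hpi := Real.pi_pos
  refine ⟨(2 * Real.pi)⁻¹ * √(Real.pi / (4 / Real.pi ^ 2)), by positivity, fun t ht n => ?_⟩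
  unfold qk
  have hb : 0 < 4 / Real.pi ^ 2 * t := by positivity
  have h1 : |∫ θ, Real.exp (2 * t * (Real.cos θ - 1)) * Real.cos (n * θ) ∂nuM|
      ≤ ∫ θ, Real.exp (-(4 / Real.pi ^ 2 * t) * θ ^ 2) ∂nuM := by
    refine norm_integral_le_of_norm_le (μ := nuM) (f := fun θ => Real.exp (2 * t * (Real.cos θ - 1)) * Real.cos (n * θ)) ?_ ?_
    · exact bdd_integrable (by fun_prop) 1 (fun x => by
        rw [Real.abs_exp]; apply Real.exp_le_one_iff.2; nlinarith [sq_nonneg x])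
    · filter_upwards [nuM_ae] with θ hθ
      rw [norm_mul, Real.norm_eq_abs, Real.abs_exp]
      exact (mul_le_of_le_one_right (by positivity) (Real.abs_cos_le_one _)).trans (exp_bd t ht θ hθ)
  refine h1.trans ((nuM_le _ (integrable_exp_neg_mul_sq hb) fun _ => by positivity).trans ?_)
  rw [integral_gaussian, ← div_div, Real.sqrt_div (by positivity), mul_div_assoc]

lemma qk_zero_lower : ∃ C > 0, ∀ t : ℝ, 1 ≤ t →
    C / √t ≤ ∫ θ, Real.exp (2 * t * (Real.cos θ - 1)) ∂nuM := by
  have hpi := Real.pi_pos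
  refine ⟨(2 * Real.pi)⁻¹ * Real.exp (-1), by positivity, fun t ht => ?_⟩
  have ht0 : 0 < t := by linarith
  have hs : 1 ≤ √t := Real.one_le_sqrt.2 ht
  rw [nuM_integral, mul_div_assoc]
  gcongr
  rw [intervalIntegral.integral_of_le (by linarith)]
  have hsub : Ioc 0 (1 / √t) ⊆ Ioc (-Real.pi) Real.pi := by
    intro x hx
    have : 1 / √t ≤ 1 := by rw [div_le_one (by positivity)]; exact hs
    exact ⟨by linarith [hx.1], by linarith [hx.2, Real.pi_gt_three]⟩
  have hIntg : IntegrableOn (fun θ => Real.exp (2 * t * (Real.cos θ - 1))) (Ioc (-Real.pi) Real.pi) := by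
    rw [← intervalIntegrable_iff_integrableOn_Ioc_of_le (by linarith)]
    exact (by fun_prop : Continuous fun θ => Real.exp (2 * t * (Real.cos θ - 1))).intervalIntegrable _ _
  have h1 : ∫ θ in Ioc 0 (1 / √t), Real.exp (-1) ≤ ∫ θ in Ioc 0 (1 / √t), Real.exp (2 * t * (Real.cos θ - 1)) := by
    refine setIntegral_mono_on (by simp) (hIntg.mono_set hsub) measurableSet_Ioc fun θ hθ => ?_
    apply Real.exp_le_exp.2
    have h2 := Real.one_sub_sq_div_two_le_cos (x := θ)
    have h3 : θ ^ 2 ≤ 1 / t := by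
      calc θ ^ 2 ≤ (1 / √t) ^ 2 := by
            have := hθ.1; have := hθ.2; gcongr
        _ = 1 / t := by rw [div_pow, Real.sq_sqrt ht0.le]; simp
    have h4 : t * θ ^ 2 ≤ 1 := by
      calc t * θ ^ 2 ≤ t * (1 / t) := by gcongr
        _ = 1 := by field_simp
    nlinarith
  have h2 := setIntegral_mono_set hIntg (Eventually.of_forall fun _ => by positivity) (LE.le.eventuallyLE hsub)
  refine le_trans (le_of_eq ?_) (h1.trans h2)
  simp
  field_simp

lemma qk_sq_upper : ∃ C > 0, ∀ t : ℝ, 0 < t →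
    ∫ θ, Real.exp (2 * t * (Real.cos θ - 1)) * θ ^ 2 ∂nuM ≤ C / √t / t := by
  have hpi := Real.pi_pos
  set b := 2 / Real.pi ^ 2 with hb
  have hb0 : 0 < b := by positivity
  refine ⟨(2 * Real.pi)⁻¹ * √(Real.pi / b) / b, by positivity, fun t ht => ?_⟩
  have hbt : 0 < b * t := by positivity
  have h1 : ∫ θ, Real.exp (2 * t * (Real.cos θ - 1)) * θ ^ 2 ∂nuM
      ≤ ∫ θ, (b * t)⁻¹ * Real.exp (-(b * t) * θ ^ 2) ∂nuM := by
    refine integral_mono_ae ?_ ?_ ?_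
    · exact exp_int t ht _ (by fun_prop) (Real.pi ^ 2) fun x hx => by
        rw [abs_pow]; gcongr
    · refine (bdd_integrable (by fun_prop) 1 (fun x => ?_)).const_mul _
      rw [Real.abs_exp]; apply Real.exp_le_one_iff.2; nlinarith [sq_nonneg x]
    · filter_upwards [nuM_ae] with θ hθ
      have h3 := exp_bd t ht θ hθ
      have h4 : b * t * θ ^ 2 ≤ Real.exp (b * t * θ ^ 2) := by linarith [Real.add_one_le_exp (b * t * θ ^ 2)]
      calc Real.exp (2 * t * (Real.cos θ - 1)) * θ ^ 2
          ≤ Real.exp (-(4 / Real.pi ^ 2 * t) * θ ^ 2) * ((b * t)⁻¹ * Real.exp (b * t * θ ^ 2)) := by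
            gcongr
            rw [inv_mul_eq_div, le_div_iff₀ hbt]; linarith
        _ = (b * t)⁻¹ * (Real.exp (-(4 / Real.pi ^ 2 * t) * θ ^ 2) * Real.exp (b * t * θ ^ 2)) := by ring
        _ = _ := by
            rw [← Real.exp_add]; congr 2; rw [hb]; ring
  refine h1.trans ?_
  rw [integral_const_mul]
  have h5 := nuM_le _ (integrable_exp_neg_mul_sq hbt) fun _ => by positivity
  rw [integral_gaussian, ← div_div, Real.sqrt_div (by positivity)] at h5
  calc (b * t)⁻¹ * ∫ θ, Real.exp (-(b * t) * θ ^ 2) ∂nuM ≤ (b * t)⁻¹ * ((2 * Real.pi)⁻¹ * (√(Real.pi / b) / √t)) := by gcongr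
    _ = _ := by
      field_simp

lemma qk_lower : ∃ c > 0, ∃ ρ > 0, ∀ t : ℝ, 1 ≤ t → ∀ n : ℤ, |(n : ℝ)| ≤ ρ * √t → c / √t ≤ qk t n := by
  obtain ⟨C1, hC1, h1⟩ := qk_zero_lower
  obtain ⟨C2, hC2, h2⟩ := qk_sq_upper
  refine ⟨C1 / 2, by positivity, √(C1 / C2), by positivity, fun t ht n hn => ?_⟩
  have ht0 : 0 < t := by linarith
  have hn2 : (n : ℝ) ^ 2 ≤ C1 / C2 * t := by
    calc (n : ℝ) ^ 2 = |(n : ℝ)| ^ 2 := (sq_abs _).symm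
      _ ≤ (√(C1 / C2) * √t) ^ 2 := by gcongr
      _ = _ := by rw [mul_pow, Real.sq_sqrt (by positivity), Real.sq_sqrt ht0.le]
  have i1 : Integrable (fun θ => Real.exp (2 * t * (Real.cos θ - 1))) nuM := by
    simpa using exp_int t ht0 (fun _ => 1) (by fun_prop) 1 (by simp)
  have i2 := exp_int t ht0 (fun θ => θ ^ 2) (by fun_prop) (Real.pi ^ 2) fun x hx => by
        rw [abs_pow]; gcongr
  have i3 := exp_int t ht0 (fun θ => Real.cos (n * θ)) (by fun_prop) 1 fun x hx => Real.abs_cos_le_one _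
  have h3 : ∫ θ, (Real.exp (2 * t * (Real.cos θ - 1)) - (n : ℝ) ^ 2 / 2 * (Real.exp (2 * t * (Real.cos θ - 1)) * θ ^ 2)) ∂nuM
      ≤ qk t n := by
    refine integral_mono (i1.sub (i2.const_mul _)) i3 fun θ => ?_
    have := Real.one_sub_sq_div_two_le_cos (x := n * θ)
    calc _ = Real.exp (2 * t * (Real.cos θ - 1)) * (1 - (n * θ) ^ 2 / 2) := by ring
      _ ≤ _ := by gcongr
  rw [integral_sub i1 (i2.const_mul _), integral_const_mul] at h3
  refine le_trans ?_ h3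
  have h4 : (n : ℝ) ^ 2 / 2 * ∫ θ, (Real.exp (2 * t * (Real.cos θ - 1)) * θ ^ 2) ∂nuM ≤ C1 / 2 / √t := by
    calc _ ≤ (C1 / C2 * t) / 2 * (C2 / √t / t) := by
          gcongr
          exact h2 t ht0
      _ = _ := by field_simp
  have := h1 t ht
  have e : C1 / √t = C1 / 2 / √t + C1 / 2 / √t := by ring
  linarith

lemma sqrt_pow_rpow (t : ℝ) (ht : 0 < t) (C : ℝ) (m : ℕ) : (C / √t) ^ m = C ^ m * t ^ (-((m : ℝ) / 2)) := by
  rw [div_pow, Real.sqrt_eq_rpow, ← Real.rpow_natCast (t ^ (1 / 2 : ℝ)), ← Real.rpow_mul ht.le, Real.rpow_neg ht.le, div_eq_mul_inv]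
  congr 3; ring

lemma heat_upper (m : ℕ) (hm : 0 < m) : ∃ C > 0, ∀ t : ℝ, 0 < t → ∀ x y, heatKernel m t x y ≤ C * t ^ (-((m : ℝ) / 2)) := by
  obtain ⟨C, hC, h⟩ := qk_upper
  refine ⟨C ^ m, by positivity, fun t ht x y => ?_⟩
  rw [heat_prod m hm, ← sqrt_pow_rpow t ht]
  refine (le_abs_self _).trans ?_
  rw [Finset.abs_prod]
  refine (Finset.prod_le_prod (fun _ _ => abs_nonneg _) fun i _ => h t ht _).trans ?_
  simp [div_pow]

lemma heat_lower (m : ℕ) (hm : 0 < m) : ∃ c > 0, ∃ ρ > 0, ∀ t : ℝ, 1 ≤ t → ∀ x y : Fin m → ℤ,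
    (∀ i, |((x i - y i : ℤ) : ℝ)| ≤ ρ * √t) → c * t ^ (-((m : ℝ) / 2)) ≤ heatKernel m t x y := by
  obtain ⟨c, hc, ρ, hρ, h⟩ := qk_lower
  refine ⟨c ^ m, by positivity, ρ, hρ, fun t ht x y hxy => ?_⟩
  rw [heat_prod m hm, ← sqrt_pow_rpow t (by linarith)]
  refine le_trans ?_ (Finset.prod_le_prod (fun _ _ => by positivity) fun i _ => h t ht _ (hxy i))
  simp [div_pow]

lemma srw_nonneg (m n : ℕ) (x y) : 0 ≤ srwKernel m n x y := by
  induction n generalizing x with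
  | zero => simp only [srwKernel]; split_ifs <;> norm_num
  | succ n ih =>
    simp only [srwKernel]
    exact div_nonneg (Finset.sum_nonneg fun i _ => add_nonneg (ih _) (ih _)) (by positivity)

lemma srw_le_one (m n : ℕ) (x y) : srwKernel m n x y ≤ 1 := by
  rw [srw_fourier]
  have : ∀ θ, ‖phi m θ ^ n * cprod m (x - y) θ‖ ≤ 1 := fun θ => by
    rw [norm_mul, norm_pow]
    exact mul_le_one₀ (pow_le_one₀ (abs_nonneg _) (phi_abs m θ)) (abs_nonneg _) (cprod_abs m _ θ)
  have h := norm_integral_le_of_norm_le_const (μ := Measure.pi fun _ : Fin m => nuM) (Eventually.of_forall this)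
  simp only [probReal_univ, mul_one] at h
  exact (le_abs_self _).trans h

lemma heat_nonneg (m : ℕ) (t : ℝ) (ht : 0 ≤ t) (x y) : 0 ≤ heatKernel m t x y := by
  unfold heatKernel
  exact tsum_nonneg fun n => mul_nonneg (by positivity) (srw_nonneg _ _ _ _)

lemma heat_diag (m : ℕ) (t : ℝ) (ht : 0 ≤ t) (x) : Real.exp (-(2 * m) * t) ≤ heatKernel m t x x := by
  unfold heatKernel
  have hs : Summable fun n : ℕ => Real.exp (-(2 * m) * t) * ((2 * m) * t) ^ n / n.factorial * srwKernel m n x x := by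
    refine Summable.of_nonneg_of_le (fun n => mul_nonneg (by positivity) (srw_nonneg _ _ _ _)) (fun n => ?_)
      ((Real.summable_pow_div_factorial (2 * m * t)).mul_left (Real.exp (-(2 * m) * t)))
    rw [← mul_div_assoc]
    exact mul_le_of_le_one_right (by positivity) (srw_le_one _ _ _ _)
  refine le_trans (le_of_eq ?_) (hs.le_tsum 0 fun n _ => mul_nonneg (by positivity) (srw_nonneg _ _ _ _))
  simp [srwKernel]

lemma heat_le_one (m : ℕ) (t : ℝ) (ht : 0 ≤ t) (x y) : heatKernel m t x y ≤ 1 := by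
  unfold heatKernel
  have h1 : Summable fun n : ℕ => Real.exp (-(2 * m) * t) * (((2 * m) * t) ^ n / n.factorial) :=
    (Real.summable_pow_div_factorial (2 * m * t)).mul_left (Real.exp (-(2 * m) * t))
  have hle : ∀ n : ℕ, Real.exp (-(2 * m) * t) * ((2 * m) * t) ^ n / n.factorial * srwKernel m n x y ≤
     Real.exp (-(2 * m) * t) * (((2 * m) * t) ^ n / n.factorial) := fun n => by
    rw [← mul_div_assoc]
    exact mul_le_of_le_one_right (by positivity) (srw_le_one _ _ _ _)
  have hs := Summable.of_nonneg_of_le (fun n => mul_nonneg (by positivity) (srw_nonneg _ _ _ _)) hle h1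
  refine (hs.tsum_le_tsum hle h1).trans (le_of_eq ?_)
  rw [tsum_mul_left]
  have h2 : ∑' n : ℕ, ((2 * m * t) ^ n / n.factorial) = Real.exp (2 * m * t) := by
      rw [Real.exp_eq_exp_ℝ, NormedSpace.exp_eq_tsum_div]
  rw [h2, ← Real.exp_add]; simp

end


open MeasureTheory ProbabilityTheory Filter Set

noncomputable section

section walk

variable {d : ℕ} {Ω : Type*} [MeasurableSpace Ω] {P : (Fin d → ℤ) → Measure Ω} {S : ℝ → Ω → (Fin d → ℤ)}

lemma S_meas (hS : IsCTSRW d P S) (u : ℝ) : Measurable (S u) :=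
  hS.meas.comp measurable_prodMk_left

lemma ev_meas (hS : IsCTSRW d P S) (u : ℝ) (y) : MeasurableSet {ω | S u ω = y} :=
  S_meas hS u (measurableSet_singleton y)

lemma fdd_joint_law (hS : IsCTSRW d P S) (x : Fin d → ℤ) (n : ℕ) (t : Fin (n + 1) → ℝ) (h0 : 0 ≤ t 0)
    (hm : ∀ i : Fin n, t i.castSucc ≤ t i.succ) (y : Fin (n + 1) → (Fin d → ℤ)) :
    P x {ω | ∀ i, S (t i) ω = y i} = ENNReal.ofReal (heatKernel d (t 0) x (y 0)
          * ∏ i : Fin n, heatKernel d (t i.succ - t i.castSucc) (y i.castSucc) (y i.succ)) := by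
  have := hS.prob x
  rw [← hS.fdd x n t h0 hm y, ENNReal.ofReal_toReal (measure_ne_top _ _)]

lemma fdd1 (hS : IsCTSRW d P S) (x y : Fin d → ℤ) (u : ℝ) (hu : 0 ≤ u) :
    P x {ω | S u ω = y} = ENNReal.ofReal (heatKernel d u x y) := by
  have := fdd_joint_law hS x 0 (fun _ => u) hu (fun i => i.elim0) (fun _ => y)
  simpa using this

/-- Markov property at an initial event, the last position being `w`. -/
lemma fdd_snoc (hS : IsCTSRW d P S) (x : Fin d → ℤ) (n : ℕ) (t : Fin (n + 1) → ℝ) (h0 : 0 ≤ t 0)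
    (hm : ∀ i : Fin n, t i.castSucc ≤ t i.succ) (y : Fin (n + 1) → (Fin d → ℤ)) (u : ℝ)
    (hu : t (Fin.last n) ≤ u) (w : Fin d → ℤ) :
    P x {ω | (∀ i, S (t i) ω = y i) ∧ S u ω = w} = P x {ω | ∀ i, S (t i) ω = y i} *
      ENNReal.ofReal (heatKernel d (u - t (Fin.last n)) (y (Fin.last n)) w) := by
  have hset : {ω | (∀ i, S (t i) ω = y i) ∧ S u ω = w} =
      {ω | ∀ i : Fin (n + 2), S ((Fin.snoc t u : Fin (n + 2) → ℝ) i) ω = (Fin.snoc y w : Fin (n + 2) → (Fin d → ℤ)) i} := by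
    ext ω
    have h1 := Fin.forall_fin_succ' (n := n + 1) (P := fun i : Fin (n + 2) =>
      S ((Fin.snoc t u : Fin (n + 2) → ℝ) i) ω = (Fin.snoc y w : Fin (n + 2) → (Fin d → ℤ)) i)
    simp only [Fin.snoc_castSucc, Fin.snoc_last] at h1
    exact h1.symm
  have e0 : (Fin.snoc t u : Fin (n + 2) → ℝ) 0 = t 0 := by
    have : (0 : Fin (n + 2)) = Fin.castSucc 0 := rfl
    rw [this, Fin.snoc_castSucc]
  have e0y : (Fin.snoc y w : Fin (n + 2) → (Fin d → ℤ)) 0 = y 0 := by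
    have : (0 : Fin (n + 2)) = Fin.castSucc 0 := rfl
    rw [this, Fin.snoc_castSucc]
  have hmono : ∀ i : Fin (n + 1), (Fin.snoc t u : Fin (n + 2) → ℝ) i.castSucc ≤ (Fin.snoc t u : Fin (n + 2) → ℝ) i.succ := by
    intro i
    refine Fin.lastCases ?_ (fun j => ?_) i
    · rw [Fin.snoc_castSucc, Fin.succ_last, Fin.snoc_last]; exact hu
    · rw [Fin.snoc_castSucc, Fin.succ_castSucc, Fin.snoc_castSucc]; exact hm j
  rw [hset, fdd_joint_law hS x (n + 1) _ (by rw [e0]; exact h0) hmono, fdd_joint_law hS x n t h0 hm, e0, e0y,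
    Fin.prod_univ_castSucc]
  simp_rw [Fin.succ_castSucc, Fin.snoc_castSucc]
  rw [Fin.succ_last, Fin.snoc_last, Fin.snoc_last, ← mul_assoc, ENNReal.ofReal_mul]
  refine mul_nonneg (heat_nonneg _ _ h0 _ _) (Finset.prod_nonneg fun i _ => heat_nonneg _ _ ?_ _ _)
  linarith [hm i]

lemma fdd2 (hS : IsCTSRW d P S) (x y w : Fin d → ℤ) (s u : ℝ) (hs : 0 ≤ s) (hu : s ≤ u) :
    P x {ω | S s ω = y ∧ S u ω = w} =
      ENNReal.ofReal (heatKernel d s x y) * ENNReal.ofReal (heatKernel d (u - s) y w) := by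
  have := fdd_snoc hS x 0 (fun _ => s) hs (fun i => i.elim0) (fun _ => y) u hu w
  simp only [forall_const] at this
  rw [this, fdd1 hS x y s hs]

lemma fdd3 (hS : IsCTSRW d P S) (x y w v : Fin d → ℤ) (s u r : ℝ) (hs : 0 ≤ s) (hu : s ≤ u) (hr : u ≤ r) :
    P x {ω | S s ω = y ∧ S u ω = w ∧ S r ω = v} =
      ENNReal.ofReal (heatKernel d s x y) * ENNReal.ofReal (heatKernel d (u - s) y w)
        * ENNReal.ofReal (heatKernel d (r - u) w v) := by
  have h := fdd_snoc hS x 1 ![s, u] hs (fun i => by fin_cases i; simpa using hu) ![y, w] r (by simpa using hr) v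
  have e1 : {ω | (∀ i : Fin 2, S ((![s, u] : Fin 2 → ℝ) i) ω = (![y, w] : Fin 2 → (Fin d → ℤ)) i) ∧ S r ω = v}
    = {ω | S s ω = y ∧ S u ω = w ∧ S r ω = v} := by
    ext ω; simp [Fin.forall_fin_two, and_assoc]
  have e2 : {ω | (∀ i : Fin 2, S ((![s, u] : Fin 2 → ℝ) i) ω = (![y, w] : Fin 2 → (Fin d → ℤ)) i)}
    = {ω | S s ω = y ∧ S u ω = w} := by
    ext ω; simp [Fin.forall_fin_two]
  have e3 : Fin.last 1 = (1 : Fin 2) := rfl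
  rw [e1, e2, fdd2 hS x y w s u hs hu] at h
  rw [h]
  rfl

lemma heat_sum (hS : IsCTSRW d P S) (x : Fin d → ℤ) (u : ℝ) (hu : 0 ≤ u) :
    ∑' y, ENNReal.ofReal (heatKernel d u x y) = 1 := by
  have := hS.prob x
  simp_rw [← fdd1 hS x _ u hu]
  have h := tsum_measure_preimage_singleton (μ := P x) (s := (Set.univ : Set (Fin d → ℤ))) (f := S u)
    (Set.to_countable _) (fun y _ => ev_meas hS u y)
  rw [tsum_univ (fun b => (P x) (S u ⁻¹' {b}))] at h
  simp only [preimage_univ, measure_univ] at h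
  exact h

/-- expectation of a function of the position, on `{S t = 0}` -/
lemma lint_bridge (hS : IsCTSRW d P S) (x w : Fin d → ℤ) (u t : ℝ) (hu : 0 ≤ u) (ht : u ≤ t)
    (f : (Fin d → ℤ) → ENNReal) :
    ∫⁻ ω in {ω | S t ω = w}, f (S u ω) ∂(P x) =
      ∑' y, f y * (ENNReal.ofReal (heatKernel d u x y) * ENNReal.ofReal (heatKernel d (t - u) y w)) := by
  have hf : Measurable f := measurable_of_countable f
  rw [← lintegral_map (μ := (P x).restrict {ω | S t ω = w}) hf (S_meas hS u), lintegral_countable']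
  refine tsum_congr fun y => ?_
  rw [Measure.map_apply (S_meas hS u) (measurableSet_singleton y), Measure.restrict_apply (S_meas hS u (measurableSet_singleton y))]
  rw [← fdd2 hS x y w u t hu ht]
  rfl

lemma lint_free (hS : IsCTSRW d P S) (x : Fin d → ℤ) (u : ℝ) (hu : 0 ≤ u)
    (f : (Fin d → ℤ) → ENNReal) :
    ∫⁻ ω, f (S u ω) ∂(P x) = ∑' y, f y * ENNReal.ofReal (heatKernel d u x y) := by
  have hf : Measurable f := measurable_of_countable f
  rw [← lintegral_map (μ := (P x)) hf (S_meas hS u), lintegral_countable']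
  refine tsum_congr fun y => ?_
  rw [Measure.map_apply (S_meas hS u) (measurableSet_singleton y), ← fdd1 hS x y u hu]
  rfl

lemma bridge_bound (hd : 0 < d) : ∃ C > 0, ∀ (P : (Fin d → ℤ) → Measure Ω) (S : ℝ → Ω → (Fin d → ℤ)), IsCTSRW d P S →
    ∀ (u t : ℝ), 0 < t → 0 ≤ u → u ≤ t → ∀ f : (Fin d → ℤ) → ENNReal,
    ∫⁻ ω in {ω | S t ω = 0}, f (S u ω) ∂(P 0) ≤ ENNReal.ofReal (C * t ^ (-((d : ℝ) / 2))) *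
      (∫⁻ ω, f (S u ω) ∂(P 0) + ∫⁻ ω, f (S (t - u) ω) ∂(P 0)) := by
  obtain ⟨C, hC, h⟩ := heat_upper d hd
  refine ⟨C * (1 / 2) ^ (-((d : ℝ) / 2)), by positivity, fun P S hS u t ht hu hut f => ?_⟩
  rw [lint_bridge hS 0 0 u t hu hut f, lint_free hS 0 u hu, lint_free hS 0 (t - u) (by linarith), ← ENNReal.tsum_add,
    ← ENNReal.tsum_mul_left]
  have key : ∀ v, t / 2 ≤ v → ∀ x y, ENNReal.ofReal (heatKernel d v x y) ≤ ENNReal.ofReal (C * (1 / 2) ^ (-((d : ℝ) / 2)) * t ^ (-((d : ℝ) / 2))) := by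
    intro v hv x y
    apply ENNReal.ofReal_le_ofReal
    refine (h v (by linarith) x y).trans ?_
    rw [mul_assoc, ← Real.mul_rpow (by norm_num) ht.le]
    gcongr ?_ * ?_
    refine Real.rpow_le_rpow_of_nonpos (by linarith) (by linarith) ?_
    have : (0 : ℝ) ≤ d := by positivity
    linarith
  refine ENNReal.tsum_le_tsum fun y => ?_
  set K := ENNReal.ofReal (C * (1 / 2) ^ (-((d : ℝ) / 2)) * t ^ (-((d : ℝ) / 2)))
  rcases le_total u (t / 2) with h1 | h1
  · calc _ ≤ f y * (ENNReal.ofReal (heatKernel d u 0 y) * K) := by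
          gcongr; exact key _ (by linarith) _ _
      _ = K * (f y * ENNReal.ofReal (heatKernel d u 0 y)) := by ring
      _ ≤ _ := by gcongr; exact le_self_add
  · calc _ ≤ f y * (K * ENNReal.ofReal (heatKernel d (t - u) y 0)) := by
          gcongr; exact key _ (by linarith) _ _
      _ = K * (f y * ENNReal.ofReal (heatKernel d (t - u) 0 y)) := by
          rw [heat_symm d hd (t - u) y 0]; ring
      _ ≤ _ := by gcongr; exact le_add_self

lemma green_bound (hd : 3 ≤ d) : ∃ G : ℝ, 1 ≤ G ∧ ∀ (n : ℕ) (x y : Fin d → ℤ),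
    ∑ i ∈ Finset.range n, heatKernel d i x y ≤ G := by
  obtain ⟨C, hC, h⟩ := heat_upper d (by omega)
  have hs : Summable fun i : ℕ => C * (i : ℝ) ^ (-((d : ℝ) / 2)) := by
    refine Summable.mul_left _ (Real.summable_nat_rpow.2 ?_)
    have : (3 : ℝ) ≤ d := by exact_mod_cast hd
    linarith
  refine ⟨1 + ∑' i : ℕ, C * (i : ℝ) ^ (-((d : ℝ) / 2)), by
    have : 0 ≤ ∑' i : ℕ, C * (i : ℝ) ^ (-((d : ℝ) / 2)) := tsum_nonneg fun i => by positivity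
    linarith, fun n x y => ?_⟩
  have h1 : ∀ i ∈ Finset.range n, heatKernel d i x y ≤ (if i = 0 then 1 else 0) + C * (i : ℝ) ^ (-((d : ℝ) / 2)) := by
    intro i _
    split_ifs with hi
    · have : 0 ≤ C * (i : ℝ) ^ (-((d : ℝ) / 2)) := by positivity
      linarith [heat_le_one d i (by positivity) x y]
    · rw [zero_add]
      exact h i (by exact_mod_cast Nat.pos_of_ne_zero hi) x y
  refine (Finset.sum_le_sum h1).trans ?_
  rw [Finset.sum_add_distrib]
  gcongr
  · rw [Finset.sum_ite_eq']; split_ifs <;> norm_num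
  · exact hs.sum_le_tsum _ fun i _ => by positivity

end walk

end


open MeasureTheory ProbabilityTheory Filter Set

noncomputable section

lemma pow_add_le (a b k : ℕ) : (a + b) ^ (k + 1) ≤ b ^ (k + 1) + (k + 1) * (a * (a + b) ^ k) := by
  induction k with
  | zero => simp; omega
  | succ k ih =>
    have h1 : b * (a * (a + b) ^ k) ≤ a * (a + b) ^ (k + 1) := by
      rw [pow_succ]
      nlinarith [Nat.zero_le (a * (a + b) ^ k * a)]
    calc (a + b) ^ (k + 1 + 1) = a * (a + b) ^ (k + 1) + b * (a + b) ^ (k + 1) := by ring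
      _ ≤ a * (a + b) ^ (k + 1) + b * (b ^ (k + 1) + (k + 1) * (a * (a + b) ^ k)) := by gcongr
      _ = a * (a + b) ^ (k + 1) + b ^ (k + 2) + (k + 1) * (b * (a * (a + b) ^ k)) := by ring
      _ ≤ a * (a + b) ^ (k + 1) + b ^ (k + 2) + (k + 1) * (a * (a + b) ^ (k + 1)) := by gcongr
      _ = _ := by push_cast; ring

lemma sum_pow_le (f : ℕ → ℕ) (n k j : ℕ) (hj : j ≤ n) : (∑ i ∈ Finset.Ico j n, f i) ^ (k + 1)
    ≤ (k + 1) * ∑ i ∈ Finset.Ico j n, f i * (∑ l ∈ Finset.Ico i n, f l) ^ k := by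
  induction hj using Nat.decreasingInduction with
  | self => simp
  | of_succ j hj ih =>
    rw [Finset.sum_eq_sum_Ico_succ_bot (by omega : j < n), Finset.sum_eq_sum_Ico_succ_bot (by omega : j < n)]
    refine (pow_add_le _ _ _).trans ?_
    rw [mul_add, add_comm]
    rw [Finset.sum_eq_sum_Ico_succ_bot (by omega : j < n)]
    gcongr

section walk

variable {d : ℕ} {Ω : Type*} [MeasurableSpace Ω] {P : (Fin d → ℤ) → Measure Ω} {S : ℝ → Ω → (Fin d → ℤ)}

/-- number of visits to `y` at the times `v + i`, `j ≤ i < n` -/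
def visits (S : ℝ → Ω → (Fin d → ℤ)) (v : ℝ) (n : ℕ) (y : Fin d → ℤ) (j : ℕ) (ω : Ω) : ℕ :=
  ∑ i ∈ Finset.Ico j n, if S (v + i) ω = y then 1 else 0

lemma visits_meas (hS : IsCTSRW d P S) (v : ℝ) (n : ℕ) (y) (j : ℕ) : Measurable (visits S v n y j) := by
  unfold visits
  refine Finset.measurable_fun_sum _ fun i _ => ?_
  exact Measurable.ite (ev_meas hS _ y) measurable_const measurable_const

lemma local_moment (hS : IsCTSRW d P S) (G : ℝ) (hG0 : 1 ≤ G) (hG : ∀ (n : ℕ) (x y : Fin d → ℤ),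
    ∑ i ∈ Finset.range n, heatKernel d i x y ≤ G) (x y : Fin d → ℤ) (v : ℝ) (n k : ℕ) :
    ∀ (m : ℕ) (t : Fin (m + 1) → ℝ), 0 ≤ t 0 → (∀ i : Fin m, t i.castSucc ≤ t i.succ) →
    ∀ j : ℕ, j ≤ n → t (Fin.last m) = v + j →
    ∫⁻ ω in {ω | ∀ i, S (t i) ω = y}, ((visits S v n y j ω : ℕ) : ENNReal) ^ k ∂(P x) ≤
      (k.factorial : ENNReal) * ENNReal.ofReal G ^ k * P x {ω | ∀ i, S (t i) ω = y} := by
  induction k with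
  | zero =>
    intro m t h0 hm j hj hl
    simp
  | succ k ih =>
    intro m t h0 hm j hj hl
    set F := {ω | ∀ i, S (t i) ω = y} with hF
    have hFm : MeasurableSet F := by
      rw [hF, setOf_forall]
      exact MeasurableSet.iInter fun i => ev_meas hS _ y
    have h1 : ∀ ω, ((visits S v n y j ω : ℕ) : ENNReal) ^ (k + 1) ≤ (k + 1 : ENNReal) *
        ∑ i ∈ Finset.Ico j n, {ω | S (v + i) ω = y}.indicator (fun ω => ((visits S v n y i ω : ℕ) : ENNReal) ^ k) ω := by
      intro ω
      have := sum_pow_le (fun i => if S (v + i) ω = y then 1 else 0) n k j hj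
      have h2 : (((visits S v n y j ω) ^ (k + 1) : ℕ) : ENNReal) ≤ (((k + 1) * ∑ i ∈ Finset.Ico j n, (if S (v + i) ω = y then 1 else 0) * (visits S v n y i ω) ^ k : ℕ) : ENNReal) := by
        exact_mod_cast this
      push_cast at h2
      refine h2.trans (le_of_eq ?_)
      congr 1
      refine Finset.sum_congr rfl fun i _ => ?_
      by_cases h : S (v + i) ω = y <;> simp [h, indicator]
    have hvm : ∀ i, Measurable fun ω => ((visits S v n y i ω : ℕ) : ENNReal) ^ k := fun i =>
      ((measurable_of_countable (fun n : ℕ => (n : ENNReal))).comp (visits_meas hS v n y i)).pow_const k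
    calc _ ≤ ∫⁻ ω in F, (k + 1 : ENNReal) *
        ∑ i ∈ Finset.Ico j n, {ω | S (v + i) ω = y}.indicator (fun ω => ((visits S v n y i ω : ℕ) : ENNReal) ^ k) ω ∂(P x) :=
          lintegral_mono h1
      _ = (k + 1 : ENNReal) * ∑ i ∈ Finset.Ico j n, ∫⁻ ω in F, {ω | S (v + i) ω = y}.indicator (fun ω => ((visits S v n y i ω : ℕ) : ENNReal) ^ k) ω ∂(P x) := by
          rw [lintegral_const_mul, lintegral_finsetSum]
          · intro i _
            exact (hvm i).indicator (ev_meas hS _ y)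
          · exact Finset.measurable_fun_sum _ fun i _ => (hvm i).indicator (ev_meas hS _ y)
      _ ≤ (k + 1 : ENNReal) * ∑ i ∈ Finset.Ico j n, ((k.factorial : ENNReal) * ENNReal.ofReal G ^ k * (P x F *
            ENNReal.ofReal (heatKernel d ((i - j : ℕ) : ℝ) y y))) := by
          gcongr with i hi
          have hij : j ≤ i := (Finset.mem_Ico.1 hi).1
          have hu : t (Fin.last m) ≤ v + i := by
            rw [hl]
            have : (j : ℝ) ≤ i := by exact_mod_cast hij
            linarith
          rw [lintegral_indicator (ev_meas hS _ y), Measure.restrict_restrict (ev_meas hS _ y)]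
          have hset : {ω | S (v + i) ω = y} ∩ F = {ω | ∀ l : Fin (m + 2), S ((Fin.snoc t (v + i) : Fin (m + 2) → ℝ) l) ω = y} := by
            ext ω
            have h1 := Fin.forall_fin_succ' (n := m + 1) (P := fun l : Fin (m + 2) =>
              S ((Fin.snoc t (v + i) : Fin (m + 2) → ℝ) l) ω = y)
            simp only [Fin.snoc_castSucc, Fin.snoc_last] at h1
            exact and_comm.trans h1.symm
          have e0 : (Fin.snoc t (v + i) : Fin (m + 2) → ℝ) 0 = t 0 := by
            have : (0 : Fin (m + 2)) = Fin.castSucc 0 := rfl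
            rw [this, Fin.snoc_castSucc]
          have hmono : ∀ l : Fin (m + 1), (Fin.snoc t (v + i) : Fin (m + 2) → ℝ) l.castSucc ≤ (Fin.snoc t (v + i) : Fin (m + 2) → ℝ) l.succ := by
            intro l
            refine Fin.lastCases ?_ (fun l => ?_) l
            · rw [Fin.snoc_castSucc, Fin.succ_last, Fin.snoc_last]; exact hu
            · rw [Fin.snoc_castSucc, Fin.succ_castSucc, Fin.snoc_castSucc]; exact hm l
          have hP : P x ({ω | S (v + i) ω = y} ∩ F) = P x F * ENNReal.ofReal (heatKernel d ((i - j : ℕ) : ℝ) y y) := by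
            have := fdd_snoc hS x m t h0 hm (fun _ => y) (v + i) hu y
            rw [hl] at this
            have e : v + (i : ℝ) - (v + j) = ((i - j : ℕ) : ℝ) := by
              rw [Nat.cast_sub hij]; ring
            rw [e] at this
            rw [← this, inter_comm]
            rfl
          rw [← hP, hset]
          exact ih (m + 1) _ (by rw [e0]; exact h0) hmono i (Finset.mem_Ico.1 hi).2.le (by rw [Fin.snoc_last])
      _ = ((k + 1 : ENNReal) * k.factorial * ENNReal.ofReal G ^ k * P x F) * ENNReal.ofReal (∑ i ∈ Finset.Ico j n,
            (heatKernel d ((i - j : ℕ) : ℝ) y y)) := by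
          rw [ENNReal.ofReal_sum_of_nonneg fun i _ => heat_nonneg _ _ (by positivity) _ _, Finset.mul_sum, Finset.mul_sum]
          refine Finset.sum_congr rfl fun i _ => by ring
      _ ≤ ((k + 1 : ENNReal) * k.factorial * ENNReal.ofReal G ^ k * P x F) * ENNReal.ofReal G := by
          gcongr
          rw [Finset.sum_Ico_eq_sum_range]
          simp only [Nat.add_sub_cancel_left]
          exact hG _ _ _
      _ = _ := by
          rw [Nat.factorial_succ]; push_cast; ring

lemma bad_bound (hS : IsCTSRW d P S) (G : ℝ) (hG0 : 1 ≤ G) (hG : ∀ (n : ℕ) (x y : Fin d → ℤ),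
    ∑ i ∈ Finset.range n, heatKernel d i x y ≤ G) (x : Fin d → ℤ) (v : ℝ) (hv : 0 ≤ v) (n k : ℕ) (M : ℝ) (hM : 0 < M) :
    P x {ω | ∃ y, M ≤ visits S v n y 0 ω} ≤ ENNReal.ofReal (n * (k.factorial * G ^ k / M ^ k)) := by
  have hsub : {ω | ∃ y, M ≤ visits S v n y 0 ω} ⊆ ⋃ j ∈ Finset.range n, ⋃ y : Fin d → ℤ,
      {ω | S (v + j) ω = y} ∩ {ω | ENNReal.ofReal M ^ k ≤ ((visits S v n y j ω : ℕ) : ENNReal) ^ k} := by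
    rintro ω ⟨y, hy⟩
    have hex : ∃ j, j < n ∧ S (v + j) ω = y := by
      by_contra hcon
      push Not at hcon
      have : visits S v n y 0 ω = 0 := by
        unfold visits
        refine Finset.sum_eq_zero fun i hi => ?_
        rw [if_neg (hcon i (Finset.mem_Ico.1 hi).2)]
      rw [this] at hy
      simp at hy
      linarith
    classical
    have hj := Nat.find_spec hex
    have hmin := fun m (h : m < Nat.find hex) => Nat.find_min hex h
    set j := Nat.find hex
    have heq : visits S v n y 0 ω = visits S v n y j ω := by
      unfold visits
      rw [← Finset.sum_Ico_consecutive _ (Nat.zero_le j) hj.1.le]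
      rw [Finset.sum_eq_zero, zero_add]
      intro i hi
      have h1 := hmin i (Finset.mem_Ico.1 hi).2
      rw [if_neg]
      intro h
      exact h1 ⟨(Finset.mem_Ico.1 hi).2.trans hj.1, h⟩
    simp only [mem_iUnion, Finset.mem_range]
    refine ⟨j, hj.1, y, hj.2, ?_⟩
    rw [heq] at hy
    show ENNReal.ofReal M ^ k ≤ ((visits S v n y j ω : ℕ) : ENNReal) ^ k
    gcongr
    rw [← ENNReal.ofReal_natCast]
    exact ENNReal.ofReal_le_ofReal hy
  refine (measure_mono hsub).trans ((measure_biUnion_finset_le _ _).trans ?_)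
  have hMk : ENNReal.ofReal M ^ k ≠ 0 := by
    apply pow_ne_zero; simpa using hM
  have hMt : ENNReal.ofReal M ^ k ≠ ⊤ := ENNReal.pow_ne_top ENNReal.ofReal_ne_top
  have hone : ∀ j ∈ Finset.range n, P x (⋃ y : Fin d → ℤ,
      {ω | S (v + j) ω = y} ∩ {ω | ENNReal.ofReal M ^ k ≤ ((visits S v n y j ω : ℕ) : ENNReal) ^ k}) ≤
      (k.factorial : ENNReal) * ENNReal.ofReal G ^ k / ENNReal.ofReal M ^ k := by
    intro j hj
    have hvj : 0 ≤ v + j := by positivity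
    refine (measure_iUnion_le _).trans ?_
    have h2 : ∀ y, P x ({ω | S (v + j) ω = y} ∩ {ω | ENNReal.ofReal M ^ k ≤ ((visits S v n y j ω : ℕ) : ENNReal) ^ k})
       ≤ (k.factorial : ENNReal) * ENNReal.ofReal G ^ k / ENNReal.ofReal M ^ k * ENNReal.ofReal (heatKernel d (v + j) x y) := by
      intro y
      have h3 := local_moment hS G hG0 hG x y v n k 0 (fun _ => v + j) hvj (fun i => i.elim0) j (Finset.mem_range.1 hj).le rfl
      simp only [forall_const] at h3
      have hvm : Measurable fun ω => ((visits S v n y j ω : ℕ) : ENNReal) ^ k :=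
        ((measurable_of_countable (fun n : ℕ => (n : ENNReal))).comp (visits_meas hS v n y j)).pow_const k
      have h4 := meas_ge_le_lintegral_div (μ := (P x).restrict {ω | S (v + j) ω = y}) hvm.aemeasurable hMk hMt
      rw [Measure.restrict_apply (measurableSet_le measurable_const hvm), inter_comm] at h4
      refine h4.trans ?_
      rw [← fdd1 hS x y _ hvj, ENNReal.mul_div_right_comm.symm]
      gcongr
    refine (ENNReal.tsum_le_tsum h2).trans ?_
    rw [ENNReal.tsum_mul_left, heat_sum hS x _ hvj, mul_one]
  refine (Finset.sum_le_sum hone).trans (le_of_eq ?_)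
  rw [Finset.sum_const, Finset.card_range, nsmul_eq_mul, ENNReal.ofReal_mul (by positivity), ENNReal.ofReal_div_of_pos (by positivity),
    ENNReal.ofReal_mul (by positivity), ENNReal.ofReal_pow (by linarith), ENNReal.ofReal_pow hM.le, ENNReal.ofReal_natCast, ENNReal.ofReal_natCast]

end walk

end


open MeasureTheory ProbabilityTheory Filter Set

noncomputable section

section scenery

variable {d : ℕ} {α : ℝ} {Ω : Type*} [MeasurableSpace Ω] {μ : Measure Ω} {z : (Fin d → ℤ) → Ω → ℝ}

lemma tail_bounds (hz : IsScenery d α μ z) (hα : 0 < α) (ε : ℝ) (hε : 0 < ε) :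
    ∀ᶠ r : ℝ in atTop, r ^ (-α - ε) ≤ (μ {ω | r < z 0 ω}).toReal ∧ (μ {ω | r < z 0 ω}).toReal ≤ r ^ (-α + ε) := by
  have h1 := hz.tail.eventually (Ioo_mem_nhds (show -α - ε < -α by linarith) (show -α < -α + ε by linarith))
  have h2 := hz.tail.eventually (Iio_mem_nhds (show -α < 0 by linarith))
  filter_upwards [h1, h2, eventually_gt_atTop 1] with r h1 h2 hr
  have hl : 0 < Real.log r := Real.log_pos hr
  have hr0 : 0 < r := by linarith
  set p := (μ {ω | r < z 0 ω}).toReal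
  have hp0 : 0 ≤ p := ENNReal.toReal_nonneg
  have hp : 0 < p := by
    rcases hp0.eq_or_lt with h | h
    · exfalso
      have h2' : Real.log p / Real.log r < 0 := h2
      rw [← h] at h2'
      simp at h2'
    · exact h
  have e : p = Real.exp (Real.log p) := (Real.exp_log hp).symm
  rw [Real.rpow_def_of_pos hr0, Real.rpow_def_of_pos hr0]
  have h3 := (lt_div_iff₀ hl).1 h1.1
  have h4 := (div_lt_iff₀ hl).1 h1.2
  constructor
  · conv_rhs => rw [e]
    apply Real.exp_le_exp.2; linarith
  · conv_lhs => rw [e]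
    apply Real.exp_le_exp.2; linarith

lemma moment_finite (hz : IsScenery d α μ z) (p : ℝ) (hp1 : 1 ≤ p) (hp : p < α) :
    ∫⁻ ω, ENNReal.ofReal (z 0 ω ^ p) ∂μ < ⊤ := by
  have := hz.prob
  obtain ⟨q, hpq, hq⟩ := exists_between hp
  have hev := tail_bounds hz (by linarith) (α - q) (by linarith)
  obtain ⟨R, hR⟩ := (hev.and (eventually_gt_atTop 1)).exists_forall_of_atTop
  have hR1 : 1 < R := (hR R le_rfl).2
  rw [lintegral_rpow_eq_lintegral_meas_lt_mul μ (Eventually.of_forall (hz.nonneg 0)) (hz.meas 0).aemeasurable (by linarith)]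
  refine ENNReal.mul_lt_top ENNReal.ofReal_lt_top ?_
  rw [← Ioc_union_Ioi_eq_Ioi (show (0 : ℝ) ≤ R by linarith)]
  refine (lintegral_union_le _ _ _).trans_lt ?_
  refine ENNReal.add_lt_top.2 ⟨?_, ?_⟩
  · calc _ ≤ ∫⁻ t in Ioc 0 R, ENNReal.ofReal (R ^ (p - 1)) := by
          refine setLIntegral_mono' measurableSet_Ioc fun t ht => ?_
          calc _ ≤ 1 * ENNReal.ofReal (R ^ (p - 1)) := by
                refine mul_le_mul' prob_le_one (ENNReal.ofReal_le_ofReal ?_)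
                exact Real.rpow_le_rpow ht.1.le ht.2 (by linarith)
            _ = _ := one_mul _
      _ < ⊤ := by
          rw [setLIntegral_const, Real.volume_Ioc]
          exact ENNReal.mul_lt_top ENNReal.ofReal_lt_top ENNReal.ofReal_lt_top
  · calc _ ≤ ∫⁻ t in Ioi R, ENNReal.ofReal (t ^ (p - 1 - q)) := by
          refine setLIntegral_mono' measurableSet_Ioi fun t ht => ?_
          have ht : R < t := ht
          have h1 := ((hR t ht.le).1).2
          have h2 : μ {a | t < z 0 a} ≤ ENNReal.ofReal (t ^ (-q)) := by
            rw [← ENNReal.ofReal_toReal (measure_ne_top μ {a | t < z 0 a})]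
            apply ENNReal.ofReal_le_ofReal
            convert h1 using 2; ring
          have ht0 : 0 < t := by linarith
          calc _ ≤ ENNReal.ofReal (t ^ (-q)) * ENNReal.ofReal (t ^ (p - 1)) := by gcongr
            _ = _ := by
              rw [← ENNReal.ofReal_mul (by positivity), ← Real.rpow_add ht0]
              congr 2; ring
      _ < ⊤ := by
          have h := integrableOn_Ioi_rpow_of_lt (show p - 1 - q < -1 by linarith) (show 0 < R by linarith)
          exact h.setLIntegral_lt_top

lemma z_integrable (hz : IsScenery d α μ z) (hα : 1 < α) (x) : Integrable (z x) μ := by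
  rw [(hz.ident x).integrable_iff]
  have h := moment_finite hz 1 le_rfl hα
  refine ⟨(hz.meas 0).aestronglyMeasurable, ?_⟩
  rw [hasFiniteIntegral_iff_ofReal (Eventually.of_forall (hz.nonneg 0))]
  simpa using h

lemma ident_lint (hz : IsScenery d α μ z) (x) (f : ℝ → ENNReal) (hf : Measurable f) :
    ∫⁻ ω, f (z x ω) ∂μ = ∫⁻ ω, f (z 0 ω) ∂μ :=
  ((hz.ident x).comp hf).lintegral_eq

/-- the scenery above level `T` -/
def hiT (T : ℝ) (r : ℝ) : ENNReal := if T < r then ENNReal.ofReal r else 0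

lemma hiT_meas (T : ℝ) : Measurable (hiT T) :=
  Measurable.ite measurableSet_Ioi ENNReal.measurable_ofReal measurable_const

lemma hi_bound (hz : IsScenery d α μ z) (p : ℝ) (hp1 : 1 ≤ p) (hp : p < α) :
    ∃ K > 0, ∀ T : ℝ, 0 < T → ∀ x, ∫⁻ ω, hiT T (z x ω) ∂μ ≤ ENNReal.ofReal (K * T ^ (1 - p)) := by
  have hfin := moment_finite hz p hp1 hp
  set K := (∫⁻ ω, ENNReal.ofReal (z 0 ω ^ p) ∂μ).toReal
  refine ⟨K + 1, by positivity, fun T hT x => ?_⟩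
  rw [ident_lint hz x _ (hiT_meas T)]
  have h1 : ∀ ω, hiT T (z 0 ω) ≤ ENNReal.ofReal (T ^ (1 - p)) * ENNReal.ofReal (z 0 ω ^ p) := by
    intro ω
    unfold hiT
    split_ifs with h
    · rw [← ENNReal.ofReal_mul (by positivity)]
      apply ENNReal.ofReal_le_ofReal
      have h0 : 0 < z 0 ω := hT.trans h
      calc z 0 ω = z 0 ω ^ (1 - p) * z 0 ω ^ p := by
            rw [← Real.rpow_add h0]; simp
        _ ≤ _ := by
          have := Real.rpow_le_rpow_of_nonpos hT h.le (show 1 - p ≤ 0 by linarith)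
          gcongr
    · exact zero_le
  refine (lintegral_mono h1).trans ?_
  rw [lintegral_const_mul' _ _ ENNReal.ofReal_ne_top, ← ENNReal.ofReal_toReal hfin.ne, ← ENNReal.ofReal_mul (by positivity), mul_comm]
  apply ENNReal.ofReal_le_ofReal
  have : 0 < T ^ (1 - p) := by positivity
  gcongr
  linarith

/-- the scenery truncated at level `T` -/
def loT (T : ℝ) (r : ℝ) : ℝ := if r ≤ T then r else 0

lemma loT_meas (T : ℝ) : Measurable (loT T) :=
  Measurable.ite measurableSet_Iic measurable_id measurable_const

lemma lo_mgf (hz : IsScenery d α μ z) (hα : 1 < α) (T l : ℝ) (hT : 0 ≤ T) (hl : 0 ≤ l) (M : ℝ)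
    (hlM : l * M * T ≤ 1) (N : ℝ) (hN : 0 ≤ N) (hNM : N ≤ M) (y) :
    mgf (fun ω => N * loT T (z y ω)) μ l ≤ Real.exp (l * N * ((1 + l * M * T) * ∫ ω, z 0 ω ∂μ)) := by
  have := hz.prob
  have hmean : ∫ ω, z y ω ∂μ = ∫ ω, z 0 ω ∂μ := (hz.ident y).integral_eq
  have hM : 0 ≤ M := hN.trans hNM
  unfold mgf
  have h1 : ∀ ω, Real.exp (l * (N * loT T (z y ω))) ≤ 1 + (l * N * (1 + l * M * T)) * z y ω := by
    intro ω
    have hz0 := hz.nonneg y ω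
    have hlo : 0 ≤ loT T (z y ω) ∧ loT T (z y ω) ≤ T ∧ loT T (z y ω) ≤ z y ω := by
      unfold loT; split_ifs with h
      · exact ⟨hz0, h, le_rfl⟩
      · exact ⟨le_rfl, hT, hz0⟩
    obtain ⟨a1, a2, a3⟩ := hlo
    set w := loT T (z y ω)
    set X := l * (N * w) with hX
    have hX0 : 0 ≤ X := by positivity
    have hX1 : X ≤ l * M * T := by
      rw [hX, mul_assoc l M T]; gcongr
    have h2 := Real.abs_exp_sub_one_sub_id_le (x := X) (by rw [abs_of_nonneg hX0]; linarith)
    have h3 := (abs_le.1 h2).2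
    have h4 : X ^ 2 ≤ (l * M * T) * X := by rw [sq]; gcongr
    have h5 : X ≤ l * N * z y ω := by
      rw [hX, mul_assoc l N]; gcongr
    have h6 : 0 ≤ l * M * T := by positivity
    calc Real.exp X ≤ 1 + (1 + l * M * T) * X := by linarith
      _ ≤ 1 + (1 + l * M * T) * (l * N * z y ω) := by gcongr
      _ = _ := by ring
  have hi : Integrable (fun ω => 1 + (l * N * (1 + l * M * T)) * z y ω) μ :=
    (integrable_const _).add ((z_integrable hz hα y).const_mul _)
  refine (integral_mono_of_nonneg (Eventually.of_forall fun _ => (Real.exp_pos _).le) hi (Eventually.of_forall h1)).trans ?_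
  rw [integral_add (integrable_const _) ((z_integrable hz hα y).const_mul _), integral_const_mul, hmean]
  simp only [integral_const, probReal_univ, smul_eq_mul, mul_one]
  refine le_trans (le_of_eq ?_) (Real.add_one_le_exp _)
  ring

lemma chernoff (hz : IsScenery d α μ z) (hα : 1 < α) (T l : ℝ) (hT : 0 ≤ T) (hl : 0 ≤ l) (M : ℝ)
    (hlM : l * M * T ≤ 1) (s : ℕ → (Fin d → ℤ)) (n : ℕ)
    (hs : ∀ y, ((∑ i ∈ Finset.Ico 0 n, if s i = y then 1 else 0 : ℕ) : ℝ) ≤ M) (c : ℝ) :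
    μ {ω | c ≤ ∑ j ∈ Finset.range n, loT T (z (s j) ω)} ≤
      ENNReal.ofReal (Real.exp (-l * c) * Real.exp (l * n * ((1 + l * M * T) * ∫ ω, z 0 ω ∂μ))) := by
  have := hz.prob
  classical
  set Nn : (Fin d → ℤ) → ℕ := fun y => ((Finset.range n).filter (fun i => s i = y)).card
  have hNn : ∀ y, (Nn y : ℝ) ≤ M := by
    intro y
    have := hs y
    rw [← Finset.card_filter, ← Finset.range_eq_Ico] at this
    exact this
  set I := (Finset.range n).image s
  set X : (Fin d → ℤ) → Ω → ℝ := fun y ω => Nn y * loT T (z y ω)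
  have hXm : ∀ y, Measurable (X y) := fun y => ((loT_meas T).comp (hz.meas y)).const_mul _
  have hsum : ∀ ω, ∑ j ∈ Finset.range n, loT T (z (s j) ω) = (∑ y ∈ I, X y) ω := by
    intro ω
    rw [Finset.sum_comp (fun y => loT T (z y ω)) s, Finset.sum_apply]
    refine Finset.sum_congr rfl fun y _ => ?_
    rw [nsmul_eq_mul]
  have hind : iIndepFun X μ := by
    have := hz.indep.comp (fun y r => (Nn y : ℝ) * loT T r) (fun y => (loT_meas T).const_mul _)
    exact this
  have hcard : ∑ y ∈ I, (Nn y : ℝ) = n := by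
    have := Finset.card_eq_sum_card_image s (Finset.range n)
    rw [Finset.card_range] at this
    exact_mod_cast this.symm
  have hlo : ∀ r, 0 ≤ r → 0 ≤ loT T r ∧ loT T r ≤ T := by
    intro r hr
    unfold loT; split_ifs with h
    · exact ⟨hr, h⟩
    · exact ⟨le_rfl, hT⟩
  have hSm : Measurable (∑ y ∈ I, X y) := by
    have h := Finset.measurable_fun_sum I fun y _ => hXm y
    convert h using 1
    ext ω; simp
  have hIntg : Integrable (fun ω => Real.exp (l * (∑ y ∈ I, X y) ω)) μ := by
    refine bdd_integrable (Real.measurable_exp.comp (hSm.const_mul _)) (Real.exp (l * (n * T))) fun ω => ?_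
    rw [Real.abs_exp]
    apply Real.exp_le_exp.2
    gcongr
    rw [← hsum]
    refine (Finset.sum_le_sum fun j _ => (hlo _ (hz.nonneg (s j) ω)).2).trans ?_
    simp
  have h := measure_ge_le_exp_mul_mgf (μ := μ) (X := ∑ y ∈ I, X y) c hl hIntg
  simp_rw [hsum]
  rw [← ENNReal.ofReal_toReal (measure_ne_top μ _)]
  apply ENNReal.ofReal_le_ofReal
  refine h.trans ?_
  gcongr
  rw [hind.mgf_sum hXm]
  refine (Finset.prod_le_prod (fun _ _ => mgf_nonneg) fun y _ => lo_mgf hz hα T l hT hl M hlM (Nn y) (by positivity) (hNn y) y).trans ?_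
  rw [← Real.exp_sum, ← Finset.sum_mul, ← Finset.mul_sum, hcard]

end scenery

end


open MeasureTheory ProbabilityTheory Filter Set

noncomputable section

lemma bc_lemma {Ω : Type*} [MeasurableSpace Ω] {μ : Measure Ω} (f : ℕ → Ω → ENNReal) (hf : ∀ n, AEMeasurable (f n) μ)
    (a b : ℕ → ℝ) (ha : ∀ᶠ n in atTop, 0 < a n) (hb : Summable b) (hb0 : ∀ n, 0 ≤ b n)
    (h : ∀ᶠ n in atTop, ∫⁻ ω, f n ω ∂μ ≤ ENNReal.ofReal (a n * b n)) :
    ∀ᵐ ω ∂μ, ∀ᶠ n in atTop, f n ω ≤ ENNReal.ofReal (a n) := by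
  obtain ⟨N, hN⟩ := (ha.and h).exists_forall_of_atTop
  have h1 : ∑' n, μ {ω | ENNReal.ofReal (a (n + N)) ≤ f (n + N) ω} ≠ ⊤ := by
    have h2 : ∀ n, μ {ω | ENNReal.ofReal (a (n + N)) ≤ f (n + N) ω} ≤ ENNReal.ofReal (b (n + N)) := by
      intro n
      have ⟨h3, h4⟩ := hN (n + N) (by omega)
      refine (meas_ge_le_lintegral_div (hf _) (by simpa using h3) ENNReal.ofReal_ne_top).trans ?_
      refine (ENNReal.div_le_div_right h4 _).trans ?_
      rw [← ENNReal.ofReal_div_of_pos h3]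
      apply ENNReal.ofReal_le_ofReal
      rw [mul_comm, mul_div_assoc, div_self h3.ne', mul_one]
    refine ne_top_of_le_ne_top ?_ (ENNReal.tsum_le_tsum h2)
    rw [← ENNReal.ofReal_tsum_of_nonneg (fun n => hb0 _) ((summable_nat_add_iff N).2 hb)]
    exact ENNReal.ofReal_ne_top
  filter_upwards [ae_eventually_notMem h1] with ω hω
  rw [← map_add_atTop_eq_nat N, eventually_map]
  filter_upwards [hω] with n hn
  have hn' : ¬ (ENNReal.ofReal (a (n + N)) ≤ f (n + N) ω) := hn
  exact (not_le.1 hn').le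

lemma lint_split (f : ℝ → ENNReal) (hf : Measurable f) (n : ℕ) :
    ∫⁻ u in Ioc (0 : ℝ) n, f u = ∫⁻ v in Ioc (0 : ℝ) 1, ∑ j ∈ Finset.range n, f (v + j) := by
  induction n with
  | zero => simp
  | succ n ih =>
    have e : Ioc (0 : ℝ) ((n + 1 : ℕ) : ℝ) = Ioc (0 : ℝ) n ∪ Ioc (n : ℝ) (n + 1) := by
      push_cast
      rw [Ioc_union_Ioc_eq_Ioc (by positivity) (by linarith)]
    rw [e, lintegral_union measurableSet_Ioc (Ioc_disjoint_Ioc_of_le le_rfl), ih]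
    simp_rw [Finset.sum_range_succ]
    have hm : Measurable fun v : ℝ => f (v + n) := hf.comp (measurable_add_const (n : ℝ))
    rw [lintegral_add_right _ hm]
    congr 1
    have h := (measurePreserving_add_right volume (n : ℝ)).setLIntegral_comp_preimage
      (measurableSet_Ioc (a := (n : ℝ)) (b := n + 1)) hf
    rw [← h]
    congr 2
    ext x
    simp [add_comm (1 : ℝ)]

section bulk

variable {d : ℕ} {α : ℝ} {Ωz Ωw : Type*} [MeasurableSpace Ωz] [MeasurableSpace Ωw]
  {μ : Measure Ωz} {z : (Fin d → ℤ) → Ωz → ℝ} {P : (Fin d → ℤ) → Measure Ωw} {S : ℝ → Ωw → (Fin d → ℤ)}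

lemma z_joint (hz : IsScenery d α μ z) : Measurable fun p : Ωz × (Fin d → ℤ) => z p.2 p.1 :=
  measurable_from_prod_countable_left fun x => hz.meas x

lemma zS_joint (hz : IsScenery d α μ z) (hS : IsCTSRW d P S) :
    Measurable fun p : (Ωz × Ωw) × ℝ => z (S p.2 p.1.2) p.1.1 :=
  (z_joint hz).comp ((measurable_fst.comp measurable_fst).prodMk
    (hS.meas.comp (measurable_snd.prodMk (measurable_snd.comp measurable_fst))))

/-- skeleton sum -/
def Bsk (z : (Fin d → ℤ) → Ωz → ℝ) (S : ℝ → Ωw → (Fin d → ℤ)) (T : ℝ) (n : ℕ) (p : (Ωz × Ωw) × ℝ) : ℝ :=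
  ∑ j ∈ Finset.range n, loT T (z (S (p.2 + j) p.1.2) p.1.1)

lemma Bsk_meas (hz : IsScenery d α μ z) (hS : IsCTSRW d P S) (T : ℝ) (n : ℕ) : Measurable (Bsk z S T n) := by
  unfold Bsk
  refine Finset.measurable_fun_sum _ fun j _ => (loT_meas T).comp ?_
  exact (zS_joint hz hS).comp (measurable_fst.prodMk (measurable_snd.add_const _))

def Alo (z : (Fin d → ℤ) → Ωz → ℝ) (S : ℝ → Ωw → (Fin d → ℤ)) (T : ℝ) (n : ℕ) (p : Ωz × Ωw) : ENNReal :=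
  ∫⁻ u in Ioc (0 : ℝ) n, ENNReal.ofReal (loT T (z (S u p.2) p.1))

lemma Alo_meas (hz : IsScenery d α μ z) (hS : IsCTSRW d P S) (T : ℝ) (n : ℕ) : Measurable (Alo z S T n) := by
  unfold Alo
  exact Measurable.lintegral_prod_right' (ν := volume.restrict (Ioc (0 : ℝ) n))
    (f := fun q : (Ωz × Ωw) × ℝ => ENNReal.ofReal (loT T (z (S q.2 q.1.2) q.1.1)))
    (ENNReal.measurable_ofReal.comp ((loT_meas T).comp (zS_joint hz hS)))

lemma loT_bd (T r : ℝ) (hT : 0 ≤ T) (hr : 0 ≤ r) : 0 ≤ loT T r ∧ loT T r ≤ T := by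
  unfold loT; split_ifs with h
  · exact ⟨hr, h⟩
  · exact ⟨le_rfl, hT⟩

lemma skel_bound (hz : IsScenery d α μ z) (hS : IsCTSRW d P S) (hα : 1 < α) (G : ℝ) (hG0 : 1 ≤ G)
    (hG : ∀ (n : ℕ) (x y : Fin d → ℤ), ∑ i ∈ Finset.range n, heatKernel d i x y ≤ G)
    (T l M c : ℝ) (hT : 0 ≤ T) (hl : 0 ≤ l) (hM : 0 < M) (hlM : l * M * T ≤ 1) (n k : ℕ) (v : ℝ) (hv : 0 ≤ v) :
    ∫⁻ ω, μ {ζ | c ≤ Bsk z S T n ((ζ, ω), v)} ∂(P 0) ≤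
      ENNReal.ofReal (n * (k.factorial * G ^ k / M ^ k)) +
      ENNReal.ofReal (Real.exp (-l * c) * Real.exp (l * n * ((1 + l * M * T) * ∫ ω, z 0 ω ∂μ))) := by
  have := hz.prob
  have := hS.prob 0
  set E := ENNReal.ofReal (Real.exp (-l * c) * Real.exp (l * n * ((1 + l * M * T) * ∫ ω, z 0 ω ∂μ)))
  have hbad : MeasurableSet {ω | ∃ y, M ≤ visits S v n y 0 ω} := by
    rw [ofPred_exists]
    refine MeasurableSet.iUnion fun y => measurableSet_le measurable_const ?_
    exact (measurable_of_countable (fun n : ℕ => (n : ℝ))).comp (visits_meas hS v n y 0)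
  have h1 : ∀ ω, μ {ζ | c ≤ Bsk z S T n ((ζ, ω), v)} ≤ {ω | ∃ y, M ≤ visits S v n y 0 ω}.indicator 1 ω + E := by
    intro ω
    by_cases hω : ∃ y, M ≤ visits S v n y 0 ω
    · rw [indicator_of_mem (by exact hω)]
      exact prob_le_one.trans le_self_add
    · rw [indicator_of_notMem (by exact hω), zero_add]
      push Not at hω
      exact chernoff hz hα T l hT hl M hlM (fun i => S (v + i) ω) n (fun y => (hω y).le) c
  refine (lintegral_mono h1).trans ?_
  rw [lintegral_add_right _ measurable_const, lintegral_indicator_one hbad, lintegral_const, measure_univ, mul_one]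
  gcongr
  exact bad_bound hS G hG0 hG 0 v hv n k M hM

lemma bulk_bound (hz : IsScenery d α μ z) (hS : IsCTSRW d P S) (T c c' : ℝ) (hT : 0 ≤ T) (hc0 : 0 ≤ c) (hcc : c < c')
    (n : ℕ) (hn : 0 < n) (β : ENNReal) (hβ : ∀ v : ℝ, 0 ≤ v → ∫⁻ ω, μ {ζ | c * n ≤ Bsk z S T n ((ζ, ω), v)} ∂(P 0) ≤ β) :
    ∫⁻ ζ, P 0 {ω | ENNReal.ofReal (c' * n) ≤ Alo z S T n (ζ, ω)} ∂μ ≤ ENNReal.ofReal (T / (c' - c)) * β := by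
  have := hz.prob
  have := hS.prob 0
  have hn' : (0 : ℝ) < n := by exact_mod_cast hn
  have hcc' : 0 < c' - c := by linarith
  set W : Set ((Ωz × Ωw) × ℝ) := {p | c * n ≤ Bsk z S T n p} with hW
  have hWm : MeasurableSet W := measurableSet_le measurable_const (Bsk_meas hz hS T n)
  set L : Ωz × Ωw → ENNReal := fun p => ∫⁻ v in Ioc (0 : ℝ) 1, W.indicator 1 (p, v) with hL
  have hI1 : Measurable (W.indicator (1 : (Ωz × Ωw) × ℝ → ENNReal)) := measurable_one.indicator hWm
  have hLm : Measurable L := Measurable.lintegral_prod_right' (ν := volume.restrict (Ioc (0 : ℝ) 1)) hI1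
  have h1 : ∀ p, Alo z S T n p ≤ ENNReal.ofReal (c * n) + ENNReal.ofReal (n * T) * L p := by
    intro p
    unfold Alo
    rw [lint_split]
    · calc _ ≤ ∫⁻ v in Ioc (0 : ℝ) 1, (ENNReal.ofReal (c * n) + ENNReal.ofReal (n * T) * W.indicator 1 (p, v)) := by
            refine lintegral_mono fun v => ?_
            have e : ∑ j ∈ Finset.range n, ENNReal.ofReal (loT T (z (S (v + j) p.2) p.1)) = ENNReal.ofReal (Bsk z S T n (p, v)) := by
              unfold Bsk
              rw [ENNReal.ofReal_sum_of_nonneg]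
              exact fun j _ => (loT_bd T _ hT (hz.nonneg _ _)).1
            show ∑ j ∈ Finset.range n, ENNReal.ofReal (loT T (z (S (v + j) p.2) p.1)) ≤ _
            rw [e]
            by_cases hp : (p, v) ∈ W
            · rw [indicator_of_mem hp]
              refine le_add_left ?_
              simp only [Pi.one_apply, mul_one]
              apply ENNReal.ofReal_le_ofReal
              unfold Bsk
              refine (Finset.sum_le_sum fun j _ => (loT_bd T _ hT (hz.nonneg _ _)).2).trans ?_
              simp
            · refine le_add_right (ENNReal.ofReal_le_ofReal ?_)
              have : ¬ (c * n ≤ Bsk z S T n (p, v)) := hp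
              linarith
        _ = _ := by
            have hm : Measurable fun v : ℝ => W.indicator (1 : (Ωz × Ωw) × ℝ → ENNReal) (p, v) := hI1.comp measurable_prodMk_left
            rw [lintegral_add_left measurable_const, lintegral_const_mul _ hm]
            simp
            rfl
    · exact ENNReal.measurable_ofReal.comp ((loT_meas T).comp ((zS_joint hz hS).comp (measurable_prodMk_left (x := p))))
  have h2 : ∀ ζ, P 0 {ω | ENNReal.ofReal (c' * n) ≤ Alo z S T n (ζ, ω)} ≤ ENNReal.ofReal (T / (c' - c)) * ∫⁻ ω, L (ζ, ω) ∂(P 0) := by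
    intro ζ
    have hLζ : Measurable fun ω => ENNReal.ofReal (n * T) * L (ζ, ω) := (hLm.comp measurable_prodMk_left).const_mul _
    have hsub : {ω | ENNReal.ofReal (c' * n) ≤ Alo z S T n (ζ, ω)} ⊆ {ω | ENNReal.ofReal ((c' - c) * n) ≤ ENNReal.ofReal (n * T) * L (ζ, ω)} := by
      intro ω hω
      have hω' : ENNReal.ofReal (c' * n) ≤ Alo z S T n (ζ, ω) := hω
      have h3 := hω'.trans (h1 (ζ, ω))
      show ENNReal.ofReal ((c' - c) * n) ≤ _
      rw [show (c' - c) * n = c' * n - c * n by ring, ENNReal.ofReal_sub _ (by positivity)]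
      exact tsub_le_iff_left.2 h3
    refine (measure_mono hsub).trans ((meas_ge_le_lintegral_div hLζ.aemeasurable (by simp; positivity) ENNReal.ofReal_ne_top).trans ?_)
    rw [lintegral_const_mul' _ _ ENNReal.ofReal_ne_top, ENNReal.mul_div_right_comm, ← ENNReal.ofReal_div_of_pos (by positivity)]
    apply le_of_eq
    congr 2
    field_simp
  refine (lintegral_mono h2).trans ?_
  rw [lintegral_const_mul' _ _ ENNReal.ofReal_ne_top]
  gcongr
  have h3 : ∫⁻ ζ, ∫⁻ ω, L (ζ, ω) ∂(P 0) ∂μ = ∫⁻ v in Ioc (0 : ℝ) 1, ∫⁻ ω, μ {ζ | c * n ≤ Bsk z S T n ((ζ, ω), v)} ∂(P 0) := by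
    rw [lintegral_lintegral_swap (f := fun ζ ω => L (ζ, ω)) (by exact hLm.aemeasurable)]
    have h4 : ∀ ω, ∫⁻ ζ, L (ζ, ω) ∂μ = ∫⁻ v in Ioc (0 : ℝ) 1, μ {ζ | c * n ≤ Bsk z S T n ((ζ, ω), v)} := by
      intro ω
      simp only [hL]
      rw [lintegral_lintegral_swap (f := fun ζ v => W.indicator 1 ((ζ, ω), v))
        (by exact (hI1.comp ((measurable_fst.prodMk measurable_const).prodMk measurable_snd)).aemeasurable)]
      refine lintegral_congr fun v => ?_
      have hWs : MeasurableSet {ζ | c * n ≤ Bsk z S T n ((ζ, ω), v)} :=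
        hWm.preimage ((measurable_id.prodMk measurable_const).prodMk measurable_const)
      rw [← lintegral_indicator_one hWs]
      rfl
    simp_rw [h4]
    rw [lintegral_lintegral_swap (f := fun ω v => μ {ζ | c * n ≤ Bsk z S T n ((ζ, ω), v)})]
    have hm : MeasurableSet {q : (Ωw × ℝ) × Ωz | c * n ≤ Bsk z S T n ((q.2, q.1.1), q.1.2)} :=
      hWm.preimage ((measurable_snd.prodMk (measurable_fst.comp measurable_fst)).prodMk (measurable_snd.comp measurable_fst))
    exact (measurable_measure_prodMk_left (ν := μ) hm).aemeasurable
  rw [h3]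
  calc _ ≤ ∫⁻ v in Ioc (0 : ℝ) 1, β := setLIntegral_mono' measurableSet_Ioc fun v hv => hβ v hv.1.le
    _ = β := by simp

end bulk

end


open MeasureTheory ProbabilityTheory Filter Set

noncomputable section

lemma bulk_det (δ : ℝ) (hδ : 0 < δ) (hδ1 : δ < 1) (K g C1 C2 : ℝ) (hg : 0 < g) (hC1 : 0 ≤ C1) (hC2 : 0 ≤ C2)
    (k : ℕ) (hk : K + 5 ≤ k * (δ / 4)) :
    ∀ᶠ x : ℝ in atTop, x ^ (1 - δ) * (x * (C1 / (x ^ (δ / 4)) ^ k) + C2 * Real.exp (-g * x ^ (δ / 2))) ≤ x ^ (-K) * x ^ (-2 : ℝ) := by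
  have h1 : Tendsto (fun x : ℝ => x ^ (2 * (K + 3) / δ) * Real.exp (-g * x)) atTop (nhds 0) :=
    tendsto_rpow_mul_exp_neg_mul_atTop_nhds_zero _ g hg
  have h2 := h1.comp (tendsto_rpow_atTop (show 0 < δ / 2 by positivity))
  have h3 := (h2.eventually (gt_mem_nhds (show (0 : ℝ) < 1 / (2 * (C2 + 1)) by positivity)))
  filter_upwards [h3, eventually_ge_atTop (1 : ℝ), eventually_ge_atTop (2 * C1)] with x hx hx1 hxC
  have hx0 : 0 < x := by linarith
  simp only [Function.comp] at hx
  rw [← Real.rpow_mul hx0.le, show δ / 2 * (2 * (K + 3) / δ) = K + 3 by field_simp] at hx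
  have e1 : x ^ (-K) * x ^ (-2 : ℝ) = x ^ (-(K + 3)) * x := by
    rw [← Real.rpow_add hx0, ← Real.rpow_add_one hx0.ne']; congr 1; ring
  have e2 : x ^ (1 - δ) ≤ x := by
    conv_rhs => rw [← Real.rpow_one x]
    exact Real.rpow_le_rpow_of_exponent_le hx1 (by linarith)
  have e3 : x * (C1 / (x ^ (δ / 4)) ^ k) ≤ C1 * x ^ (-(K + 4)) := by
    rw [← Real.rpow_natCast, ← Real.rpow_mul hx0.le, div_eq_mul_inv, ← Real.rpow_neg hx0.le]
    have : x ^ (-(δ / 4 * k)) ≤ x ^ (-(K + 5)) := Real.rpow_le_rpow_of_exponent_le hx1 (by linarith)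
    calc _ ≤ x * (C1 * x ^ (-(K + 5))) := by gcongr
      _ = C1 * (x ^ (-(K + 5)) * x) := by ring
      _ = _ := by rw [← Real.rpow_add_one hx0.ne']; congr 2; ring
  have e4 : x ^ (-(K + 4)) = x ^ (-(K + 3)) / x := by
    rw [← Real.rpow_sub_one hx0.ne']; congr 1; ring
  have e5 : C2 * Real.exp (-g * x ^ (δ / 2)) ≤ x ^ (-(K + 3)) / 2 := by
    have hp : 0 < x ^ (K + 3) := by positivity
    rw [Real.rpow_neg hx0.le]
    have : Real.exp (-g * x ^ (δ / 2)) ≤ (1 / (2 * (C2 + 1))) * (x ^ (K + 3))⁻¹ := by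
      rw [← div_eq_mul_inv, le_div_iff₀ hp]
      linarith
    calc _ ≤ C2 * ((1 / (2 * (C2 + 1))) * (x ^ (K + 3))⁻¹) := by gcongr
      _ = (C2 / (C2 + 1)) * ((x ^ (K + 3))⁻¹ / 2) := by field_simp
      _ ≤ 1 * ((x ^ (K + 3))⁻¹ / 2) := by
        gcongr
        rw [div_le_one (by positivity)]; linarith
      _ = _ := by ring
  have e6 : C1 * x ^ (-(K + 4)) ≤ x ^ (-(K + 3)) / 2 := by
    rw [e4]
    have hp : 0 < x ^ (-(K + 3)) := by positivity
    rw [mul_div_assoc', div_le_div_iff₀ hx0 (by norm_num)]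
    nlinarith
  rw [e1]
  have hp : 0 < x ^ (-(K + 3)) := by positivity
  calc _ ≤ x * (x ^ (-(K + 3)) / 2 + x ^ (-(K + 3)) / 2) := by
        gcongr
        · linarith
    _ = _ := by ring

variable {d : ℕ} {α : ℝ} {Ωz Ωw : Type*} [MeasurableSpace Ωz] [MeasurableSpace Ωw]
  {μ : Measure Ωz} {z : (Fin d → ℤ) → Ωz → ℝ} {P : (Fin d → ℤ) → Measure Ωw} {S : ℝ → Ωw → (Fin d → ℤ)}

lemma bulk_as (hz : IsScenery d α μ z) (hS : IsCTSRW d P S) (hd : 3 ≤ d) (hα : 1 < α) (δ : ℝ) (hδ : 0 < δ) (hδ1 : δ < 1)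
    (K : ℝ) (c : ℝ) (hc : (∫ ζ, z 0 ζ ∂ μ) < c) :
    ∀ᵐ ζ ∂μ, ∀ᶠ n : ℕ in atTop, P 0 {ω | ENNReal.ofReal (c * n) ≤ Alo z S ((n : ℝ) ^ (1 - δ)) n (ζ, ω)} ≤ ENNReal.ofReal ((n : ℝ) ^ (-K)) := by
  have := hz.prob
  have := hS.prob 0
  obtain ⟨G, hG0, hG⟩ := green_bound hd
  set m := ∫ ζ, z 0 ζ ∂ μ with hm
  have hm0 : 0 ≤ m := integral_nonneg fun ζ => hz.nonneg 0 ζ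
  obtain ⟨c2, hc2, hc2'⟩ := exists_between hc
  obtain ⟨k, hk⟩ := exists_nat_ge ((K + 5) / (δ / 4))
  have hk' : K + 5 ≤ k * (δ / 4) := by rwa [div_le_iff₀ (by positivity)] at hk
  set g := (c2 - m) / 2 with hg
  have hg0 : 0 < g := by rw [hg]; linarith
  have hcc : 0 < c - c2 := by linarith
  refine bc_lemma _ ?_ _ (fun n : ℕ => (n : ℝ) ^ (-2 : ℝ)) ?_ ?_ ?_ ?_
  · intro n
    have hms : MeasurableSet {p : Ωz × Ωw | ENNReal.ofReal (c * n) ≤ Alo z S ((n : ℝ) ^ (1 - δ)) n p} :=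
      measurableSet_le measurable_const (Alo_meas hz hS _ n)
    exact (measurable_measure_prodMk_left (ν := P 0) hms).aemeasurable
  · filter_upwards [eventually_gt_atTop 0] with n hn
    positivity
  · exact Real.summable_nat_rpow.2 (by norm_num)
  · intro n; positivity
  · have h1 := (bulk_det δ hδ hδ1 K g (k.factorial * G ^ k / (c - c2)) (1 / (c - c2)) hg0 (by positivity) (by positivity) k hk')
    have h2 : ∀ᶠ x : ℝ in atTop, (1 + x ^ (-(δ / 4))) * m - c2 ≤ -g := by
      have h3 : Tendsto (fun x : ℝ => (1 + x ^ (-(δ / 4))) * m - c2) atTop (nhds ((1 + 0) * m - c2)) :=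
        ((tendsto_const_nhds.add (tendsto_rpow_neg_atTop (by positivity))).mul_const _).sub_const _
      filter_upwards [h3.eventually (gt_mem_nhds (show (1 + 0) * m - c2 < -g by rw [hg]; linarith))] with x hx using hx.le
    have h4 := tendsto_natCast_atTop_atTop (R := ℝ) |>.eventually (h1.and h2)
    filter_upwards [h4, eventually_gt_atTop 0] with n ⟨hn1, hn2⟩ hn
    have hn' : (0 : ℝ) < n := by exact_mod_cast hn
    have hn1' : (1 : ℝ) ≤ n := by exact_mod_cast hn
    have elMT : (n : ℝ) ^ (-1 + δ / 2) * (n : ℝ) ^ (δ / 4) * (n : ℝ) ^ (1 - δ) = (n : ℝ) ^ (-(δ / 4)) := by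
      rw [← Real.rpow_add hn', ← Real.rpow_add hn']; congr 1; ring
    have eln : (n : ℝ) ^ (-1 + δ / 2) * n = (n : ℝ) ^ (δ / 2) := by
      rw [← Real.rpow_add_one hn'.ne']; congr 1; ring
    refine (bulk_bound hz hS ((n : ℝ) ^ (1 - δ)) c2 c (by positivity) (by linarith) hc2' n hn _ fun v hv =>
      skel_bound hz hS hα G hG0 hG _ ((n : ℝ) ^ (-1 + δ / 2)) ((n : ℝ) ^ (δ / 4)) _ (by positivity) (by positivity) (by positivity)
        (by rw [elMT]; exact Real.rpow_le_one_of_one_le_of_nonpos hn1' (by linarith)) n k v hv).trans ?_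
    rw [← ENNReal.ofReal_add (by positivity) (by positivity), ← ENNReal.ofReal_mul (by positivity)]
    apply ENNReal.ofReal_le_ofReal
    refine le_trans ?_ hn1
    rw [← Real.exp_add, elMT, eln]
    have e : -(n : ℝ) ^ (-1 + δ / 2) * (c2 * n) + (n : ℝ) ^ (δ / 2) * ((1 + (n : ℝ) ^ (-(δ / 4))) * m) ≤ -g * (n : ℝ) ^ (δ / 2) := by
      rw [show -(n : ℝ) ^ (-1 + δ / 2) * (c2 * n) = -(((n : ℝ) ^ (-1 + δ / 2) * n) * c2) by ring, eln]
      have : 0 < (n : ℝ) ^ (δ / 2) := by positivity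
      nlinarith
    calc _ ≤ (n : ℝ) ^ (1 - δ) / (c - c2) * (n * (k.factorial * G ^ k / ((n : ℝ) ^ (δ / 4)) ^ k) + Real.exp (-g * (n : ℝ) ^ (δ / 2))) := by
          gcongr
      _ = _ := by field_simp

end


open MeasureTheory ProbabilityTheory Filter Set

noncomputable section

lemma two_swap (k : ℕ) (e : ℝ) : ((2 : ℝ) ^ e) ^ k = ((2 : ℝ) ^ k) ^ e := by
  rw [← Real.rpow_natCast ((2 : ℝ) ^ e), ← Real.rpow_mul (by norm_num), mul_comm e (k : ℝ),
    Real.rpow_mul (by norm_num : (0:ℝ) ≤ 2), Real.rpow_natCast]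

section heavy
variable {d : ℕ} {α : ℝ} {Ωz Ωw : Type*} [MeasurableSpace Ωz] [MeasurableSpace Ωw]
  {μ : Measure Ωz} {z : (Fin d → ℤ) → Ωz → ℝ} {P : (Fin d → ℤ) → Measure Ωw} {S : ℝ → Ωw → (Fin d → ℤ)}

/-- heavy part of the scenery integral -/
def Hv (z : (Fin d → ℤ) → Ωz → ℝ) (S : ℝ → Ωw → (Fin d → ℤ)) (T s : ℝ) (p : Ωz × Ωw) : ENNReal :=
  ∫⁻ u in Ioc (0 : ℝ) s, hiT T (z (S u p.2) p.1)

lemma hv_joint (hz : IsScenery d α μ z) (hS : IsCTSRW d P S) (T : ℝ) :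
    Measurable fun q : (Ωz × Ωw) × ℝ => hiT T (z (S q.2 q.1.2) q.1.1) :=
  (hiT_meas T).comp (zS_joint hz hS)

lemma Hv_meas (hz : IsScenery d α μ z) (hS : IsCTSRW d P S) (T s : ℝ) : Measurable (Hv z S T s) := by
  unfold Hv
  exact Measurable.lintegral_prod_right' (ν := volume.restrict (Ioc (0 : ℝ) s)) (hv_joint hz hS T)

lemma D_mean (hz : IsScenery d α μ z) (hS : IsCTSRW d P S) (T s : ℝ) (b : ENNReal)
    (hb : ∀ x, ∫⁻ ζ, hiT T (z x ζ) ∂μ ≤ b) :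
    ∫⁻ ζ, ∫⁻ ω, Hv z S T s (ζ, ω) ∂(P 0) ∂μ ≤ ENNReal.ofReal s * b := by
  have := hz.prob
  have := hS.prob 0
  rw [lintegral_lintegral_swap (f := fun ζ ω => Hv z S T s (ζ, ω)) (by exact (Hv_meas hz hS T s).aemeasurable)]
  have h1 : ∀ ω, ∫⁻ ζ, Hv z S T s (ζ, ω) ∂μ ≤ ENNReal.ofReal s * b := by
    intro ω
    simp only [Hv]
    rw [lintegral_lintegral_swap (f := fun ζ u => hiT T (z (S u ω) ζ))
      (by exact ((hv_joint hz hS T).comp ((measurable_fst.prodMk measurable_const).prodMk measurable_snd)).aemeasurable)]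
    calc _ ≤ ∫⁻ u in Ioc (0 : ℝ) s, b := lintegral_mono fun u => hb _
      _ = _ := by simp [mul_comm]
  calc _ ≤ ∫⁻ ω, ENNReal.ofReal s * b ∂(P 0) := lintegral_mono h1
    _ = _ := by simp

lemma heavy_as (hz : IsScenery d α μ z) (hS : IsCTSRW d P S) (δ p ε : ℝ) (hε : 0 < ε) (hp1 : 1 ≤ p) (hp : p < α) :
    ∃ C > 0, ∀ᵐ ζ ∂μ, ∀ᶠ k : ℕ in atTop, ∫⁻ ω, Hv z S (((2 : ℝ) ^ k) ^ (1 - δ)) (2 * 2 ^ k) (ζ, ω) ∂(P 0) ≤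
      ENNReal.ofReal (C * ((2 : ℝ) ^ k) ^ (1 + (1 - δ) * (1 - p) + ε)) := by
  have := hz.prob
  have := hS.prob 0
  obtain ⟨K, hK, hb⟩ := hi_bound hz p hp1 hp
  refine ⟨2 * K, by positivity, bc_lemma _ ?_ _ (fun k => ((2 : ℝ) ^ (-ε)) ^ k) ?_ ?_ ?_ ?_⟩
  · intro k
    exact (Measurable.lintegral_prod_right' (ν := P 0) (Hv_meas hz hS _ _)).aemeasurable
  · exact Eventually.of_forall fun k => by positivity
  · apply summable_geometric_of_lt_one (by positivity)
    exact Real.rpow_lt_one_of_one_lt_of_neg (by norm_num) (by linarith)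
  · intro k; positivity
  · refine Eventually.of_forall fun k => ?_
    have hx : (0 : ℝ) < 2 ^ k := by positivity
    refine (D_mean hz hS _ _ _ (hb _ (by positivity))).trans ?_
    rw [← ENNReal.ofReal_mul (by positivity)]
    apply ENNReal.ofReal_le_ofReal
    apply le_of_eq
    rw [two_swap, 
      mul_assoc (2 * K), ← Real.rpow_add hx, ← Real.rpow_mul hx.le,
      show 1 + (1 - δ) * (1 - p) + ε + -ε = (1 - δ) * (1 - p) + 1 by ring, Real.rpow_add_one hx.ne']
    ring

lemma rwrs_le (hz : IsScenery d α μ z) (hS : IsCTSRW d P S) (ζ : Ωz) (ω : Ωw) (t : ℝ) :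
    ENNReal.ofReal (rwrs d z S t ζ ω) ≤ ∫⁻ u in Ioc (0 : ℝ) t, ENNReal.ofReal (z (S u ω) ζ) := by
  unfold rwrs
  rw [integral_eq_lintegral_of_nonneg_ae (Eventually.of_forall fun u => hz.nonneg _ _)
    ((zS_joint hz hS).comp (measurable_prodMk_left (x := (ζ, ω)))).aestronglyMeasurable]
  exact ENNReal.ofReal_toReal_le

lemma split_le (hz : IsScenery d α μ z) (hS : IsCTSRW d P S) (ζ : Ωz) (ω : Ωw) (t T T' : ℝ) (n : ℕ) (ht : t ≤ n) (hT : T' ≤ T) :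
    ∫⁻ u in Ioc (0 : ℝ) t, ENNReal.ofReal (z (S u ω) ζ) ≤ Alo z S T n (ζ, ω) + Hv z S T' t (ζ, ω) := by
  have hm : Measurable fun u => hiT T' (z (S u ω) ζ) := (hv_joint hz hS T').comp (measurable_prodMk_left (x := (ζ, ω)))
  calc _ ≤ ∫⁻ u in Ioc (0 : ℝ) t, (ENNReal.ofReal (loT T (z (S u ω) ζ)) + hiT T' (z (S u ω) ζ)) := by
        refine lintegral_mono fun u => ?_
        simp only
        unfold loT hiT
        by_cases h : z (S u ω) ζ ≤ T
        · simp [h]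
        · have h' : T' < z (S u ω) ζ := by linarith
          simp [h']
    _ = (∫⁻ u in Ioc (0 : ℝ) t, ENNReal.ofReal (loT T (z (S u ω) ζ))) + Hv z S T' t (ζ, ω) := lintegral_add_right _ hm
    _ ≤ _ := by
        gcongr
        exact lintegral_mono_set (Ioc_subset_Ioc_right ht)

lemma dev_bound (hz : IsScenery d α μ z) (hS : IsCTSRW d P S) (ζ : Ωz) (t T T' c c' η : ℝ) (n : ℕ) (ht0 : 0 < t)
    (ht : t ≤ n) (hT : T' ≤ T) (hc' : 0 ≤ c') (hη : 0 < η) (hc : c' * n + η * t ≤ c * t) (B : Set Ωw) (hB : MeasurableSet B) :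
    P 0 {ω | c * t ≤ rwrs d z S t ζ ω ∧ ω ∈ B} ≤ P 0 {ω | ENNReal.ofReal (c' * n) ≤ Alo z S T n (ζ, ω)} +
      (∫⁻ ω in B, Hv z S T' t (ζ, ω) ∂(P 0)) / ENNReal.ofReal (η * t) := by
  have hm : Measurable fun ω => Hv z S T' t (ζ, ω) := (Hv_meas hz hS T' t).comp measurable_prodMk_left
  have hsub : {ω | c * t ≤ rwrs d z S t ζ ω ∧ ω ∈ B} ⊆ {ω | ENNReal.ofReal (c' * n) ≤ Alo z S T n (ζ, ω)} ∪
      ({ω | ENNReal.ofReal (η * t) ≤ Hv z S T' t (ζ, ω)} ∩ B) := by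
    rintro ω ⟨h1, h2⟩
    by_contra h
    rw [mem_union, not_or] at h
    have h3 : Alo z S T n (ζ, ω) < ENNReal.ofReal (c' * n) := not_le.1 h.1
    have h4 : Hv z S T' t (ζ, ω) < ENNReal.ofReal (η * t) := not_le.1 fun h5 => h.2 ⟨h5, h2⟩
    have h5 := ENNReal.add_lt_add h3 h4
    rw [← ENNReal.ofReal_add (by positivity) (by positivity)] at h5
    have h6 := ((rwrs_le hz hS ζ ω t).trans (split_le hz hS ζ ω t T T' n ht hT)).trans_lt h5
    exact absurd (ENNReal.ofReal_le_ofReal (hc.trans h1)) (not_le.2 h6)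
  refine (measure_mono hsub).trans ((measure_union_le _ _).trans ?_)
  gcongr
  rw [← Measure.restrict_apply' hB]
  exact meas_ge_le_lintegral_div hm.aemeasurable (by simpa using mul_pos hη ht0) ENNReal.ofReal_ne_top

lemma reflect_lint (F : ℝ → ENNReal) (t : ℝ) :
    ∫⁻ u in Ioc (0 : ℝ) t, F (t - u) = ∫⁻ u in Ioc (0 : ℝ) t, F u := by
  have h := (Measure.measurePreserving_sub_left volume t).setLIntegral_comp_preimage_emb
    (MeasurableEquiv.subLeft t).measurableEmbedding F (Ico 0 t)
  rw [← restrict_Ico_eq_restrict_Ioc (a := (0 : ℝ)) (b := t), ← h]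
  rw [restrict_Ico_eq_restrict_Ioc]
  congr 2
  ext u; simp [and_comm]

lemma bridge_heavy (hz : IsScenery d α μ z) (hS : IsCTSRW d P S) (C t : ℝ) (ht : 0 < t)
    (h : ∀ u, 0 ≤ u → u ≤ t → ∀ f : (Fin d → ℤ) → ENNReal, ∫⁻ ω in {ω | S t ω = 0}, f (S u ω) ∂(P 0) ≤
      ENNReal.ofReal (C * t ^ (-((d : ℝ) / 2))) * (∫⁻ ω, f (S u ω) ∂(P 0) + ∫⁻ ω, f (S (t - u) ω) ∂(P 0))) (ζ : Ωz) (T : ℝ) :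
    ∫⁻ ω in {ω | S t ω = 0}, Hv z S T t (ζ, ω) ∂(P 0) ≤
      ENNReal.ofReal (C * t ^ (-((d : ℝ) / 2))) * (2 * ∫⁻ ω, Hv z S T t (ζ, ω) ∂(P 0)) := by
  have := hS.prob 0
  have hj : Measurable fun q : Ωw × ℝ => hiT T (z (S q.2 q.1) ζ) :=
    (hv_joint hz hS T).comp ((measurable_const.prodMk measurable_fst).prodMk measurable_snd)
  have hF : Measurable fun u => ∫⁻ ω, hiT T (z (S u ω) ζ) ∂(P 0) :=
    Measurable.lintegral_prod_right' (ν := P 0) (hj.comp measurable_swap)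
  have e : ∫⁻ ω, Hv z S T t (ζ, ω) ∂(P 0) = ∫⁻ u in Ioc (0 : ℝ) t, ∫⁻ ω, hiT T (z (S u ω) ζ) ∂(P 0) := by
    simp only [Hv]
    rw [lintegral_lintegral_swap (f := fun ω u => hiT T (z (S u ω) ζ)) (by exact hj.aemeasurable)]
  simp only [Hv] at e ⊢
  rw [lintegral_lintegral_swap (f := fun ω u => hiT T (z (S u ω) ζ)) (by exact hj.aemeasurable)]
  calc _ ≤ ∫⁻ u in Ioc (0 : ℝ) t, ENNReal.ofReal (C * t ^ (-((d : ℝ) / 2))) *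
          (∫⁻ ω, hiT T (z (S u ω) ζ) ∂(P 0) + ∫⁻ ω, hiT T (z (S (t - u) ω) ζ) ∂(P 0)) :=
        setLIntegral_mono' measurableSet_Ioc fun u hu => h u hu.1.le hu.2 (fun x => hiT T (z x ζ))
    _ = _ := by
        rw [lintegral_const_mul' _ _ ENNReal.ofReal_ne_top, lintegral_add_left hF, e, two_mul]
        congr 2
        exact reflect_lint (fun u => ∫⁻ ω, hiT T (z (S u ω) ζ) ∂(P 0)) t

end heavy

end


open MeasureTheory ProbabilityTheory Filter Set

noncomputable section

lemma dyadic (p : ℕ → Prop) (hp : ∀ᶠ k in atTop, p k) :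
    ∀ᶠ t : ℝ in atTop, ∃ k, p k ∧ (2 : ℝ) ^ k ≤ t ∧ t < 2 * 2 ^ k := by
  obtain ⟨N, hN⟩ := hp.exists_forall_of_atTop
  filter_upwards [eventually_ge_atTop ((2 : ℝ) ^ N), eventually_ge_atTop (1 : ℝ)] with t ht ht1
  obtain ⟨n, h1, h2⟩ := exists_nat_pow_near ht1 (show (1 : ℝ) < 2 by norm_num)
  refine ⟨n, hN n ?_, h1, by rw [← pow_succ']; exact h2⟩
  have h3 : (2 : ℝ) ^ N < 2 ^ (n + 1) := ht.trans_lt h2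
  have h4 := (pow_lt_pow_iff_right₀ (show (1 : ℝ) < 2 by norm_num)).1 h3
  omega

lemma rpow_compare (x t e : ℝ) (hx : 0 < x) (h1 : x ≤ t) (h2 : t ≤ 2 * x) :
    x ^ e ≤ 2 ^ |e| * t ^ e ∧ t ^ e ≤ 2 ^ |e| * x ^ e := by
  have ht : 0 < t := by linarith
  have key : ∀ a b : ℝ, 0 < a → 0 < b → a ≤ 2 * b → b ≤ 2 * a → a ^ e ≤ 2 ^ |e| * b ^ e := by
    intro a b ha hb hab hba
    rcases le_total 0 e with he | he
    · rw [abs_of_nonneg he, ← Real.mul_rpow (by norm_num) hb.le]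
      exact Real.rpow_le_rpow ha.le hab he
    · rw [abs_of_nonpos he]
      have h : (2 * a) ^ e ≤ b ^ e := Real.rpow_le_rpow_of_nonpos hb hba he
      rw [Real.mul_rpow (by norm_num) ha.le] at h
      have h2 : (2 : ℝ) ^ (-e) * 2 ^ e = 1 := by rw [← Real.rpow_add (by norm_num)]; simp
      calc a ^ e = (2 : ℝ) ^ (-e) * 2 ^ e * a ^ e := by rw [h2, one_mul]
        _ = (2 : ℝ) ^ (-e) * (2 ^ e * a ^ e) := by ring
        _ ≤ _ := by gcongr
  exact ⟨key x t hx ht (by linarith) h2, key t x ht hx h2 (by linarith)⟩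

lemma det2 (K e ε C : ℝ) (hε : 0 < ε) (hK : -K ≤ e) :
    ∀ᶠ t : ℝ in atTop, t ^ (-K) + C * t ^ (e + ε / 2) ≤ t ^ (e + ε) := by
  filter_upwards [(tendsto_rpow_atTop (show 0 < ε / 2 by positivity)).eventually (eventually_ge_atTop (1 + C)), eventually_ge_atTop (1 : ℝ)] with t ht ht1
  have ht0 : 0 < t := by linarith
  have h1 : t ^ (-K) ≤ t ^ (e + ε / 2) := Real.rpow_le_rpow_of_exponent_le ht1 (by linarith)
  have h2 : t ^ (e + ε) = t ^ (e + ε / 2) * t ^ (ε / 2) := by rw [← Real.rpow_add ht0]; congr 1; ring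
  rw [h2]
  have h3 : 0 < t ^ (e + ε / 2) := by positivity
  nlinarith

section upper
variable {d : ℕ} {α : ℝ} {Ωz Ωw : Type*} [MeasurableSpace Ωz] [MeasurableSpace Ωw]
  {μ : Measure Ωz} {z : (Fin d → ℤ) → Ωz → ℝ} {P : (Fin d → ℤ) → Measure Ωw} {S : ℝ → Ωw → (Fin d → ℤ)}

lemma upper_as (hd : 3 ≤ d) (hz : IsScenery d α μ z) (hS : IsCTSRW d P S) (hα : 1 < α)
    (c : ℝ) (hc : (∫ ζ, z 0 ζ ∂ μ) < c) (ε : ℝ) (hε : 0 < ε) :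
    ∀ᵐ ζ ∂μ, ∀ᶠ t : ℝ in atTop, P 0 {ω | c * t ≤ rwrs d z S t ζ ω} ≤ ENNReal.ofReal (t ^ (-α + 1 + ε)) ∧
      P 0 {ω | c * t ≤ rwrs d z S t ζ ω ∧ S t ω = 0} ≤ ENNReal.ofReal (t ^ (-α + 1 - d / 2 + ε)) := by
  have := hz.prob
  have := hS.prob 0
  have hm0 : 0 ≤ ∫ ζ, z 0 ζ ∂ μ := integral_nonneg fun ζ => hz.nonneg 0 ζ
  obtain ⟨c', hc1, hc2⟩ := exists_between hc
  have hc'0 : 0 ≤ c' := by linarith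
  set η := (c - c') / 2 with hη
  have hη0 : 0 < η := by rw [hη]; linarith
  set θ := min ((α - 1) / 2) (ε / 8) with hθ
  have hθ1 : θ ≤ (α - 1) / 2 := min_le_left _ _
  have hθ2 : θ ≤ ε / 8 := min_le_right _ _
  have hθ0 : 0 < θ := lt_min (by linarith) (by linarith)
  set δ := min (1 / 2) (ε / (8 * α)) with hδ
  have hδ1 : δ ≤ 1 / 2 := min_le_left _ _
  have hδ2 : δ ≤ ε / (8 * α) := min_le_right _ _
  have hδ0 : 0 < δ := lt_min (by norm_num) (by positivity)
  have hδα : δ * α ≤ ε / 8 := by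
    rw [le_div_iff₀ (by positivity)] at hδ2; linarith
  obtain ⟨C, hC, hheavy⟩ := heavy_as hz hS δ (α - θ) (ε / 8) (by positivity) (by linarith) (by linarith)
  obtain ⟨Cb, hCb, hbr⟩ := bridge_bound (Ω := Ωw) (d := d) (by omega)
  set q := 2 - α + ε / 2 with hq
  have hqq : 1 + (1 - δ) * (1 - (α - θ)) + ε / 8 ≤ q := by
    rw [hq]; nlinarith
  set C2 := C * 2 ^ |q| / η with hC2
  have hC20 : 0 < C2 := by positivity
  filter_upwards [bulk_as hz hS hd hα δ hδ0 (by linarith) (α + d) c' hc1, hheavy] with ζ hζ1 hζ2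
  have hfl : Tendsto (fun t : ℝ => ⌊t⌋₊ + 1) atTop atTop :=
    (tendsto_add_atTop_nat 1).comp tendsto_nat_floor_atTop
  have hd0 : (3 : ℝ) ≤ d := by exact_mod_cast hd
  filter_upwards [hfl.eventually hζ1, dyadic _ hζ2, eventually_ge_atTop (1 : ℝ), eventually_ge_atTop (c' / η),
    det2 (α + d) (-α + 1) ε C2 hε (by linarith), det2 (α + d) (-α + 1 - d / 2) ε (2 * Cb * C2) hε (by linarith)]
    with t h1 ⟨k, h2, h3, h4⟩ ht1 htc hd1 hd2
  have ht0 : 0 < t := by linarith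
  set n := ⌊t⌋₊ + 1 with hn
  have hn1 : t ≤ n := by rw [hn]; push_cast; exact (Nat.lt_floor_add_one t).le
  have hn2 : (n : ℝ) ≤ t + 1 := by rw [hn]; push_cast; linarith [Nat.floor_le ht0.le]
  have hx0 : (0 : ℝ) < 2 ^ k := by positivity
  have hx1 : (1 : ℝ) ≤ 2 ^ k := one_le_pow₀ (by norm_num)
  have hT : ((2 : ℝ) ^ k) ^ (1 - δ) ≤ (n : ℝ) ^ (1 - δ) := Real.rpow_le_rpow hx0.le (h3.trans hn1) (by linarith)
  have hcc : c' * n + η * t ≤ c * t := by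
    have : c' ≤ η * t := by rw [div_le_iff₀ hη0] at htc; linarith
    have h5 : c = c' + 2 * η := by rw [hη]; ring
    nlinarith
  have hK : (n : ℝ) ^ (-(α + d)) ≤ t ^ (-(α + d)) := Real.rpow_le_rpow_of_nonpos ht0 hn1 (by linarith)
  have hD : ∫⁻ ω, Hv z S (((2 : ℝ) ^ k) ^ (1 - δ)) t (ζ, ω) ∂(P 0) ≤ ENNReal.ofReal (C2 * t ^ (-α + 1 + ε / 2) * (η * t)) := by
    calc _ ≤ ∫⁻ ω, Hv z S (((2 : ℝ) ^ k) ^ (1 - δ)) (2 * 2 ^ k) (ζ, ω) ∂(P 0) := by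
          refine lintegral_mono fun ω => ?_
          exact lintegral_mono_set (Ioc_subset_Ioc_right h4.le)
      _ ≤ _ := h2
      _ ≤ _ := by
          apply ENNReal.ofReal_le_ofReal
          calc _ ≤ C * ((2 : ℝ) ^ k) ^ q := by
                gcongr
            _ ≤ C * (2 ^ |q| * t ^ q) := by gcongr; exact (rpow_compare _ t q hx0 h3 h4.le).1
            _ = C2 * η * t ^ q := by rw [hC2]; field_simp
            _ = C2 * η * (t ^ (-α + 1 + ε / 2) * t) := by
                rw [← Real.rpow_add_one ht0.ne']; congr 2; rw [hq]; ring
            _ = _ := by ring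
  have hηt : 0 < η * t := by positivity
  constructor
  · have h5 := dev_bound hz hS ζ t ((n : ℝ) ^ (1 - δ)) (((2 : ℝ) ^ k) ^ (1 - δ)) c c' η n ht0 hn1 hT hc'0 hη0 hcc univ MeasurableSet.univ
    simp only [mem_univ, and_true, Measure.restrict_univ] at h5
    refine h5.trans ?_
    calc _ ≤ ENNReal.ofReal (t ^ (-(α + d))) + ENNReal.ofReal (C2 * t ^ (-α + 1 + ε / 2) * (η * t)) / ENNReal.ofReal (η * t) := by
          gcongr
          exact h1.trans (ENNReal.ofReal_le_ofReal hK)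
      _ = ENNReal.ofReal (t ^ (-(α + d)) + C2 * t ^ (-α + 1 + ε / 2)) := by
          rw [← ENNReal.ofReal_div_of_pos hηt, ENNReal.ofReal_add (by positivity) (by positivity), mul_div_assoc, div_self hηt.ne', mul_one]
      _ ≤ _ := ENNReal.ofReal_le_ofReal hd1
  · have h5 := dev_bound hz hS ζ t ((n : ℝ) ^ (1 - δ)) (((2 : ℝ) ^ k) ^ (1 - δ)) c c' η n ht0 hn1 hT hc'0 hη0 hcc {ω | S t ω = 0} (ev_meas hS t 0)
    refine h5.trans ?_
    have h6 := bridge_heavy hz hS Cb t ht0 (fun u hu hut f => hbr P S hS u t ht0 hu hut f) ζ (((2 : ℝ) ^ k) ^ (1 - δ))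
    have h7 : ∫⁻ ω in {ω | S t ω = 0}, Hv z S (((2 : ℝ) ^ k) ^ (1 - δ)) t (ζ, ω) ∂(P 0) ≤
        ENNReal.ofReal (2 * Cb * C2 * t ^ (-α + 1 - d / 2 + ε / 2) * (η * t)) := by
      refine h6.trans ?_
      calc _ ≤ ENNReal.ofReal (Cb * t ^ (-((d : ℝ) / 2))) * (ENNReal.ofReal 2 * ENNReal.ofReal (C2 * t ^ (-α + 1 + ε / 2) * (η * t))) := by
            gcongr
            simp
        _ = _ := by
            rw [← ENNReal.ofReal_mul (by norm_num), ← ENNReal.ofReal_mul (by positivity)]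
            congr 1
            have e : t ^ (-α + 1 - (d : ℝ) / 2 + ε / 2) = t ^ (-((d : ℝ) / 2)) * t ^ (-α + 1 + ε / 2) := by
              rw [← Real.rpow_add ht0]; congr 1; ring
            rw [e]
            ring
    calc _ ≤ ENNReal.ofReal (t ^ (-(α + d))) + ENNReal.ofReal (2 * Cb * C2 * t ^ (-α + 1 - d / 2 + ε / 2) * (η * t)) / ENNReal.ofReal (η * t) := by
          gcongr
          exact h1.trans (ENNReal.ofReal_le_ofReal hK)
      _ = ENNReal.ofReal (t ^ (-(α + d)) + 2 * Cb * C2 * t ^ (-α + 1 - d / 2 + ε / 2)) := by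
          rw [← ENNReal.ofReal_div_of_pos hηt, ENNReal.ofReal_add (by positivity) (by positivity), mul_div_assoc, div_self hηt.ne', mul_one]
      _ ≤ _ := ENNReal.ofReal_le_ofReal hd2

end upper

end


open MeasureTheory ProbabilityTheory Filter Set

noncomputable section

section scen
variable {d : ℕ} {α : ℝ} {Ωz Ωw : Type*} [MeasurableSpace Ωz] [MeasurableSpace Ωw]
  {μ : Measure Ωz} {z : (Fin d → ℤ) → Ωz → ℝ} {P : (Fin d → ℤ) → Measure Ωw} {S : ℝ → Ωw → (Fin d → ℤ)}

def box (d r : ℕ) : Finset (Fin d → ℤ) := Fintype.piFinset fun _ => Finset.Icc (-(r : ℤ)) r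

lemma box_card (d r : ℕ) : (box d r).card = (2 * r + 1) ^ d := by
  unfold box
  rw [Fintype.card_piFinset]
  simp only [Int.card_Icc, Finset.prod_const, Finset.card_univ, Fintype.card_fin]
  congr 1
  omega

lemma box_mem (d r : ℕ) (y : Fin d → ℤ) (hy : y ∈ box d r) (i : Fin d) : |((y i : ℤ) : ℝ)| ≤ r := by
  unfold box at hy
  have := Fintype.mem_piFinset.1 hy i
  rw [Finset.mem_Icc] at this
  rw [abs_le]
  exact ⟨by exact_mod_cast this.1, by exact_mod_cast this.2⟩

/-- indicator of a high site -/
def Ih (L r : ℝ) : ℝ := if L < r then 1 else 0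

lemma Ih_meas (L : ℝ) : Measurable (Ih L) := Measurable.ite measurableSet_Ioi measurable_const measurable_const

lemma Ih_nonneg (L r : ℝ) : 0 ≤ Ih L r := by unfold Ih; split_ifs <;> norm_num

lemma Ih_abs (L r : ℝ) : |Ih L r| ≤ 1 := by unfold Ih; split_ifs <;> norm_num

lemma Ih_sq (L r : ℝ) : Ih L r * Ih L r = Ih L r := by unfold Ih; split_ifs <;> norm_num

def piL (μ : Measure Ωz) (z : (Fin d → ℤ) → Ωz → ℝ) (L : ℝ) : ℝ := (μ {ζ | L < z 0 ζ}).toReal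

lemma Ih_int (hz : IsScenery d α μ z) (L : ℝ) (y) : ∫ ζ, Ih L (z y ζ) ∂μ = piL μ z L := by
  have e : ∫ ζ, Ih L (z y ζ) ∂μ = ∫ ζ, Ih L (z 0 ζ) ∂μ := ((hz.ident y).comp (Ih_meas L)).integral_eq
  rw [e]
  have hm : MeasurableSet {ζ | L < z 0 ζ} := measurableSet_lt measurable_const (hz.meas 0)
  have : (fun ζ => Ih L (z 0 ζ)) = {ζ | L < z 0 ζ}.indicator 1 := by
    ext ζ
    simp only [Ih, indicator, Pi.one_apply]
    rfl
  rw [this, integral_indicator_one hm]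
  rfl

lemma Ih_indep (hz : IsScenery d α μ z) (L : ℝ) (y y') (h : y ≠ y') :
    IndepFun (fun ζ => Ih L (z y ζ)) (fun ζ => Ih L (z y' ζ)) μ :=
  (hz.indep.indepFun h).comp (Ih_meas L) (Ih_meas L)

lemma Ih_int2 (hz : IsScenery d α μ z) (L : ℝ) (y y') (h : y ≠ y') :
    ∫ ζ, Ih L (z y ζ) * Ih L (z y' ζ) ∂μ = piL μ z L ^ 2 := by
  have := (Ih_indep hz L y y' h).integral_mul_eq_mul_integral ((Ih_meas L).comp (hz.meas y)).aestronglyMeasurable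
    ((Ih_meas L).comp (hz.meas y')).aestronglyMeasurable
  rw [Ih_int hz, Ih_int hz, ← sq] at this
  exact this

lemma N_cheb (hz : IsScenery d α μ z) (Λ : Finset (Fin d → ℤ)) (L : ℝ) (h : 0 < Λ.card * piL μ z L) :
    μ {ζ | ∑ y ∈ Λ, Ih L (z y ζ) < Λ.card * piL μ z L / 2} ≤ ENNReal.ofReal (4 / (Λ.card * piL μ z L)) := by
  have := hz.prob
  set X : (Fin d → ℤ) → Ωz → ℝ := fun y ζ => Ih L (z y ζ) with hX
  have hXm : ∀ y, Measurable (X y) := fun y => (Ih_meas L).comp (hz.meas y)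
  have hL2 : ∀ y, MemLp (X y) 2 μ := fun y =>
    MemLp.of_bound (hXm y).aestronglyMeasurable 1 (Eventually.of_forall fun ζ => by simpa using Ih_abs L (z y ζ))
  have hv : variance (∑ y ∈ Λ, X y) μ ≤ Λ.card * piL μ z L := by
    rw [IndepFun.variance_sum (fun y _ => hL2 y) (fun y _ y' _ hy => Ih_indep hz L y y' hy)]
    have : ∀ y ∈ Λ, variance (X y) μ ≤ piL μ z L := by
      intro y _
      refine (variance_le_expectation_sq (hXm y).aestronglyMeasurable).trans (le_of_eq ?_)
      rw [← Ih_int hz L y]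
      refine integral_congr_ae (Eventually.of_forall fun ζ => ?_)
      simp only [Pi.pow_apply, sq, hX, Ih_sq]
    refine (Finset.sum_le_sum this).trans (by simp)
  have hE : ∫ ζ, (∑ y ∈ Λ, X y) ζ ∂μ = Λ.card * piL μ z L := by
    simp only [Finset.sum_apply]
    rw [integral_finsetSum _ fun y _ => (hL2 y).integrable (by norm_num)]
    simp only [hX, Ih_int hz]
    simp
  have hm2 : MemLp (∑ y ∈ Λ, X y) 2 μ := memLp_finsetSum' _ fun y _ => hL2 y
  have hc := meas_ge_le_variance_div_sq hm2 (half_pos h)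
  refine (measure_mono ?_).trans (hc.trans (ENNReal.ofReal_le_ofReal ?_))
  · intro ζ hζ
    have hζ' : ∑ y ∈ Λ, Ih L (z y ζ) < Λ.card * piL μ z L / 2 := hζ
    show _ ≤ |(_ : ℝ)|
    rw [hE, Finset.sum_apply]
    refine le_abs.2 ?_
    right
    simp only [hX]
    linarith
  · calc _ ≤ Λ.card * piL μ z L / (Λ.card * piL μ z L / 2) ^ 2 := by gcongr
      _ = _ := by field_simp; norm_num

def gn (d m : ℕ) (y y' : Fin d → ℤ) : ℝ := ∑ i ∈ Finset.range m, heatKernel d i y y'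

lemma gn_nonneg (m : ℕ) (y y' : Fin d → ℤ) : 0 ≤ gn d m y y' :=
  Finset.sum_nonneg fun i _ => heat_nonneg d i (by positivity) y y'

lemma gn_row (hS : IsCTSRW d P S) (m : ℕ) (Λ : Finset (Fin d → ℤ)) (y) : ∑ y' ∈ Λ, gn d m y y' ≤ m := by
  unfold gn
  rw [Finset.sum_comm]
  have h : ∀ i ∈ Finset.range m, ∑ y' ∈ Λ, heatKernel d i y y' ≤ 1 := by
    intro i _
    have h1 := ENNReal.sum_le_tsum (f := fun y' => ENNReal.ofReal (heatKernel d i y y')) Λ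
    rw [heat_sum hS y i (by positivity), ← ENNReal.ofReal_sum_of_nonneg (fun y' _ => heat_nonneg d i (by positivity) y y'), ← ENNReal.ofReal_one] at h1
    exact (ENNReal.ofReal_le_ofReal_iff (by norm_num)).1 h1
  exact (Finset.sum_le_sum h).trans (by simp)

def Qs (z : (Fin d → ℤ) → Ωz → ℝ) (Λ : Finset (Fin d → ℤ)) (L : ℝ) (m : ℕ) (ζ : Ωz) : ℝ :=
  ∑ y ∈ Λ, ∑ y' ∈ Λ, Ih L (z y ζ) * Ih L (z y' ζ) * gn d m y y'

lemma Qs_nonneg (Λ : Finset (Fin d → ℤ)) (L : ℝ) (m : ℕ) (ζ : Ωz) : 0 ≤ Qs z Λ L m ζ :=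
  Finset.sum_nonneg fun _ _ => Finset.sum_nonneg fun _ _ => mul_nonneg (mul_nonneg (Ih_nonneg _ _) (Ih_nonneg _ _)) (gn_nonneg _ _ _)

lemma Qs_meas (hz : IsScenery d α μ z) (Λ : Finset (Fin d → ℤ)) (L : ℝ) (m : ℕ) : Measurable (Qs z Λ L m) := by
  unfold Qs
  refine Finset.measurable_fun_sum _ fun y _ => Finset.measurable_fun_sum _ fun y' _ => ?_
  exact ((((Ih_meas L).comp (hz.meas y))).mul ((Ih_meas L).comp (hz.meas y'))).mul_const _

lemma Q_mean (hz : IsScenery d α μ z) (hS : IsCTSRW d P S) (G : ℝ) (hG0 : 1 ≤ G)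
    (hG : ∀ (n : ℕ) (x y : Fin d → ℤ), ∑ i ∈ Finset.range n, heatKernel d i x y ≤ G)
    (Λ : Finset (Fin d → ℤ)) (L : ℝ) (m : ℕ) :
    ∫⁻ ζ, ENNReal.ofReal (Qs z Λ L m ζ) ∂μ ≤ ENNReal.ofReal (Λ.card * piL μ z L * (G + piL μ z L * m)) := by
  have := hz.prob
  have hπ : 0 ≤ piL μ z L := ENNReal.toReal_nonneg
  have hi : ∀ y y', Integrable (fun ζ => Ih L (z y ζ) * Ih L (z y' ζ) * gn d m y y') μ := by
    intro y y'
    refine Integrable.mul_const ?_ _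
    refine bdd_integrable (((Ih_meas L).comp (hz.meas y)).mul ((Ih_meas L).comp (hz.meas y'))) 1 fun ζ => ?_
    rw [abs_mul]
    exact mul_le_one₀ (Ih_abs _ _) (abs_nonneg _) (Ih_abs _ _)
  have hQi : Integrable (Qs z Λ L m) μ := by
    unfold Qs
    exact integrable_finsetSum _ fun y _ => integrable_finsetSum _ fun y' _ => hi y y'
  rw [← ofReal_integral_eq_lintegral_ofReal hQi (Eventually.of_forall fun ζ => Qs_nonneg Λ L m ζ)]
  apply ENNReal.ofReal_le_ofReal
  unfold Qs
  rw [integral_finsetSum _ fun y _ => integrable_finsetSum _ fun y' _ => hi y y']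
  have h1 : ∀ y ∈ Λ, ∫ ζ, ∑ y' ∈ Λ, Ih L (z y ζ) * Ih L (z y' ζ) * gn d m y y' ∂μ ≤ piL μ z L * (G + piL μ z L * m) := by
    intro y hy
    rw [integral_finsetSum _ fun y' _ => hi y y']
    have h2 : ∀ y' ∈ Λ, ∫ ζ, Ih L (z y ζ) * Ih L (z y' ζ) * gn d m y y' ∂μ ≤
        (if y' = y then piL μ z L * G else 0) + piL μ z L ^ 2 * gn d m y y' := by
      intro y' _
      rw [integral_mul_const]
      split_ifs with h
      · subst h
        simp only [Ih_sq]
        rw [Ih_int hz]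
        have h3 : gn d m y' y' ≤ G := hG m y' y'
        have := gn_nonneg m y' y'
        have : piL μ z L * gn d m y' y' ≤ piL μ z L * G := by gcongr
        nlinarith [sq_nonneg (piL μ z L)]
      · rw [Ih_int2 hz L y y' (Ne.symm h), zero_add]
    refine (Finset.sum_le_sum h2).trans ?_
    rw [Finset.sum_add_distrib, ← Finset.mul_sum, Finset.sum_ite_eq' Λ y, if_pos hy]
    have := gn_row hS m Λ y
    nlinarith [sq_nonneg (piL μ z L)]
  refine (Finset.sum_le_sum h1).trans (le_of_eq ?_)
  simp; ring

end scen

end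


open MeasureTheory ProbabilityTheory Filter Set

noncomputable section

section scen2
variable {d : ℕ} {α : ℝ} {Ωz Ωw : Type*} [MeasurableSpace Ωz] [MeasurableSpace Ωw]
  {μ : Measure Ωz} {z : (Fin d → ℤ) → Ωz → ℝ} {P : (Fin d → ℤ) → Measure Ωw} {S : ℝ → Ωw → (Fin d → ℤ)}

def bx (d : ℕ) (ρ N : ℝ) : Finset (Fin d → ℤ) := box d ⌊ρ * √N⌋₊

lemma boxpi (hz : IsScenery d α μ z) (hα : 1 < α) (C0 ρ ε : ℝ) (hC0 : 0 < C0) (hρ : 0 < ρ) (hε : 0 < ε) :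
    ∃ c0 > 0, ∀ᶠ N : ℝ in atTop, c0 * N ^ ((d : ℝ) / 2 - α - ε) ≤ (bx d ρ N).card * piL μ z (C0 * N) := by
  refine ⟨ρ ^ d * C0 ^ (-α - ε), by positivity, ?_⟩
  have h := (tail_bounds hz (by linarith) ε hε)
  have ht : Tendsto (fun N : ℝ => C0 * N) atTop atTop := tendsto_id.const_mul_atTop hC0
  filter_upwards [ht.eventually h, eventually_gt_atTop 0] with N h1 hN
  have h2 : ρ ^ d * N ^ ((d : ℝ) / 2) ≤ (bx d ρ N).card := by
    unfold bx
    rw [box_card]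
    push_cast
    have e : N ^ ((d : ℝ) / 2) = (√N) ^ d := by
      rw [Real.sqrt_eq_rpow, ← Real.rpow_natCast, ← Real.rpow_mul hN.le]; congr 1; ring
    rw [e, ← mul_pow]
    gcongr
    have := Nat.lt_floor_add_one (ρ * √N)
    have h3 : (0 : ℝ) ≤ (⌊ρ * √N⌋₊ : ℝ) := by positivity
    linarith
  have e2 : N ^ ((d : ℝ) / 2 - α - ε) = N ^ ((d : ℝ) / 2) * N ^ (-α - ε) := by
    rw [← Real.rpow_add hN]; congr 1; ring
  calc _ = (ρ ^ d * N ^ ((d : ℝ) / 2)) * (C0 * N) ^ (-α - ε) := by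
        rw [e2, Real.mul_rpow hC0.le hN.le]; ring
    _ ≤ _ := by
        gcongr
        exact h1.1

lemma two_tend : Tendsto (fun k : ℕ => (2 : ℝ) ^ k) atTop atTop := tendsto_pow_atTop_atTop_of_one_lt (by norm_num)

lemma geo_summable (θ : ℝ) (hθ : 0 < θ) : Summable fun k : ℕ => ((2 : ℝ) ^ k) ^ (-θ) := by
  simp_rw [← two_swap]
  exact summable_geometric_of_lt_one (by positivity) (Real.rpow_lt_one_of_one_lt_of_neg (by norm_num) (by linarith))

lemma scen_as (hz : IsScenery d α μ z) (hS : IsCTSRW d P S) (hd : 3 ≤ d) (hα : 1 < α) (hαd : α < d / 2)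
    (C0 ρ ε : ℝ) (hC0 : 0 < C0) (hρ : 0 < ρ) (hε : 0 < ε) :
    ∃ C > 0, ∀ᵐ ζ ∂μ, ∀ᶠ k : ℕ in atTop,
      (bx d ρ (2 ^ k)).card * piL μ z (C0 * 2 ^ k) / 2 ≤ ∑ y ∈ bx d ρ (2 ^ k), Ih (C0 * 2 ^ k) (z y ζ) ∧
      Qs z (bx d ρ (2 ^ k)) (C0 * 2 ^ k) (2 ^ k) ζ ≤ C * ((2 : ℝ) ^ k) ^ ε * ((bx d ρ (2 ^ k)).card * piL μ z (C0 * 2 ^ k)) ∧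
      ((2 : ℝ) ^ k) ^ ((d : ℝ) / 2 - α - ε) ≤ C * ((bx d ρ (2 ^ k)).card * piL μ z (C0 * 2 ^ k)) := by
  have := hz.prob
  obtain ⟨G, hG0, hG⟩ := green_bound hd
  obtain ⟨c0, hc0, hb0⟩ := boxpi hz hα C0 ρ ε hC0 hρ hε
  set θ := ((d : ℝ) / 2 - α) / 2 with hθ
  have hθ0 : 0 < θ := by rw [hθ]; linarith
  obtain ⟨c1, hc1, hb1⟩ := boxpi hz hα C0 ρ θ hC0 hρ hθ0
  have e1 : (d : ℝ) / 2 - α - θ = θ := by rw [hθ]; ring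
  rw [e1] at hb1
  have hb0' := two_tend.eventually hb0
  have hb1' := two_tend.eventually hb1
  set m := ∫ ζ, z 0 ζ ∂μ with hm
  have hm0 : 0 ≤ m := integral_nonneg fun ζ => hz.nonneg 0 ζ
  have hmk : ∀ N : ℝ, 0 < N → piL μ z (C0 * N) * N ≤ m / C0 := by
    intro N hN
    have h := mul_meas_ge_le_integral_of_nonneg (μ := μ) (f := z 0) (Eventually.of_forall (hz.nonneg 0)) (z_integrable hz hα 0) (C0 * N)
    have h2 : piL μ z (C0 * N) ≤ μ.real {x | C0 * N ≤ z 0 x} := by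
      refine ENNReal.toReal_mono (measure_ne_top _ _) (measure_mono fun ζ hζ => ?_)
      exact (show C0 * N < z 0 ζ from hζ).le
    rw [le_div_iff₀ hC0]
    calc _ = C0 * N * piL μ z (C0 * N) := by ring
      _ ≤ C0 * N * μ.real {x | C0 * N ≤ z 0 x} := by gcongr
      _ ≤ m := h
  have hA : ∀ᵐ ζ ∂μ, ∀ᶠ k : ℕ in atTop,
      {ζ | ∑ y ∈ bx d ρ (2 ^ k), Ih (C0 * 2 ^ k) (z y ζ) < (bx d ρ (2 ^ k)).card * piL μ z (C0 * 2 ^ k) / 2}.indicator (1 : Ωz → ENNReal) ζ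
        ≤ ENNReal.ofReal (1 / 2) := by
    have hms : ∀ k : ℕ, MeasurableSet {ζ | ∑ y ∈ bx d ρ (2 ^ k), Ih (C0 * 2 ^ k) (z y ζ) < (bx d ρ (2 ^ k)).card * piL μ z (C0 * 2 ^ k) / 2} := by
      intro k
      exact measurableSet_lt (Finset.measurable_fun_sum _ fun y _ => (Ih_meas _).comp (hz.meas y)) measurable_const
    refine bc_lemma _ (fun k => (measurable_one.indicator (hms k)).aemeasurable) (fun _ => 1 / 2)
      (fun k => 8 / c1 * ((2 : ℝ) ^ k) ^ (-θ)) (Eventually.of_forall fun _ => by norm_num)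
      ((geo_summable θ hθ0).mul_left _) (fun k => by positivity) ?_
    filter_upwards [hb1'] with k hk
    rw [lintegral_indicator_one (hms k)]
    have hpos : 0 < c1 * ((2 : ℝ) ^ k) ^ θ := by positivity
    refine (N_cheb hz _ _ (hpos.trans_le hk)).trans (ENNReal.ofReal_le_ofReal ?_)
    calc _ ≤ 4 / (c1 * ((2 : ℝ) ^ k) ^ θ) := by gcongr
      _ = _ := by rw [Real.rpow_neg (by positivity)]; field_simp; norm_num
  have hB : ∀ᵐ ζ ∂μ, ∀ᶠ k : ℕ in atTop, ENNReal.ofReal (Qs z (bx d ρ (2 ^ k)) (C0 * 2 ^ k) (2 ^ k) ζ) ≤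
      ENNReal.ofReal ((G + m / C0) * ((2 : ℝ) ^ k) ^ ε * ((bx d ρ (2 ^ k)).card * piL μ z (C0 * 2 ^ k))) := by
    refine bc_lemma _ (fun k => (ENNReal.measurable_ofReal.comp (Qs_meas hz _ _ _)).aemeasurable) _
      (fun k => ((2 : ℝ) ^ k) ^ (-ε)) ?_ (geo_summable ε hε) (fun k => by positivity) ?_
    · filter_upwards [hb1'] with k hk
      have hpos : 0 < c1 * ((2 : ℝ) ^ k) ^ θ := by positivity
      have := hpos.trans_le hk
      positivity
    · filter_upwards [hb1'] with k hk
      refine (Q_mean hz hS G hG0 hG _ _ _).trans (ENNReal.ofReal_le_ofReal ?_)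
      have hx : (0 : ℝ) < 2 ^ k := by positivity
      have h3 := hmk (2 ^ k) hx
      have e3 : ((2 : ℝ) ^ k) ^ ε * ((2 : ℝ) ^ k) ^ (-ε) = 1 := by rw [← Real.rpow_add hx]; simp
      have hpos : 0 < c1 * ((2 : ℝ) ^ k) ^ θ := by positivity
      have hw := hpos.trans_le hk
      push_cast
      calc _ ≤ (bx d ρ (2 ^ k)).card * piL μ z (C0 * 2 ^ k) * (G + m / C0) := by gcongr
        _ = (G + m / C0) * (((2 : ℝ) ^ k) ^ ε * ((2 : ℝ) ^ k) ^ (-ε)) * ((bx d ρ (2 ^ k)).card * piL μ z (C0 * 2 ^ k)) := by rw [e3]; ring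
        _ = _ := by ring
  refine ⟨G + m / C0 + 1 / c0, by positivity, ?_⟩
  filter_upwards [hA, hB] with ζ h1 h2
  filter_upwards [h1, h2, hb0', hb1'] with k h3 h4 h5 h6
  have hpos : 0 < c1 * ((2 : ℝ) ^ k) ^ θ := by positivity
  have hw := hpos.trans_le h6
  have hx : (0 : ℝ) < 2 ^ k := by positivity
  have hxe : 0 < ((2 : ℝ) ^ k) ^ ε := by positivity
  refine ⟨?_, ?_, ?_⟩
  · by_contra hcon
    push Not at hcon
    rw [indicator_of_mem (by exact hcon), Pi.one_apply, ← ENNReal.ofReal_one, ENNReal.ofReal_le_ofReal_iff (by norm_num)] at h3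
    norm_num at h3
  · have h7 := (ENNReal.ofReal_le_ofReal_iff (by positivity)).1 h4
    refine h7.trans ?_
    have : 0 < 1 / c0 := by positivity
    exact mul_le_mul_of_nonneg_right (mul_le_mul_of_nonneg_right (by linarith) hxe.le) hw.le
  · have h8 : ((2 : ℝ) ^ k) ^ ((d : ℝ) / 2 - α - ε) ≤ 1 / c0 * ((bx d ρ (2 ^ k)).card * piL μ z (C0 * 2 ^ k)) := by
      rw [one_div, inv_mul_eq_div, le_div_iff₀ hc0]
      linarith
    refine h8.trans ?_
    gcongr
    have : 0 ≤ m / C0 := by positivity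
    linarith

end scen2

end


open MeasureTheory ProbabilityTheory Filter Set

noncomputable section

lemma second_moment {Ω ι : Type*} [MeasurableSpace Ω] (μ : Measure Ω) [IsProbabilityMeasure μ] (s : Finset ι) (E : ι → Set Ω)
    (hE : ∀ i ∈ s, MeasurableSet (E i)) (A V : ℝ) (hA0 : 0 ≤ A) (hV : 0 < V) (hA : A ≤ ∑ i ∈ s, μ.real (E i))
    (hVs : ∑ i ∈ s, ∑ j ∈ s, μ.real (E i ∩ E j) ≤ V) : A ^ 2 / V ≤ μ.real (⋃ i ∈ s, E i) := by
  set U := ⋃ i ∈ s, E i with hU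
  have hUm : MeasurableSet U := Finset.measurableSet_biUnion s hE
  set X : Ω → ℝ := fun ω => ∑ i ∈ s, (E i).indicator 1 ω with hX
  have hi1 : ∀ i ∈ s, Integrable ((E i).indicator (1 : Ω → ℝ)) μ := fun i hi => (integrable_const 1).indicator (hE i hi)
  have hi2 : ∀ i ∈ s, ∀ j ∈ s, Integrable ((E i ∩ E j).indicator (1 : Ω → ℝ)) μ :=
    fun i hi j hj => (integrable_const 1).indicator ((hE i hi).inter (hE j hj))
  have hXX : ∀ ω, X ω ^ 2 = ∑ i ∈ s, ∑ j ∈ s, (E i ∩ E j).indicator (1 : Ω → ℝ) ω := by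
    intro ω
    rw [sq, hX, Finset.sum_mul_sum]
    refine Finset.sum_congr rfl fun i _ => Finset.sum_congr rfl fun j _ => ?_
    by_cases h1 : ω ∈ E i <;> by_cases h2 : ω ∈ E j <;> simp [h1, h2]
  have hXi : Integrable X μ := integrable_finsetSum _ hi1
  have hX2i : Integrable (fun ω => X ω ^ 2) μ := by
    simp_rw [hXX]
    exact integrable_finsetSum _ fun i hi => integrable_finsetSum _ fun j hj => hi2 i hi j hj
  have hEX : ∫ ω, X ω ∂μ = ∑ i ∈ s, μ.real (E i) := by
    rw [hX, integral_finsetSum _ hi1]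
    exact Finset.sum_congr rfl fun i hi => integral_indicator_one (hE i hi)
  have hEX2 : ∫ ω, X ω ^ 2 ∂μ = ∑ i ∈ s, ∑ j ∈ s, μ.real (E i ∩ E j) := by
    simp_rw [hXX]
    rw [integral_finsetSum _ fun i hi => integrable_finsetSum _ fun j hj => hi2 i hi j hj]
    refine Finset.sum_congr rfl fun i hi => ?_
    rw [integral_finsetSum _ fun j hj => hi2 i hi j hj]
    exact Finset.sum_congr rfl fun j hj => integral_indicator_one ((hE i hi).inter (hE j hj))
  set l := A / V with hl
  have hl0 : 0 ≤ l := by positivity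
  have key : ∫ ω, (2 * l * X ω - l ^ 2 * X ω ^ 2) ∂μ ≤ ∫ ω, U.indicator 1 ω ∂μ := by
    refine integral_mono ((hXi.const_mul _).sub (hX2i.const_mul _)) ((integrable_const 1).indicator hUm) fun ω => ?_
    simp only
    by_cases h : ω ∈ U
    · rw [indicator_of_mem h, Pi.one_apply]
      nlinarith [sq_nonneg (l * X ω - 1)]
    · rw [indicator_of_notMem h]
      have : X ω = 0 := by
        rw [hX]
        refine Finset.sum_eq_zero fun i hi => indicator_of_notMem (fun h' => h ?_) _
        exact mem_biUnion (Finset.mem_coe.2 hi) h'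
      rw [this]; simp
  rw [integral_indicator_one hUm, integral_sub (hXi.const_mul _) (hX2i.const_mul _), integral_const_mul, integral_const_mul, hEX, hEX2] at key
  refine le_trans ?_ key
  have h1 : 2 * l * A ≤ 2 * l * ∑ i ∈ s, μ.real (E i) := by gcongr
  have h2 : l ^ 2 * ∑ i ∈ s, ∑ j ∈ s, μ.real (E i ∩ E j) ≤ l ^ 2 * V := by gcongr
  have h3 : A ^ 2 / V = 2 * l * A - l ^ 2 * V := by rw [hl]; field_simp; ring
  linarith

lemma diff_sum (f : ℕ → ℝ) (hf : ∀ i, 0 ≤ f i) (N j : ℕ) (hj : j ∈ Finset.Ico N (2 * N)) :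
    ∑ j' ∈ Finset.Ico N (2 * N), f ((j - j') + (j' - j)) ≤ 2 * ∑ i ∈ Finset.range N, f i := by
  rw [Finset.mem_Ico] at hj
  have h1 : ∑ j' ∈ Finset.Ico N (2 * N), f ((j - j') + (j' - j)) ≤
      ∑ j' ∈ Finset.Ico N j, f (j - j') + ∑ j' ∈ Finset.Ico j (2 * N), f (j' - j) := by
    rw [← Finset.sum_Ico_consecutive _ hj.1 hj.2.le]
    gcongr with j' h j' h
    · rw [Finset.mem_Ico] at h
      rw [show j' - j = 0 by omega, add_zero]
    · rw [Finset.mem_Ico] at h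
      rw [show j - j' = 0 by omega, zero_add]
  have h2 : ∑ j' ∈ Finset.Ico N j, f (j - j') ≤ ∑ i ∈ Finset.range N, f i := by
    rw [← Finset.sum_image (f := f) (g := fun j' => j - j') (s := Finset.Ico N j)]
    · refine Finset.sum_le_sum_of_subset_of_nonneg (fun i hi => ?_) fun i _ _ => hf i
      rw [Finset.mem_image] at hi
      obtain ⟨a, ha, rfl⟩ := hi
      rw [Finset.mem_Ico] at ha
      rw [Finset.mem_range]; omega
    · intro a ha b hb hab
      rw [Finset.mem_coe, Finset.mem_Ico] at ha hb
      simp only at hab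
      omega
  have h3 : ∑ j' ∈ Finset.Ico j (2 * N), f (j' - j) ≤ ∑ i ∈ Finset.range N, f i := by
    rw [← Finset.sum_image (f := f) (g := fun j' => j' - j) (s := Finset.Ico j (2 * N))]
    · refine Finset.sum_le_sum_of_subset_of_nonneg (fun i hi => ?_) fun i _ _ => hf i
      rw [Finset.mem_image] at hi
      obtain ⟨a, ha, rfl⟩ := hi
      rw [Finset.mem_Ico] at ha
      rw [Finset.mem_range]; omega
    · intro a ha b hb hab
      rw [Finset.mem_coe, Finset.mem_Ico] at ha hb
      simp only at hab
      omega
  linarith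

section walk
variable {d : ℕ} {α : ℝ} {Ωz Ωw : Type*} [MeasurableSpace Ωz] [MeasurableSpace Ωw]
  {μ : Measure Ωz} {z : (Fin d → ℤ) → Ωz → ℝ} {P : (Fin d → ℤ) → Measure Ωw} {S : ℝ → Ωw → (Fin d → ℤ)}

/-- occupation time of `y` in the time interval `(j, j+1]` -/
def occ (S : ℝ → Ωw → (Fin d → ℤ)) (j : ℕ) (y : Fin d → ℤ) (ω : Ωw) : ENNReal :=
  ∫⁻ u in Ioc (j : ℝ) (j + 1), {u | S u ω = y}.indicator 1 u

lemma occ_joint (hS : IsCTSRW d P S) (y : Fin d → ℤ) :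
    Measurable fun q : Ωw × ℝ => ({u | S u q.1 = y}.indicator (1 : ℝ → ENNReal) q.2) := by
  have hm : MeasurableSet {q : Ωw × ℝ | S q.2 q.1 = y} :=
    (hS.meas.comp measurable_swap) (measurableSet_singleton y)
  exact (measurable_one (α := ENNReal)).indicator hm

lemma occ_meas (hS : IsCTSRW d P S) (j : ℕ) (y : Fin d → ℤ) : Measurable (occ S j y) :=
  Measurable.lintegral_prod_right' (ν := volume.restrict (Ioc (j : ℝ) (j + 1))) (occ_joint hS y)

lemma occ_le (j : ℕ) (y : Fin d → ℤ) (ω : Ωw) : occ S j y ω ≤ 1 := by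
  unfold occ
  calc _ ≤ ∫⁻ u in Ioc (j : ℝ) (j + 1), 1 := by
        refine lintegral_mono fun u => ?_
        exact indicator_le_self' (fun _ _ => zero_le_one) u
    _ = 1 := by simp

/-- the good event: at time `j` at `y`, staying for total time `κ` during `(j,j+1]` -/
def Ev (S : ℝ → Ωw → (Fin d → ℤ)) (B : Set Ωw) (κ : ℝ) (q : ℕ × (Fin d → ℤ)) : Set Ωw :=
  ({ω | S q.1 ω = q.2} ∩ B) ∩ {ω | ENNReal.ofReal κ ≤ occ S q.1 q.2 ω}

lemma Ev_meas (hS : IsCTSRW d P S) (B : Set Ωw) (hB : MeasurableSet B) (κ : ℝ) (q) : MeasurableSet (Ev S B κ q) :=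
  ((ev_meas hS q.1 q.2).inter hB).inter (measurableSet_le measurable_const (occ_meas hS _ _))

lemma Ev_lower (hS : IsCTSRW d P S) (B : Set Ωw) (hB : MeasurableSet B) (κ A W : ℝ) (hκ : 0 ≤ κ) (hW0 : 0 ≤ W) (j : ℕ) (y : Fin d → ℤ)
    (hA : ∀ u : ℝ, j < u → u ≤ j + 1 → ENNReal.ofReal A ≤ P 0 ({ω | S u ω = y} ∩ ({ω | S j ω = y} ∩ B)))
    (hW : P 0 ({ω | S j ω = y} ∩ B) ≤ ENNReal.ofReal W) :
    A - κ * W ≤ (P 0).real (Ev S B κ (j, y)) := by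
  have := hS.prob 0
  set F := {ω | S j ω = y} ∩ B with hF
  have hFm : MeasurableSet F := (ev_meas hS j y).inter hB
  have h1 : ENNReal.ofReal A ≤ ∫⁻ ω in F, occ S j y ω ∂(P 0) := by
    unfold occ
    rw [lintegral_lintegral_swap (f := fun ω u => {u | S u ω = y}.indicator (1 : ℝ → ENNReal) u) (by exact (occ_joint hS y).aemeasurable)]
    calc ENNReal.ofReal A = ∫⁻ u in Ioc (j : ℝ) (j + 1), ENNReal.ofReal A := by simp
      _ ≤ _ := by
        refine setLIntegral_mono' measurableSet_Ioc fun u hu => ?_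
        refine (hA u hu.1 hu.2).trans (le_of_eq ?_)
        rw [← Measure.restrict_apply (ev_meas hS u y), ← lintegral_indicator_one (ev_meas hS u y)]
        rfl
  have h2 : ∫⁻ ω in F, occ S j y ω ∂(P 0) ≤ P 0 (Ev S B κ (j, y)) + ENNReal.ofReal κ * P 0 F := by
    have hE : MeasurableSet {ω | ENNReal.ofReal κ ≤ occ S j y ω} := measurableSet_le measurable_const (occ_meas hS _ _)
    calc _ ≤ ∫⁻ ω in F, ({ω | ENNReal.ofReal κ ≤ occ S j y ω}.indicator 1 ω + ENNReal.ofReal κ) ∂(P 0) := by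
          refine lintegral_mono fun ω => ?_
          by_cases h : ENNReal.ofReal κ ≤ occ S j y ω
          · rw [indicator_of_mem (by exact h)]
            exact (occ_le j y ω).trans le_self_add
          · exact (not_le.1 h).le.trans le_add_self
      _ = _ := by
          rw [lintegral_add_right _ measurable_const, lintegral_indicator_one hE, Measure.restrict_apply hE, inter_comm]
          simp
          rfl
  have h3 : ENNReal.ofReal A ≤ P 0 (Ev S B κ (j, y)) + ENNReal.ofReal (κ * W) := by
    refine h1.trans (h2.trans ?_)
    rw [ENNReal.ofReal_mul hκ]
    gcongr
  have h4 : ENNReal.ofReal (A - κ * W) ≤ P 0 (Ev S B κ (j, y)) := by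
    rw [ENNReal.ofReal_sub _ (by positivity)]
    exact tsub_le_iff_right.2 h3
  exact (ENNReal.ofReal_le_iff_le_toReal (measure_ne_top _ _)).1 h4

lemma Ev_rwrs (hz : IsScenery d α μ z) (hS : IsCTSRW d P S) (ζ : Ωz) (ω : Ωw) (B : Set Ωw) (κ L t : ℝ) (j : ℕ) (y : Fin d → ℤ) (hκ : 0 ≤ κ)
    (hL0 : 0 ≤ L) (ht : (j : ℝ) + 1 ≤ t) (hL : L < z y ζ) (hω : ω ∈ Ev S B κ (j, y))
    (hfin : ∫⁻ u in Ioc (0 : ℝ) t, ENNReal.ofReal (z (S u ω) ζ) ≠ ⊤) : L * κ ≤ rwrs d z S t ζ ω := by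
  have hm : Measurable fun u => z (S u ω) ζ := (zS_joint hz hS).comp (measurable_prodMk_left (x := (ζ, ω)))
  unfold rwrs
  rw [integral_eq_lintegral_of_nonneg_ae (Eventually.of_forall fun u => hz.nonneg _ _) hm.aestronglyMeasurable]
  rw [← ENNReal.ofReal_le_iff_le_toReal hfin]
  have h1 : ENNReal.ofReal κ ≤ occ S j y ω := hω.2
  calc _ = ENNReal.ofReal L * ENNReal.ofReal κ := ENNReal.ofReal_mul hL0
    _ ≤ ENNReal.ofReal L * occ S j y ω := by gcongr
    _ = ∫⁻ u in Ioc (j : ℝ) (j + 1), ENNReal.ofReal L * {u | S u ω = y}.indicator 1 u := by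
        unfold occ
        rw [lintegral_const_mul' _ _ ENNReal.ofReal_ne_top]
    _ ≤ ∫⁻ u in Ioc (j : ℝ) (j + 1), ENNReal.ofReal (z (S u ω) ζ) := by
        refine lintegral_mono fun u => ?_
        by_cases h : S u ω = y
        · rw [indicator_of_mem (by exact h), Pi.one_apply, mul_one, h]
          exact ENNReal.ofReal_le_ofReal hL.le
        · rw [indicator_of_notMem (by exact h)]; simp
    _ ≤ _ := lintegral_mono_set (Ioc_subset_Ioc (by positivity) ht)

lemma fin_as (hz : IsScenery d α μ z) (hS : IsCTSRW d P S) (hα : 1 < α) :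
    ∀ᵐ ζ ∂μ, ∀ n : ℕ, ∀ᵐ ω ∂(P 0), ∫⁻ u in Ioc (0 : ℝ) n, ENNReal.ofReal (z (S u ω) ζ) ≠ ⊤ := by
  have := hz.prob
  have := hS.prob 0
  rw [ae_all_iff]
  intro n
  have e : ∀ ζ x, hiT (-1) (z x ζ) = ENNReal.ofReal (z x ζ) := by
    intro ζ x
    unfold hiT
    rw [if_pos (by linarith [hz.nonneg x ζ])]
  have h := D_mean hz hS (-1) n (∫⁻ ζ, ENNReal.ofReal (z 0 ζ) ∂μ) (fun x => by
    simp_rw [e]; exact (ident_lint hz x _ ENNReal.measurable_ofReal).le)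
  have hfin : ∫⁻ ζ, ENNReal.ofReal (z 0 ζ) ∂μ ≠ ⊤ := by
    have := (z_integrable hz hα 0).lintegral_lt_top
    exact this.ne
  have h2 := ae_lt_top (Measurable.lintegral_prod_right' (ν := P 0) (Hv_meas hz hS (-1) n))
    (ne_top_of_le_ne_top (ENNReal.mul_ne_top ENNReal.ofReal_ne_top hfin) h)
  filter_upwards [h2] with ζ hζ
  have h3 := ae_lt_top ((Hv_meas hz hS (-1) n).comp (measurable_prodMk_left (x := ζ))) hζ.ne
  filter_upwards [h3] with ω hω
  simp only [Function.comp, Hv, e] at hω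
  exact hω.ne

end walk

end


open MeasureTheory ProbabilityTheory Filter Set

noncomputable section

lemma final_alg (N h a b ca cb C V w x Q : ℝ) (hN : 0 < N) (hw : 0 < w) (hV : 0 < V) (hca : 0 < ca) (hcb : 0 < cb) (hC : 0 < C)
    (hx : 0 < x) (ha : a = ca * V) (hb : b = cb * V) (hh : w / 2 ≤ h) (hQ : Q = C * x * w) (y : ℝ) (hy : y ≤ C * w) :
    ca ^ 2 / (8 * cb * C ^ 2) * (N / x * y * V) ≤ (N * h * a) ^ 2 / (2 * b * N * Q) := by
  subst ha hb hQ
  have hh0 : 0 < h := by linarith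
  calc _ ≤ ca ^ 2 / (8 * cb * C ^ 2) * (N / x * (C * w) * V) := by gcongr
    _ = (N * (w / 2) * (ca * V)) ^ 2 / (2 * (cb * V) * N * (C * x * w)) := by field_simp; norm_num
    _ ≤ _ := by gcongr

section lower
variable {d : ℕ} {α : ℝ} {Ωz Ωw : Type*} [MeasurableSpace Ωz] [MeasurableSpace Ωw]
  {μ : Measure Ωz} {z : (Fin d → ℤ) → Ωz → ℝ} {P : (Fin d → ℤ) → Measure Ωw} {S : ℝ → Ωw → (Fin d → ℤ)}

lemma union_lower (hd : 0 < d) (hS : IsCTSRW d P S) (B : Set Ωw) (hB : MeasurableSet B) (N : ℕ) (hN : 0 < N) (H : Finset (Fin d → ℤ))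
    (κ a b Q : ℝ) (ha : 0 ≤ a) (hb : 0 < b) (hQ : 0 < Q)
    (hA : ∀ j ∈ Finset.Ico N (2 * N), ∀ y ∈ H, a ≤ (P 0).real (Ev S B κ (j, y)))
    (hB2 : ∀ j ∈ Finset.Ico N (2 * N), ∀ j' ∈ Finset.Ico N (2 * N), j ≤ j' → ∀ y ∈ H, ∀ y' ∈ H,
      (P 0).real ({ω | S j ω = y ∧ S j' ω = y'} ∩ B) ≤ b * heatKernel d ((j' - j : ℕ) : ℝ) y y')
    (hQs : ∑ y ∈ H, ∑ y' ∈ H, gn d N y y' ≤ Q) :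
    (N * H.card * a) ^ 2 / (2 * b * N * Q) ≤ (P 0).real (⋃ q ∈ Finset.Ico N (2 * N) ×ˢ H, Ev S B κ q) := by
  have := hS.prob 0
  have hN' : (0 : ℝ) < N := by exact_mod_cast hN
  have hcard : ((Finset.Ico N (2 * N)).card : ℝ) = N := by
    rw [Nat.card_Ico]; congr 1; omega
  refine second_moment (P 0) _ _ (fun q _ => Ev_meas hS B hB κ q) _ _ (by positivity) (by positivity) ?_ ?_
  · rw [Finset.sum_product]
    calc _ = ∑ j ∈ Finset.Ico N (2 * N), ∑ y ∈ H, a := by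
          simp only [Finset.sum_const, nsmul_eq_mul]; rw [hcard]; ring
      _ ≤ _ := Finset.sum_le_sum fun j hj => Finset.sum_le_sum fun y hy => hA j hj y hy
  · have key : ∀ j ∈ Finset.Ico N (2 * N), ∀ j' ∈ Finset.Ico N (2 * N), ∀ y ∈ H, ∀ y' ∈ H,
        (P 0).real (Ev S B κ (j, y) ∩ Ev S B κ (j', y')) ≤ b * heatKernel d (((j - j') + (j' - j) : ℕ) : ℝ) y y' := by
      intro j hj j' hj' y hy y' hy'
      rcases le_total j j' with h | h
      · rw [show (j - j') + (j' - j) = j' - j by omega]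
        refine le_trans (measureReal_mono ?_) (hB2 j hj j' hj' h y hy y' hy')
        rintro ω ⟨h1, h2⟩
        exact ⟨⟨h1.1.1, h2.1.1⟩, h1.1.2⟩
      · rw [show (j - j') + (j' - j) = j - j' by omega, heat_symm d hd]
        refine le_trans (measureReal_mono ?_) (hB2 j' hj' j hj h y' hy' y hy)
        rintro ω ⟨h1, h2⟩
        exact ⟨⟨h2.1.1, h1.1.1⟩, h1.1.2⟩
    rw [Finset.sum_product]
    have h2 : ∀ j ∈ Finset.Ico N (2 * N), ∑ y ∈ H, ∑ q ∈ Finset.Ico N (2 * N) ×ˢ H, (P 0).real (Ev S B κ (j, y) ∩ Ev S B κ q) ≤ 2 * b * Q := by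
      intro j hj
      calc _ ≤ ∑ y ∈ H, ∑ y' ∈ H, b * (2 * gn d N y y') := by
            refine Finset.sum_le_sum fun y hy => ?_
            rw [Finset.sum_product_right]
            refine Finset.sum_le_sum fun y' hy' => ?_
            refine (Finset.sum_le_sum fun j' hj' => key j hj j' hj' y hy y' hy').trans ?_
            rw [← Finset.mul_sum]
            gcongr
            exact diff_sum (fun i => heatKernel d (i : ℝ) y y') (fun i => heat_nonneg d i (by positivity) y y') N j hj
        _ = 2 * b * ∑ y ∈ H, ∑ y' ∈ H, gn d N y y' := by
            simp only [Finset.mul_sum]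
            refine Finset.sum_congr rfl fun _ _ => Finset.sum_congr rfl fun _ _ => by ring
        _ ≤ _ := by gcongr
    refine (Finset.sum_le_sum h2).trans (le_of_eq ?_)
    rw [Finset.sum_const, nsmul_eq_mul, hcard]; ring

open Classical in
def Hs (z : (Fin d → ℤ) → Ωz → ℝ) (Λ : Finset (Fin d → ℤ)) (L : ℝ) (ζ : Ωz) : Finset (Fin d → ℤ) :=
  Λ.filter fun y => L < z y ζ

lemma Hs_card (Λ : Finset (Fin d → ℤ)) (L : ℝ) (ζ : Ωz) : ((Hs z Λ L ζ).card : ℝ) = ∑ y ∈ Λ, Ih L (z y ζ) := by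
  unfold Hs Ih
  rw [Finset.card_filter]
  push_cast
  exact Finset.sum_congr rfl fun _ _ => by congr

lemma Hs_Q (Λ : Finset (Fin d → ℤ)) (L : ℝ) (m : ℕ) (ζ : Ωz) :
    ∑ y ∈ Hs z Λ L ζ, ∑ y' ∈ Hs z Λ L ζ, gn d m y y' = Qs z Λ L m ζ := by
  unfold Hs Qs Ih
  rw [Finset.sum_filter]
  refine Finset.sum_congr rfl fun y _ => ?_
  by_cases h : L < z y ζ
  · rw [if_pos h, Finset.sum_filter]
    refine Finset.sum_congr rfl fun y' _ => ?_
    by_cases h' : L < z y' ζ <;> simp [h, h']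
  · simp [h]

lemma heat_win (hd : 0 < d) : ∃ ρ > 0, ∃ c1 > 0, ∃ C1, c1 ≤ C1 ∧ ∀ N : ℝ, 1 ≤ N →
    (∀ s x y, N ≤ s → heatKernel d s x y ≤ C1 * N ^ (-((d : ℝ) / 2))) ∧
    (∀ s y, N ≤ s → s ≤ 8 * N → y ∈ bx d ρ N → c1 * N ^ (-((d : ℝ) / 2)) ≤ heatKernel d s 0 y ∧
      c1 * N ^ (-((d : ℝ) / 2)) ≤ heatKernel d s y 0) := by
  obtain ⟨C, hC, hu⟩ := heat_upper d hd
  obtain ⟨c, hc, ρ, hρ, hl⟩ := heat_lower d hd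
  refine ⟨ρ, hρ, c * 8 ^ (-((d : ℝ) / 2)), by positivity, max C (c * 8 ^ (-((d : ℝ) / 2))), le_max_right _ _, fun N hN => ⟨?_, ?_⟩⟩
  · intro s x y hs
    refine (hu s (by linarith) x y).trans ?_
    have hd' : (0 : ℝ) ≤ (d : ℝ) / 2 := by positivity
    have h1 : s ^ (-((d : ℝ) / 2)) ≤ N ^ (-((d : ℝ) / 2)) := Real.rpow_le_rpow_of_nonpos (by linarith) hs (by linarith)
    calc _ ≤ C * N ^ (-((d : ℝ) / 2)) := by gcongr
      _ ≤ _ := by gcongr; exact le_max_left _ _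
  · intro s y hs hs8 hy
    have hd' : (0 : ℝ) ≤ (d : ℝ) / 2 := by positivity
    have h1 : (8 * N) ^ (-((d : ℝ) / 2)) ≤ s ^ (-((d : ℝ) / 2)) := Real.rpow_le_rpow_of_nonpos (by linarith) hs8 (by linarith)
    have h2 : c * 8 ^ (-((d : ℝ) / 2)) * N ^ (-((d : ℝ) / 2)) ≤ c * s ^ (-((d : ℝ) / 2)) := by
      rw [mul_assoc, ← Real.mul_rpow (by norm_num) (by linarith)]
      gcongr
    have h3 : ∀ i, |((y i : ℤ) : ℝ)| ≤ ρ * √s := by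
      intro i
      refine (box_mem d _ y hy i).trans ((Nat.floor_le (by positivity)).trans ?_)
      gcongr
    have h4 : c * s ^ (-((d : ℝ) / 2)) ≤ heatKernel d s 0 y := by
      refine hl s (by linarith) 0 y fun i => ?_
      simpa using h3 i
    refine ⟨h2.trans h4, h2.trans ?_⟩
    rw [heat_symm d hd]
    exact h4

end lower

end


open MeasureTheory ProbabilityTheory Filter Set

noncomputable section

section lower2
variable {d : ℕ} {α : ℝ} {Ωz Ωw : Type*} [MeasurableSpace Ωz] [MeasurableSpace Ωw]
  {μ : Measure Ωz} {z : (Fin d → ℤ) → Ωz → ℝ} {P : (Fin d → ℤ) → Measure Ωw} {S : ℝ → Ωw → (Fin d → ℤ)}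

lemma diag_low (u j : ℝ) (h1 : j < u) (h2 : u ≤ j + 1) (y : Fin d → ℤ) : Real.exp (-(2 * d)) ≤ heatKernel d (u - j) y y := by
  refine le_trans ?_ (heat_diag d (u - j) (by linarith) y)
  apply Real.exp_le_exp.2
  have : (0 : ℝ) ≤ d := by positivity
  nlinarith

/-- the data provided by `heat_win` at scale `N` -/
def Win (d : ℕ) (Λ : Finset (Fin d → ℤ)) (N lo up : ℝ) : Prop :=
    (∀ s x y, N ≤ s → heatKernel d s x y ≤ up) ∧
    (∀ s y, N ≤ s → s ≤ 8 * N → y ∈ Λ → lo ≤ heatKernel d s 0 y ∧ lo ≤ heatKernel d s y 0)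

lemma walk1a (hS : IsCTSRW d P S) (Λ : Finset (Fin d → ℤ)) (N : ℕ) (lo up κ : ℝ) (hlo : 0 ≤ lo) (hup : 0 ≤ up) (hκ : 0 ≤ κ)
    (hw : Win d Λ N lo up) (j : ℕ) (hj : j ∈ Finset.Ico N (2 * N)) (y) (hy : y ∈ Λ) :
    Real.exp (-(2 * d)) * lo - κ * up ≤ (P 0).real (Ev S univ κ (j, y)) := by
  rw [Finset.mem_Ico] at hj
  have hj1 : (N : ℝ) ≤ j := by exact_mod_cast hj.1
  have hj2 : (j : ℝ) + 1 ≤ 2 * N := by exact_mod_cast hj.2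
  have hj0 : (0 : ℝ) ≤ j := by positivity
  refine Ev_lower hS univ MeasurableSet.univ κ _ _ hκ hup j y ?_ ?_
  · intro u hu1 hu2
    have e : ({ω | S u ω = y} ∩ ({ω | S j ω = y} ∩ univ)) = {ω | S j ω = y ∧ S u ω = y} := by
      ext ω; simp [and_comm]
    rw [e, fdd2 hS 0 y y j u hj0 hu1.le, ← ENNReal.ofReal_mul (heat_nonneg d j hj0 _ _)]
    apply ENNReal.ofReal_le_ofReal
    have h1 := (hw.2 j y hj1 (by linarith) hy).1
    have h2 := diag_low u j hu1 hu2 y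
    rw [mul_comm]
    exact mul_le_mul h1 h2 (Real.exp_pos _).le (heat_nonneg d j hj0 _ _)
  · rw [inter_univ, fdd1 hS 0 y j hj0]
    exact ENNReal.ofReal_le_ofReal (hw.1 j 0 y hj1)

lemma walk1b (hS : IsCTSRW d P S) (Λ : Finset (Fin d → ℤ)) (N : ℕ) (lo up : ℝ)
    (hw : Win d Λ N lo up) (j j' : ℕ) (hj : j ∈ Finset.Ico N (2 * N)) (hjj : j ≤ j') (y y') :
    (P 0).real ({ω | S j ω = y ∧ S j' ω = y'} ∩ univ) ≤ up * heatKernel d ((j' - j : ℕ) : ℝ) y y' := by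
  rw [Finset.mem_Ico] at hj
  have hj1 : (N : ℝ) ≤ j := by exact_mod_cast hj.1
  have hj0 : (0 : ℝ) ≤ j := by positivity
  have hjj' : (j : ℝ) ≤ j' := by exact_mod_cast hjj
  have hn := heat_nonneg d ((j' : ℝ) - j) (by linarith) y y'
  rw [inter_univ, measureReal_def, fdd2 hS 0 y y' j j' hj0 hjj', ← ENNReal.ofReal_mul (heat_nonneg d j hj0 _ _),
    ENNReal.toReal_ofReal (mul_nonneg (heat_nonneg d j hj0 _ _) hn), Nat.cast_sub hjj]
  gcongr
  exact hw.1 j 0 y hj1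

lemma walk2a (hS : IsCTSRW d P S) (Λ : Finset (Fin d → ℤ)) (N : ℕ) (lo up κ : ℝ) (hlo : 0 ≤ lo) (hup : 0 ≤ up) (hκ : 0 ≤ κ)
    (hw : Win d Λ N lo up) (t : ℝ) (ht : 4 * N ≤ t) (ht8 : t ≤ 8 * N) (j : ℕ) (hj : j ∈ Finset.Ico N (2 * N)) (y) (hy : y ∈ Λ) :
    Real.exp (-(2 * d)) * lo ^ 2 - κ * up ^ 2 ≤ (P 0).real (Ev S {ω | S t ω = 0} κ (j, y)) := by
  rw [Finset.mem_Ico] at hj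
  have hj1 : (N : ℝ) ≤ j := by exact_mod_cast hj.1
  have hj2 : (j : ℝ) + 1 ≤ 2 * N := by exact_mod_cast hj.2
  have hj0 : (0 : ℝ) ≤ j := by positivity
  have hN0 : (0 : ℝ) ≤ N := by positivity
  refine Ev_lower hS _ (ev_meas hS t 0) κ _ _ hκ (by positivity) j y ?_ ?_
  · intro u hu1 hu2
    have e : ({ω | S u ω = y} ∩ ({ω | S j ω = y} ∩ {ω | S t ω = 0})) = {ω | S j ω = y ∧ S u ω = y ∧ S t ω = 0} := by
      ext ω; simp only [mem_inter_iff, mem_setOf_eq]; tauto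
    rw [e, fdd3 hS 0 y y 0 j u t hj0 hu1.le (by linarith), ← ENNReal.ofReal_mul (heat_nonneg d j hj0 _ _),
      ← ENNReal.ofReal_mul (mul_nonneg (heat_nonneg d j hj0 _ _) (heat_nonneg d _ (by linarith) _ _))]
    apply ENNReal.ofReal_le_ofReal
    have h1 := (hw.2 j y hj1 (by linarith) hy).1
    have h2 := diag_low u j hu1 hu2 y
    have h3 := (hw.2 (t - u) y (by linarith) (by linarith) hy).2
    have h4 := heat_nonneg d j hj0 0 y
    calc _ = lo * Real.exp (-(2 * d)) * lo := by ring
      _ ≤ _ := mul_le_mul (mul_le_mul h1 h2 (Real.exp_pos _).le h4) h3 hlo (mul_nonneg h4 (heat_nonneg d (u - j) (by linarith) _ _))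
  · have e : ({ω | S j ω = y} ∩ {ω | S t ω = 0}) = {ω | S j ω = y ∧ S t ω = 0} := rfl
    rw [e, fdd2 hS 0 y 0 j t hj0 (by linarith), ← ENNReal.ofReal_mul (heat_nonneg d j hj0 _ _)]
    apply ENNReal.ofReal_le_ofReal
    rw [sq]
    have h3 := heat_nonneg d (t - j) (by linarith) y 0
    have h1 := hw.1 j 0 y hj1
    have h2 := hw.1 (t - j) y 0 (by linarith)
    gcongr

lemma walk2b (hS : IsCTSRW d P S) (Λ : Finset (Fin d → ℤ)) (N : ℕ) (lo up : ℝ) (hup : 0 ≤ up)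
    (hw : Win d Λ N lo up) (t : ℝ) (ht : 4 * N ≤ t) (j j' : ℕ) (hj : j ∈ Finset.Ico N (2 * N)) (hj' : j' ∈ Finset.Ico N (2 * N)) (hjj : j ≤ j') (y y') :
    (P 0).real ({ω | S j ω = y ∧ S j' ω = y'} ∩ {ω | S t ω = 0}) ≤ up ^ 2 * heatKernel d ((j' - j : ℕ) : ℝ) y y' := by
  rw [Finset.mem_Ico] at hj hj'
  have hj1 : (N : ℝ) ≤ j := by exact_mod_cast hj.1
  have hj2 : (j' : ℝ) + 1 ≤ 2 * N := by exact_mod_cast hj'.2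
  have hj0 : (0 : ℝ) ≤ j := by positivity
  have hN0 : (0 : ℝ) ≤ N := by positivity
  have hjj' : (j : ℝ) ≤ j' := by exact_mod_cast hjj
  have hn := heat_nonneg d ((j' : ℝ) - j) (by linarith) y y'
  have hn2 := heat_nonneg d (t - j') (by linarith) y' 0
  have hn1 := heat_nonneg d j hj0 0 y
  have e : ({ω | S j ω = y ∧ S j' ω = y'} ∩ {ω | S t ω = 0}) = {ω | S j ω = y ∧ S j' ω = y' ∧ S t ω = 0} := by
    ext ω; simp only [mem_inter_iff, mem_setOf_eq]; tauto
  rw [e, measureReal_def, fdd3 hS 0 y y' 0 j j' t hj0 hjj' (by linarith), ← ENNReal.ofReal_mul hn1,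
    ← ENNReal.ofReal_mul (mul_nonneg hn1 hn), ENNReal.toReal_ofReal (mul_nonneg (mul_nonneg hn1 hn) hn2), Nat.cast_sub hjj]
  have h1 := hw.1 j 0 y hj1
  have h2 := hw.1 (t - j') y' 0 (by linarith)
  calc _ ≤ up * heatKernel d ((j' : ℝ) - j) y y' * up := by gcongr
    _ = _ := by ring

lemma union_sub (hz : IsScenery d α μ z) (hS : IsCTSRW d P S) (ζ : Ωz) (B : Set Ωw) (κ L t c : ℝ) (N : ℕ) (hκ : 0 ≤ κ)
    (hL0 : 0 ≤ L) (hL : c * t ≤ L * κ) (ht : 2 * N ≤ t) (Λ : Finset (Fin d → ℤ))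
    (hfin : ∀ n : ℕ, ∀ᵐ ω ∂(P 0), ∫⁻ u in Ioc (0 : ℝ) n, ENNReal.ofReal (z (S u ω) ζ) ≠ ⊤) :
    (P 0).real (⋃ q ∈ Finset.Ico N (2 * N) ×ˢ Hs z Λ L ζ, Ev S B κ q) ≤ (P 0 {ω | c * t ≤ rwrs d z S t ζ ω ∧ ω ∈ B}).toReal := by
  have := hS.prob 0
  refine ENNReal.toReal_mono (measure_ne_top _ _) (measure_mono_ae ?_)
  filter_upwards [hfin ⌈t⌉₊] with ω hω hU
  have hU' : ω ∈ ⋃ q ∈ Finset.Ico N (2 * N) ×ˢ Hs z Λ L ζ, Ev S B κ q := hU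
  rw [mem_iUnion₂] at hU'
  obtain ⟨⟨j, y⟩, hq, hE⟩ := hU'
  rw [Finset.mem_product] at hq
  have hj := (Finset.mem_Ico.1 hq.1).2
  have hy : L < z y ζ := (Finset.mem_filter.1 hq.2).2
  have hj2 : (j : ℝ) + 1 ≤ 2 * N := by exact_mod_cast hj
  refine ⟨hL.trans (Ev_rwrs hz hS ζ ω B κ L t j y hκ hL0 (by linarith) hy hE ?_), hE.1.2⟩
  exact ne_top_of_le_ne_top hω (lintegral_mono_set (Ioc_subset_Ioc_right (Nat.le_ceil t)))

end lower2

end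


open MeasureTheory ProbabilityTheory Filter Set

noncomputable section

lemma conv_low (K e ε : ℝ) (hK : 0 < K) (hε : 0 < ε) :
    ∀ᶠ t : ℝ in atTop, ∀ x : ℝ, 4 * x ≤ t → t ≤ 8 * x → t ^ (e - ε) ≤ K * x ^ e := by
  have h0 : Tendsto (fun t : ℝ => t ^ (-ε)) atTop (nhds 0) := tendsto_rpow_neg_atTop hε
  have hK' : 0 < K / (2 ^ |e| * 4 ^ e) := by positivity
  filter_upwards [h0.eventually_le_const hK', eventually_gt_atTop (0 : ℝ)] with t ht ht0 x h1 h2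
  have hx : 0 < x := by linarith
  have h3 := (rpow_compare x (t / 4) e hx (by linarith) (by linarith)).2
  rw [Real.div_rpow ht0.le (by norm_num), div_le_iff₀ (by positivity)] at h3
  rw [sub_eq_add_neg, Real.rpow_add ht0]
  rw [le_div_iff₀ (by positivity)] at ht
  have ht' : 0 < t ^ (-ε) := by positivity
  have hxe : 0 < x ^ e := by positivity
  calc t ^ e * t ^ (-ε) ≤ (2 ^ |e| * x ^ e * 4 ^ e) * t ^ (-ε) := by gcongr
    _ = (t ^ (-ε) * (2 ^ |e| * 4 ^ e)) * x ^ e := by ring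
    _ ≤ K * x ^ e := by gcongr

section lower3
variable {d : ℕ} {α : ℝ} {Ωz Ωw : Type*} [MeasurableSpace Ωz] [MeasurableSpace Ωw]
  {μ : Measure Ωz} {z : (Fin d → ℤ) → Ωz → ℝ} {P : (Fin d → ℤ) → Measure Ωw} {S : ℝ → Ωw → (Fin d → ℤ)}

/-- one-scale lower bound -/
lemma one_scale (hd : 0 < d) (hz : IsScenery d α μ z) (hS : IsCTSRW d P S) (ζ : Ωz) (B : Set Ωw) (hB : MeasurableSet B)
    (κ L t c : ℝ) (N : ℕ) (hN : 0 < N) (hκ : 0 ≤ κ)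
    (hL0 : 0 ≤ L) (hL : c * t ≤ L * κ) (ht : 2 * N ≤ t) (Λ : Finset (Fin d → ℤ))
    (hfin : ∀ n : ℕ, ∀ᵐ ω ∂(P 0), ∫⁻ u in Ioc (0 : ℝ) n, ENNReal.ofReal (z (S u ω) ζ) ≠ ⊤)
    (ca cb C V w x y : ℝ) (hw : 0 < w) (hV : 0 < V) (hca : 0 < ca) (hcb : 0 < cb) (hC : 0 < C) (hx : 0 < x)
    (h1 : w / 2 ≤ ∑ y ∈ Λ, Ih L (z y ζ)) (h2 : Qs z Λ L N ζ ≤ C * x * w) (hy : y ≤ C * w)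
    (hA : ∀ j ∈ Finset.Ico N (2 * N), ∀ y ∈ Λ, ca * V ≤ (P 0).real (Ev S B κ (j, y)))
    (hB2 : ∀ j ∈ Finset.Ico N (2 * N), ∀ j' ∈ Finset.Ico N (2 * N), j ≤ j' → ∀ y ∈ Λ, ∀ y' ∈ Λ,
      (P 0).real ({ω | S j ω = y ∧ S j' ω = y'} ∩ B) ≤ cb * V * heatKernel d ((j' - j : ℕ) : ℝ) y y') :
    ca ^ 2 / (8 * cb * C ^ 2) * (N / x * y * V) ≤ (P 0 {ω | c * t ≤ rwrs d z S t ζ ω ∧ ω ∈ B}).toReal := by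
  have hsub : ∀ y ∈ Hs z Λ L ζ, y ∈ Λ := fun y hy => (Finset.mem_filter.1 hy).1
  have hN' : (0 : ℝ) < N := by exact_mod_cast hN
  refine le_trans ?_ (union_sub hz hS ζ B κ L t c N hκ hL0 hL ht Λ hfin)
  refine le_trans ?_ (union_lower hd hS B hB N hN (Hs z Λ L ζ) κ (ca * V) (cb * V) (C * x * w) (by positivity) (by positivity) (by positivity)
    (fun j hj y hy => hA j hj y (hsub y hy)) (fun j hj j' hj' hjj y hy y' hy' => hB2 j hj j' hj' hjj y (hsub y hy) y' (hsub y' hy')) ?_)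
  · refine final_alg N _ _ _ ca cb C V w x _ hN' hw hV hca hcb hC hx rfl rfl ?_ rfl y hy
    rw [Hs_card]; exact h1
  · rw [Hs_Q]; exact h2

lemma lower_as (hd : 3 ≤ d) (hz : IsScenery d α μ z) (hS : IsCTSRW d P S) (hα : 1 < α) (hαd : α < d / 2)
    (c : ℝ) (hc : (∫ ζ, z 0 ζ ∂ μ) < c) (ε : ℝ) (hε : 0 < ε) :
    ∀ᵐ ζ ∂μ, ∀ᶠ t : ℝ in atTop, t ^ (-α + 1 - ε) ≤ (P 0 {ω | c * t ≤ rwrs d z S t ζ ω}).toReal ∧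
      t ^ (-α + 1 - d / 2 - ε) ≤ (P 0 {ω | c * t ≤ rwrs d z S t ζ ω ∧ S t ω = 0}).toReal := by
  have hd0 : 0 < d := by omega
  have hm0 : 0 ≤ ∫ ζ, z 0 ζ ∂ μ := integral_nonneg fun ζ => hz.nonneg 0 ζ
  have hc0 : 0 < c := by linarith
  obtain ⟨ρ, hρ, c1, hc1, C1, hcC, hwin⟩ := heat_win hd0
  have hC1 : 0 < C1 := by linarith
  set E := Real.exp (-(2 * (d : ℝ))) with hE
  have hE0 : 0 < E := Real.exp_pos _
  set κ := E * (c1 / C1) ^ 2 / 2 with hκ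
  have hκ0 : 0 < κ := by positivity
  set C0 := 8 * c / κ with hC0
  have hC00 : 0 < C0 := by positivity
  set ε' := ε / 3 with hε'
  have hε'0 : 0 < ε' := by positivity
  obtain ⟨C, hC, hsc⟩ := scen_as hz hS hd hα hαd C0 ρ ε' hC00 hρ hε'0
  have k1 : κ * C1 ≤ E * c1 / 2 := by
    have : κ * C1 = E * c1 / 2 * (c1 / C1) := by rw [hκ]; field_simp
    rw [this]
    exact mul_le_of_le_one_right (by positivity) ((div_le_one hC1).2 hcC)
  have k2 : κ * C1 ^ 2 = E * c1 ^ 2 / 2 := by rw [hκ]; field_simp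
  set K1 := (E * c1 / 2) ^ 2 / (8 * C1 * C ^ 2) with hK1
  set K2 := (E * c1 ^ 2 / 2) ^ 2 / (8 * C1 ^ 2 * C ^ 2) with hK2
  have hK10 : 0 < K1 := by positivity
  have hK20 : 0 < K2 := by positivity
  have htd : Tendsto (fun t : ℝ => t / 4) atTop atTop := tendsto_id.atTop_div_const (by norm_num)
  filter_upwards [hsc, fin_as hz hS hα] with ζ hζ hfin
  filter_upwards [htd.eventually (dyadic _ hζ), conv_low K1 (-α + 1 - 2 * ε') ε' hK10 hε'0,
    conv_low K2 (-α + 1 - d / 2 - 2 * ε') ε' hK20 hε'0] with t ⟨k, ⟨s1, s2, s3⟩, t1, t2⟩ f1 f2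
  set N : ℝ := (2 : ℝ) ^ k with hNd
  have hN1 : 1 ≤ N := one_le_pow₀ (by norm_num)
  have hN0 : 0 < N := by linarith
  have hNc : ((2 ^ k : ℕ) : ℝ) = N := by push_cast; rfl
  have hNp : 0 < 2 ^ k := by positivity
  obtain ⟨w1, w2⟩ := hwin N hN1
  set v := N ^ (-((d : ℝ) / 2)) with hv
  have hv0 : 0 < v := by positivity
  have hW : Win d (bx d ρ N) ((2 ^ k : ℕ) : ℝ) (c1 * v) (C1 * v) := by
    rw [hNc]; exact ⟨w1, w2⟩
  set w := ((bx d ρ N).card : ℝ) * piL μ z (C0 * N) with hw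
  have hy0 : 0 < N ^ ((d : ℝ) / 2 - α - ε') := by positivity
  have hw0 : 0 < w := by
    by_contra h
    have : C * w ≤ 0 := mul_nonpos_of_nonneg_of_nonpos hC.le (not_lt.1 h)
    linarith
  have hx0 : 0 < N ^ ε' := by positivity
  have ht4 : 4 * ((2 ^ k : ℕ) : ℝ) ≤ t := by rw [hNc]; linarith
  have ht8 : t ≤ 8 * ((2 ^ k : ℕ) : ℝ) := by rw [hNc]; linarith
  have hL : c * t ≤ C0 * N * κ := by
    have : C0 * N * κ = c * (8 * N) := by rw [hC0]; field_simp
    rw [this]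
    gcongr
    linarith
  have g1 := one_scale hd0 hz hS ζ univ MeasurableSet.univ κ (C0 * N) t c (2 ^ k) hNp hκ0.le (by positivity) hL
    (by rw [hNc]; linarith) (bx d ρ N) hfin (E * c1 / 2) C1 C v w (N ^ ε') _ hw0 hv0 (by positivity) hC1 hC hx0 s1 s2 s3
    (fun j hj y hy => le_trans (by
        have : κ * C1 * v ≤ E * c1 / 2 * v := by gcongr
        linarith) (walk1a hS (bx d ρ N) (2 ^ k) (c1 * v) (C1 * v) κ (by positivity) (by positivity) hκ0.le hW j hj y hy))
    (fun j hj j' _ hjj y _ y' _ => walk1b hS (bx d ρ N) (2 ^ k) (c1 * v) (C1 * v) hW j j' hj hjj y y')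
  have g2 := one_scale hd0 hz hS ζ {ω | S t ω = 0} (ev_meas hS t 0) κ (C0 * N) t c (2 ^ k) hNp hκ0.le (by positivity) hL
    (by rw [hNc]; linarith) (bx d ρ N) hfin (E * c1 ^ 2 / 2) (C1 ^ 2) C (v ^ 2) w (N ^ ε') _ hw0 (by positivity) (by positivity) (by positivity) hC hx0 s1 s2 s3
    (fun j hj y hy => le_trans (by
        have : κ * C1 ^ 2 * v ^ 2 = E * c1 ^ 2 / 2 * v ^ 2 := by rw [k2]
        apply le_of_eq; linear_combination this) (walk2a hS (bx d ρ N) (2 ^ k) (c1 * v) (C1 * v) κ (by positivity) (by positivity) hκ0.le hW t ht4 ht8 j hj y hy))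
    (fun j hj j' hj' hjj y _ y' _ => (walk2b hS (bx d ρ N) (2 ^ k) (c1 * v) (C1 * v) (by positivity) hW t ht4 j j' hj hj' hjj y y').trans_eq (by rw [mul_pow]))
  rw [hNc] at g1 g2
  have e1 : N / N ^ ε' * N ^ ((d : ℝ) / 2 - α - ε') * v = N ^ (-α + 1 - 2 * ε') := by
    rw [hv]
    nth_rewrite 1 [← Real.rpow_one N]
    rw [← Real.rpow_sub hN0, ← Real.rpow_add hN0, ← Real.rpow_add hN0]
    congr 1; ring
  have e2 : N / N ^ ε' * N ^ ((d : ℝ) / 2 - α - ε') * v ^ 2 = N ^ (-α + 1 - d / 2 - 2 * ε') := by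
    rw [sq, ← mul_assoc, e1, hv, ← Real.rpow_add hN0]
    congr 1; ring
  rw [e1] at g1
  rw [e2] at g2
  constructor
  · have := f1 N (by linarith) (by linarith)
    rw [show -α + 1 - 2 * ε' - ε' = -α + 1 - ε by rw [hε']; ring] at this
    simp only [mem_univ, and_true] at g1
    exact this.trans g1
  · have := f2 N (by linarith) (by linarith)
    rw [show -α + 1 - d / 2 - 2 * ε' - ε' = -α + 1 - d / 2 - ε by rw [hε']; ring] at this
    exact this.trans g2

end lower3

lemma log_conv (p : ℝ → ℝ) (e : ℝ) (h : ∀ n : ℕ, ∀ᶠ t : ℝ in atTop,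
    t ^ (e - 1 / ((n : ℝ) + 1)) ≤ p t ∧ p t ≤ t ^ (e + 1 / ((n : ℝ) + 1))) :
    Tendsto (fun t => Real.log (p t) / Real.log t) atTop (nhds e) := by
  rw [Metric.tendsto_atTop']
  intro δ hδ
  obtain ⟨n, hn⟩ := exists_nat_one_div_lt hδ
  have := (h n).and (eventually_gt_atTop (1 : ℝ))
  obtain ⟨T, hT⟩ := eventually_atTop.1 this
  refine ⟨T, fun t ht => ?_⟩
  obtain ⟨⟨h1, h2⟩, h3⟩ := hT t ht.le
  have ht0 : 0 < t := by linarith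
  have hl : 0 < Real.log t := Real.log_pos h3
  have hp : 0 < p t := lt_of_lt_of_le (by positivity) h1
  have l1 := Real.log_le_log (by positivity) h1
  have l2 := Real.log_le_log hp h2
  rw [Real.log_rpow ht0] at l1 l2
  rw [← le_div_iff₀ hl] at l1
  rw [← div_le_iff₀ hl] at l2
  rw [Real.dist_eq, abs_lt]
  constructor <;> linarith

end

/-- Theorem (upper deviation at the law-of-large-numbers scale, power-law regime):
for `d ≥ 3`, `1 < α < d/2` and `c > 𝔼[z(0)]`, ℙ-a.s.
`P₀(A(t) ≥ ct) = t^{-α+1+o(1)}` and `P₀(A(t) ≥ ct, S_t = 0) = t^{-α+1-d/2+o(1)}`. -/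
theorem stmt2 (d : ℕ) (hd : 3 ≤ d) (α : ℝ) (hα : 1 < α) (hαd : α < d / 2)
    {Ωz Ωw : Type*} [MeasurableSpace Ωz] [MeasurableSpace Ωw]
    (μ : Measure Ωz) (z : (Fin d → ℤ) → Ωz → ℝ) (hz : IsScenery d α μ z)
    (c : ℝ) (hc : (∫ ζ, z 0 ζ ∂ μ) < c)
    (P : (Fin d → ℤ) → Measure Ωw) (S : ℝ → Ωw → (Fin d → ℤ)) (hS : IsCTSRW d P S) :
    ∀ᵐ ζ ∂ μ,
      Tendsto
        (fun t : ℝ => Real.log ((P 0) {ω | c * t ≤ rwrs d z S t ζ ω}).toReal / Real.log t)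
        atTop (nhds (-α + 1)) ∧
      Tendsto
        (fun t : ℝ => Real.log
            ((P 0) {ω | c * t ≤ rwrs d z S t ζ ω ∧ S t ω = 0}).toReal / Real.log t)
        atTop (nhds (-α + 1 - d / 2)) := by
  have := hS.prob 0
  have hup : ∀ n : ℕ, _ := fun n => upper_as hd hz hS hα c hc (1 / ((n : ℝ) + 1)) (by positivity)
  have hlo : ∀ n : ℕ, _ := fun n => lower_as hd hz hS hα hαd c hc (1 / ((n : ℝ) + 1)) (by positivity)
  filter_upwards [ae_all_iff.2 hup, ae_all_iff.2 hlo] with ζ h1 h2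
  constructor
  · apply log_conv
    intro n
    filter_upwards [h1 n, h2 n, eventually_gt_atTop (0 : ℝ)] with t g1 g2 ht
    exact ⟨g2.1, ENNReal.toReal_le_of_le_ofReal (by positivity) g1.1⟩
  · apply log_conv
    intro n
    filter_upwards [h1 n, h2 n, eventually_gt_atTop (0 : ℝ)] with t g1 g2 ht
    exact ⟨g2.2, ENNReal.toReal_le_of_le_ofReal (by positivity) g1.2⟩
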